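/- arXiv:1211.1811 — 6 statements merged into one kernel-verified Lean document; each statement's English description precedes it below -/
import Mathlib

section
/- (Splitting Lemma / Refined Morse Lemma, corank-one case.) Let U ⊂ ℝⁿ be an open neighborhood of 0 and f : U → ℝ a smooth (C^∞) function such that 0 is an isolated local minimum of f, f(0) = 0, df(0) = 0, and the kernel of the Hessian d²f(0) is one-dimensional. Then there exist an open neighborhood V ⊂ ℝⁿ of 0, a smooth map φ : V → U with φ(0) = 0 which is a diffeomorphism onto an open neighborhood of 0 in U, and a smooth function g : ℝ → ℝ with g ≥ 0 and g(z) = O(z⁴) as z → 0, such that f(φ(x₁,…,xₙ)) = x₁² + ⋯ + x_{n−1}² + g(xₙ) for all (x₁,…,xₙ) ∈ V. -/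
open Set Asymptotics Filter
open scoped ContDiff Topology RealInnerProductSpace

/-!
The Hessian of `f` at the minimum is positive semidefinite, so there are linear coordinates `(t, y)`
in which it is `2‖y‖²`, with `t` running through its kernel. By the implicit function theorem the
slice `f (t, ·)` has a critical point `h t` near `0`, and the shear `y ↦ y - h t` moves it to `0`.
Taylor's formula then reads `f (t, y) = f (t, 0) + ⟪R y, y⟫`, where the self-adjoint operator
`R = R (t, y)` is the identity at the origin, and `y ↦ √R y` turns the remainder into `‖y‖²`.
What is left is `g t = f (t, h t) - f 0`, the least value on the slice. It is squeezed between `0`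
and the values of `f - f 0` on the kernel of the Hessian, which are `O(‖t‖⁴)` because at a minimum
the third derivative vanishes in every direction in which the second one does.
-/

universe u

section SmoothExtension

theorem contDiff_smul_of_tsupport_subset {E Z : Type*} [NormedAddCommGroup E] [NormedSpace ℝ E]
    [NormedAddCommGroup Z] [NormedSpace ℝ Z] {n : WithTop ℕ∞} {χ : E → ℝ} {u : E → Z} {s : Set E}
    (hχ : ContDiff ℝ n χ) (hs : IsOpen s) (hu : ContDiffOn ℝ n u s) (hsupp : tsupport χ ⊆ s) :
    ContDiff ℝ n fun x ↦ χ x • u x := by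
  refine contDiff_iff_contDiffAt.2 fun x ↦ ?_
  by_cases hx : x ∈ tsupport χ
  · exact hχ.contDiffAt.smul (hu.contDiffAt (hs.mem_nhds (hsupp hx)))
  · refine contDiffAt_const (c := 0) |>.congr_of_eventuallyEq ?_
    filter_upwards [(isClosed_tsupport χ).isOpen_compl.mem_nhds hx] with y hy
    rw [image_eq_zero_of_notMem_tsupport hy, zero_smul]

variable {E Z : Type*} [NormedAddCommGroup E] [NormedSpace ℝ E] [FiniteDimensional ℝ E]
  [NormedAddCommGroup Z] [NormedSpace ℝ Z]

theorem exists_contDiffBump_tsupport_subset {s : Set E} {x : E} (hs : s ∈ 𝓝 x) :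
    ∃ χ : ContDiffBump x, tsupport χ ⊆ s := by
  obtain ⟨r, hr, hrs⟩ := Metric.nhds_basis_closedBall.mem_iff.1 hs
  let χ : ContDiffBump x := ⟨r / 2, r, by positivity, by linarith⟩
  exact ⟨χ, χ.tsupport_eq ▸ hrs⟩

theorem exists_contDiff_eventuallyEq {u : E → Z} {s : Set E} {x : E} (hs : IsOpen s) (hx : x ∈ s)
    (hu : ContDiffOn ℝ ∞ u s) : ∃ v : E → Z, ContDiff ℝ ∞ v ∧ v =ᶠ[𝓝 x] u := by
  obtain ⟨χ, hχ⟩ := exists_contDiffBump_tsupport_subset (hs.mem_nhds hx)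
  refine ⟨fun y ↦ χ y • u y, contDiff_smul_of_tsupport_subset χ.contDiff hs hu hχ, ?_⟩
  filter_upwards [χ.eventuallyEq_one] with y hy
  simp [hy]

theorem exists_contDiff_nonneg_eventuallyEq {u : E → ℝ} {x : E} (hu : ContDiff ℝ ∞ u)
    (hpos : ∀ᶠ y in 𝓝 x, 0 ≤ u y) :
    ∃ v : E → ℝ, ContDiff ℝ ∞ v ∧ (∀ y, 0 ≤ v y) ∧ v =ᶠ[𝓝 x] u := by
  obtain ⟨χ, hχ⟩ := exists_contDiffBump_tsupport_subset hpos
  refine ⟨fun y ↦ χ y * u y, χ.contDiff.mul hu, fun y ↦ ?_, ?_⟩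
  · by_cases hy : y ∈ tsupport χ
    · exact mul_nonneg χ.nonneg (hχ hy)
    · simp [image_eq_zero_of_notMem_tsupport hy]
  · filter_upwards [χ.eventuallyEq_one] with y hy
    simp [hy]

end SmoothExtension

section ParametricIntegral

theorem exists_eventually_forall_norm_le_of_isCompact {X S Z : Type*} [TopologicalSpace X]
    [TopologicalSpace S] [SeminormedAddCommGroup Z] {K : X × S → Z} (hK : Continuous K)
    {k : Set S} (hk : IsCompact k) (x₀ : X) :
    ∃ C : ℝ, ∀ᶠ x in 𝓝 x₀, ∀ s ∈ k, ‖K (x, s)‖ ≤ C := by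
  obtain ⟨C, hC⟩ := hk.exists_bound_of_continuousOn (f := fun s ↦ K (x₀, s)) (by fun_prop)
  refine ⟨C + 1, hk.eventually_forall_of_forall_eventually fun s hs ↦ ?_⟩
  have hlt : ‖K (x₀, s)‖ < C + 1 := (hC s hs).trans_lt (lt_add_one C)
  exact (hK.norm.tendsto (x₀, s)).eventually (Iic_mem_nhds hlt)

theorem hasFDerivAt_intervalIntegral_of_contDiff {X Z : Type*} [NormedAddCommGroup X]
    [NormedSpace ℝ X] [NormedAddCommGroup Z] [NormedSpace ℝ Z] {K : X × ℝ → Z}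
    (hK : ContDiff ℝ 1 K) (a b : ℝ) (x₀ : X) :
    HasFDerivAt (fun x ↦ ∫ s in a..b, K (x, s))
      (∫ s in a..b, (fderiv ℝ K (x₀, s)).comp (ContinuousLinearMap.inl ℝ X ℝ)) x₀ := by
  have hK₀ : Continuous K := hK.continuous
  let K' : X × ℝ → X →L[ℝ] Z := fun p ↦ (fderiv ℝ K p).comp (ContinuousLinearMap.inl ℝ X ℝ)
  have hK' : Continuous K' :=
    (hK.continuous_fderiv one_ne_zero).clm_comp continuous_const
  have hderiv (x : X) (s : ℝ) : HasFDerivAt (fun x ↦ K (x, s)) (K' (x, s)) x :=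
    (hK.differentiable one_ne_zero (x, s)).hasFDerivAt.comp x (hasFDerivAt_prodMk_left x s)
  obtain ⟨C, hC⟩ := exists_eventually_forall_norm_le_of_isCompact hK'
    (isCompact_uIcc (a := a) (b := b)) x₀
  refine intervalIntegral.hasFDerivAt_integral_of_dominated_of_fderiv_le
    (F := fun x s ↦ K (x, s)) (F' := fun x s ↦ K' (x, s)) (bound := fun _ ↦ C) hC
    (Eventually.of_forall fun x ↦ ?_) ?_ ?_ ?_ intervalIntegrable_const
    (Eventually.of_forall fun s _ x _ ↦ hderiv x s)
  · exact (by fun_prop : Continuous fun s ↦ K (x, s)).aestronglyMeasurable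
  · exact (by fun_prop : Continuous fun s ↦ K (x₀, s)).intervalIntegrable a b
  · exact (by fun_prop : Continuous fun s ↦ K' (x₀, s)).aestronglyMeasurable
  · exact Eventually.of_forall fun s hs x hx ↦ hx s (uIoc_subset_uIcc hs)

variable {X Z : Type u} [NormedAddCommGroup X] [NormedSpace ℝ X]
  [NormedAddCommGroup Z] [NormedSpace ℝ Z]

-- `X` and `Z` share a universe because the induction replaces `Z` by `X →L[ℝ] Z`.
theorem contDiff_nat_intervalIntegral (a b : ℝ) (k : ℕ) {K : X × ℝ → Z} (hK : ContDiff ℝ k K) :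
    ContDiff ℝ k fun x ↦ ∫ s in a..b, K (x, s) := by
  induction k generalizing Z with
  | zero =>
    rw [Nat.cast_zero, contDiff_zero] at hK ⊢
    exact intervalIntegral.continuous_parametric_intervalIntegral_of_continuous'
      (f := fun x s ↦ K (x, s)) hK a b
  | succ k ih =>
    have hK' : ContDiff ℝ k fun p ↦ (fderiv ℝ K p).comp (ContinuousLinearMap.inl ℝ X ℝ) :=
      (hK.fderiv_right (by simp)).clm_comp contDiff_const
    rw [Nat.cast_succ, contDiff_succ_iff_hasFDerivAt]
    exact ⟨_, ih hK', hasFDerivAt_intervalIntegral_of_contDiff (hK.of_le (by simp)) a b⟩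

theorem contDiff_infty_intervalIntegral (a b : ℝ) {K : X × ℝ → Z} (hK : ContDiff ℝ ∞ K) :
    ContDiff ℝ ∞ fun x ↦ ∫ s in a..b, K (x, s) :=
  contDiff_infty.2 fun k ↦ contDiff_nat_intervalIntegral a b k (contDiff_infty.1 hK k)

end ParametricIntegral

section LocalDiffeomorphism

variable {E F G : Type*} [NormedAddCommGroup E] [NormedSpace ℝ E] [NormedAddCommGroup F]
  [NormedSpace ℝ F] [NormedAddCommGroup G] [NormedSpace ℝ G]

/-- A smooth change of coordinates near the origin: a diffeomorphism from an open neighbourhood of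
`0` onto an open neighbourhood of `0` which fixes the origin. It is a predicate on
`OpenPartialHomeomorph`, so that composition and inversion are those of Mathlib. -/
structure IsLocalDiffeoAtZero (Φ : OpenPartialHomeomorph E F) : Prop where
  zero_mem_source : (0 : E) ∈ Φ.source
  map_zero : Φ 0 = 0
  contDiffOn : ContDiffOn ℝ ∞ Φ Φ.source
  contDiffOn_symm : ContDiffOn ℝ ∞ Φ.symm Φ.target

namespace IsLocalDiffeoAtZero

variable {Φ : OpenPartialHomeomorph E F} {Ψ : OpenPartialHomeomorph F G}

theorem zero_mem_target (hΦ : IsLocalDiffeoAtZero Φ) : (0 : F) ∈ Φ.target :=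
  hΦ.map_zero ▸ Φ.map_source hΦ.zero_mem_source

theorem symm_map_zero (hΦ : IsLocalDiffeoAtZero Φ) : Φ.symm 0 = 0 := by
  simpa only [hΦ.map_zero] using Φ.left_inv hΦ.zero_mem_source

theorem symm (hΦ : IsLocalDiffeoAtZero Φ) : IsLocalDiffeoAtZero Φ.symm where
  zero_mem_source := hΦ.zero_mem_target
  map_zero := hΦ.symm_map_zero
  contDiffOn := hΦ.contDiffOn_symm
  contDiffOn_symm := hΦ.contDiffOn

theorem trans (hΦ : IsLocalDiffeoAtZero Φ) (hΨ : IsLocalDiffeoAtZero Ψ) :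
    IsLocalDiffeoAtZero (Φ.trans Ψ) where
  zero_mem_source := by
    simp [hΦ.zero_mem_source, hΦ.map_zero, hΨ.zero_mem_source]
  map_zero := by simp [hΦ.map_zero, hΨ.map_zero]
  contDiffOn := by
    rw [OpenPartialHomeomorph.trans_source]
    exact hΨ.contDiffOn.comp (hΦ.contDiffOn.mono inter_subset_left) fun _ hx ↦ hx.2
  contDiffOn_symm := by
    rw [OpenPartialHomeomorph.trans_target]
    exact hΦ.contDiffOn_symm.comp (hΨ.contDiffOn_symm.mono inter_subset_left) fun _ hx ↦ hx.2

theorem tendsto (hΦ : IsLocalDiffeoAtZero Φ) : Tendsto Φ (𝓝 0) (𝓝 0) := by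
  simpa only [hΦ.map_zero] using (Φ.continuousAt hΦ.zero_mem_source).tendsto

theorem exists_restr (hΦ : IsLocalDiffeoAtZero Φ) {p : E → Prop} (hp : ∀ᶠ x in 𝓝 0, p x) :
    ∃ Φ' : OpenPartialHomeomorph E F,
      IsLocalDiffeoAtZero Φ' ∧ (∀ x, Φ' x = Φ x) ∧ ∀ x ∈ Φ'.source, p x := by
  obtain ⟨s, hs, hso, h0s⟩ := eventually_nhds_iff.1 hp
  refine ⟨Φ.restrOpen s hso, ⟨⟨hΦ.zero_mem_source, h0s⟩, hΦ.map_zero, ?_, ?_⟩, fun _ ↦ rfl,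
    fun x hx ↦ hs x hx.2⟩
  · exact hΦ.contDiffOn.mono inter_subset_left
  · exact hΦ.contDiffOn_symm.mono inter_subset_left

end IsLocalDiffeoAtZero

theorem isLocalDiffeoAtZero_toOpenPartialHomeomorph {Φ : E ≃ₜ F} (h0 : Φ 0 = 0)
    (hΦ : ContDiff ℝ ∞ Φ) (hΦs : ContDiff ℝ ∞ Φ.symm) :
    IsLocalDiffeoAtZero Φ.toOpenPartialHomeomorph :=
  ⟨mem_univ _, h0, hΦ.contDiffOn, hΦs.contDiffOn⟩

theorem isLocalDiffeoAtZero_continuousLinearEquiv (A : E ≃L[ℝ] F) :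
    IsLocalDiffeoAtZero A.toHomeomorph.toOpenPartialHomeomorph :=
  isLocalDiffeoAtZero_toOpenPartialHomeomorph A.map_zero A.contDiff A.symm.contDiff

/-- The shear `(x, y) ↦ (x, h x + y)` along the graph of `h`. -/
def shearHomeomorph (h : E → F) (hh : Continuous h) : E × F ≃ₜ E × F where
  toFun p := (p.1, h p.1 + p.2)
  invFun p := (p.1, -h p.1 + p.2)
  left_inv p := by simp
  right_inv p := by simp

theorem isLocalDiffeoAtZero_shearHomeomorph {h : E → F} (hh : ContDiff ℝ ∞ h) (h0 : h 0 = 0) :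
    IsLocalDiffeoAtZero (shearHomeomorph h hh.continuous).toOpenPartialHomeomorph := by
  refine isLocalDiffeoAtZero_toOpenPartialHomeomorph (by simp [shearHomeomorph, h0]) ?_ ?_
  · exact contDiff_fst.prodMk ((hh.comp contDiff_fst).add contDiff_snd)
  · exact contDiff_fst.prodMk ((hh.comp contDiff_fst).neg.add contDiff_snd)

-- Mathlib's inverse function theorem makes the inverse smooth at one point only, and for
-- `n = ∞` this does not spread to a neighbourhood.
theorem exists_openPartialHomeomorph_of_hasFDerivAt_equiv [CompleteSpace E] {Φ : E → F}
    {s : Set E} {a : E} (hs : IsOpen s) (ha : a ∈ s) (hΦ : ContDiffOn ℝ ∞ Φ s) (e : E ≃L[ℝ] F)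
    (he : HasFDerivAt Φ (e : E →L[ℝ] F) a) :
    ∃ P : OpenPartialHomeomorph E F, (∀ x, P x = Φ x) ∧ a ∈ P.source ∧
      ContDiffOn ℝ ∞ P P.source ∧ ContDiffOn ℝ ∞ P.symm P.target := by
  have hΦa : ContDiffAt ℝ ∞ Φ a := hΦ.contDiffAt (hs.mem_nhds ha)
  let s' : Set E := s ∩ fderiv ℝ Φ ⁻¹' range ((↑) : (E ≃L[ℝ] F) → E →L[ℝ] F)
  have hs' : IsOpen s' := (hΦ.continuousOn_fderiv_of_isOpen hs (by simp)).isOpen_inter_preimage hs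
    ContinuousLinearEquiv.isOpen
  let P := (hΦa.toOpenPartialHomeomorph Φ he (by simp)).restrOpen s' hs'
  have hP : P.source ⊆ s' := inter_subset_right
  refine ⟨P, fun _ ↦ rfl, ?_, hΦ.mono (hP.trans inter_subset_left), fun y hy ↦ ?_⟩
  · exact ⟨hΦa.mem_toOpenPartialHomeomorph_source he (by simp), ha, e, he.fderiv.symm⟩
  · obtain ⟨hxs, e', he'⟩ := hP (P.map_target hy)
    have hΦx : ContDiffAt ℝ ∞ Φ (P.symm y) := hΦ.contDiffAt (hs.mem_nhds hxs)
    have hderiv : HasFDerivAt Φ (e' : E →L[ℝ] F) (P.symm y) :=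
      he' ▸ (hΦx.differentiableAt (by simp)).hasFDerivAt
    exact (P.contDiffAt_symm hy hderiv hΦx).contDiffWithinAt

end LocalDiffeomorphism

section SquareRoot

variable {R : Type*} [NormedRing R] [NormedAlgebra ℝ R]

theorem hasFDerivAt_mul_self_one :
    HasFDerivAt (fun x : R ↦ x * x) ((ContinuousLinearEquiv.smulLeft
      (Units.mk0 (2 : ℝ) two_ne_zero) : R ≃L[ℝ] R) : R →L[ℝ] R) 1 := by
  refine ((hasFDerivAt_id (𝕜 := ℝ) (1 : R)).mul' (hasFDerivAt_id 1)).congr_fderiv ?_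
  ext x
  simp [two_smul, Units.smul_def]

theorem exists_contDiffOn_sqrt_near_one [CompleteSpace R] [StarRing R] [ContinuousStar R] :
    ∃ (S : R → R) (W : Set R), IsOpen W ∧ 1 ∈ W ∧ ContDiffOn ℝ ∞ S W ∧ S 1 = 1 ∧
      ∀ m ∈ W, S m * S m = m ∧ (IsSelfAdjoint m → IsSelfAdjoint (S m)) := by
  obtain ⟨P, hPmul, h1P, -, hPs⟩ := exists_openPartialHomeomorph_of_hasFDerivAt_equiv
    (Φ := fun x : R ↦ x * x) isOpen_univ (mem_univ 1)
    (contDiff_id.mul contDiff_id).contDiffOn _ hasFDerivAt_mul_self_one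
  have hP1 : P 1 = 1 := (hPmul 1).trans (one_mul 1)
  have hPs1 : P.symm 1 = 1 := by simpa only [hP1] using P.left_inv h1P
  let W : Set R := P.target ∩ (fun m ↦ star (P.symm m)) ⁻¹' P.source
  have hW : IsOpen W := hPs.continuousOn.star.isOpen_inter_preimage P.open_target P.open_source
  refine ⟨P.symm, W, hW, ⟨hP1 ▸ P.map_source h1P, ?_⟩, hPs.mono inter_subset_left, hPs1, ?_⟩
  · simpa [hPs1] using h1P
  · rintro m ⟨hm, hms⟩
    have hsq : P.symm m * P.symm m = m := (hPmul _).symm.trans (P.right_inv hm)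
    refine ⟨hsq, fun hsa ↦ P.injOn hms (P.map_target hm) ?_⟩
    change P (star (P.symm m)) = P (P.symm m)
    rw [hPmul, hPmul, ← star_mul, hsq, hsa.star_eq]

theorem exists_contDiffOn_inner_eq_norm_sq {X Y : Type*} [NormedAddCommGroup X] [NormedSpace ℝ X]
    [NormedAddCommGroup Y] [InnerProductSpace ℝ Y] [CompleteSpace Y] {A : X → Y →L[ℝ] Y} {x₀ : X}
    (hA : ContDiff ℝ ∞ A) (hsa : ∀ x, IsSelfAdjoint (A x)) (hA₀ : A x₀ = 1) :
    ∃ (Q : X → Y →L[ℝ] Y) (s : Set X), IsOpen s ∧ x₀ ∈ s ∧ ContDiffOn ℝ ∞ Q s ∧ Q x₀ = 1 ∧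
      ∀ x ∈ s, ∀ y, ⟪A x y, y⟫ = ‖Q x y‖ ^ 2 := by
  obtain ⟨S, W, hW, h1W, hS, hS1, hSW⟩ := exists_contDiffOn_sqrt_near_one (R := Y →L[ℝ] Y)
  refine ⟨S ∘ A, A ⁻¹' W, hW.preimage hA.continuous, by rwa [mem_preimage, hA₀],
    hS.comp hA.contDiffOn fun _ hx ↦ hx, by rw [Function.comp_apply, hA₀, hS1], fun x hx y ↦ ?_⟩
  obtain ⟨hsq, hsaS⟩ := hSW _ hx
  calc ⟪A x y, y⟫ = ⟪S (A x) (S (A x) y), y⟫ :=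
        congrArg (fun B : Y →L[ℝ] Y ↦ ⟪B y, y⟫) hsq.symm
    _ = ⟪S (A x) y, S (A x) y⟫ := (hsaS (hsa x)).isSymmetric _ _
    _ = ‖S (A x) y‖ ^ 2 := real_inner_self_eq_norm_sq _

end SquareRoot

section Taylor

variable {E F : Type*} [NormedAddCommGroup E] [NormedSpace ℝ E] [NormedAddCommGroup F]
  [NormedSpace ℝ F]

theorem norm_sub_taylor_le [CompleteSpace F] {f : E → F} {n : ℕ} {x v : E} {C : ℝ}
    (hf : ∀ t ∈ Icc (0 : ℝ) 1, ContDiffAt ℝ (n + 1) f (x + t • v))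
    (hC : ∀ t ∈ Icc (0 : ℝ) 1, ‖iteratedFDeriv ℝ (n + 1) f (x + t • v)‖ ≤ C) :
    ‖f (x + v) - ∑ k ∈ Finset.range (n + 1),
      (k.factorial : ℝ)⁻¹ • iteratedFDeriv ℝ k f x fun _ ↦ v‖ ≤ C * ‖v‖ ^ (n + 1) := by
  rw [map_add_eq_sum_add_integral_iteratedFDeriv hf, add_sub_cancel_left, norm_smul]
  have hfac : ‖(n.factorial : ℝ)⁻¹‖ ≤ 1 := by
    rw [norm_inv, Real.norm_natCast]
    exact inv_le_one_of_one_le₀ (mod_cast n.factorial_pos)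
  have hint : ‖∫ t in (0 : ℝ)..1, (1 - t) ^ n • iteratedFDeriv ℝ (n + 1) f (x + t • v)
      fun _ ↦ v‖ ≤ C * ‖v‖ ^ (n + 1) * |1 - 0| := by
    refine intervalIntegral.norm_integral_le_of_norm_le_const fun t ht ↦ ?_
    rw [uIoc_of_le zero_le_one] at ht
    have hweight : ‖(1 - t) ^ n‖ ≤ 1 := by
      rw [norm_pow]
      exact pow_le_one₀ (norm_nonneg _) (abs_le.2 ⟨by linarith [ht.2], by linarith [ht.1]⟩)
    have hderiv : ‖iteratedFDeriv ℝ (n + 1) f (x + t • v) fun _ ↦ v‖ ≤ C * ‖v‖ ^ (n + 1) :=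
      (ContinuousMultilinearMap.le_opNorm _ _).trans (by
        simpa using mul_le_mul_of_nonneg_right (hC t ⟨ht.1.le, ht.2⟩) (by positivity))
    rw [norm_smul]
    exact (mul_le_of_le_one_left (norm_nonneg _) hweight).trans hderiv
  rw [sub_zero, abs_one, mul_one] at hint
  exact (mul_le_of_le_one_left (norm_nonneg _) hfac).trans hint

theorem isBigO_sub_taylor [CompleteSpace F] {f : E → F} {n : ℕ} {x : E}
    (hf : ContDiffAt ℝ (n + 1) f x) :
    (fun v ↦ f (x + v) - ∑ k ∈ Finset.range (n + 1),
      (k.factorial : ℝ)⁻¹ • iteratedFDeriv ℝ k f x fun _ ↦ v) =O[𝓝 0] fun v ↦ ‖v‖ ^ (n + 1) := by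
  have hbound : ∀ᶠ z in 𝓝 x, ‖iteratedFDeriv ℝ (n + 1) f z‖ ≤
      ‖iteratedFDeriv ℝ (n + 1) f x‖ + 1 :=
    (hf.continuousAt_iteratedFDeriv (by norm_cast)).norm.tendsto.eventually
      (Iic_mem_nhds (lt_add_one _))
  obtain ⟨r, hr, hball⟩ := Metric.eventually_nhds_iff_ball.1 ((hf.eventually (by simp)).and hbound)
  have hseg {v : E} (hv : v ∈ Metric.ball 0 r) {t : ℝ} (ht : t ∈ Icc (0 : ℝ) 1) :
      x + t • v ∈ Metric.ball x r := by
    rw [mem_ball_iff_norm, add_sub_cancel_left, norm_smul, Real.norm_of_nonneg ht.1]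
    exact (mul_le_of_le_one_left (norm_nonneg v) ht.2).trans_lt (mem_ball_zero_iff.1 hv)
  refine IsBigO.of_bound (‖iteratedFDeriv ℝ (n + 1) f x‖ + 1) ?_
  filter_upwards [Metric.ball_mem_nhds 0 hr] with v hv
  rw [norm_pow, norm_norm]
  exact norm_sub_taylor_le (fun t ht ↦ (hball _ (hseg hv ht)).1)
    fun t ht ↦ (hball _ (hseg hv ht)).2

theorem deriv_deriv_comp_add_smul {f : E → F} {a : E} (hf : ContDiffAt ℝ 2 f a) (v : E) :
    deriv (deriv fun t : ℝ ↦ f (a + t • v)) 0 = fderiv ℝ (fderiv ℝ f) a v v := by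
  have hline : Tendsto (fun t : ℝ ↦ a + t • v) (𝓝 0) (𝓝 a) :=
    (by fun_prop : Continuous fun t : ℝ ↦ a + t • v).tendsto' 0 a (by simp)
  have hderiv : deriv (fun t : ℝ ↦ f (a + t • v)) =ᶠ[𝓝 0] fun t ↦ fderiv ℝ f (a + t • v) v := by
    filter_upwards [hline.eventually (hf.eventually (by simp))] with t ht
    exact (ht.differentiableAt (by simp)).deriv_comp_add_smul
  have hdiff : DifferentiableAt ℝ (fderiv ℝ f) (a + (0 : ℝ) • v) := by
    simpa using (hf.fderiv_right (m := 1) le_rfl).differentiableAt one_ne_zero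
  rw [hderiv.deriv_eq, (hdiff.clm_apply (differentiableAt_const v)).deriv_comp_add_smul]
  rw [fderiv_clm_apply hdiff (differentiableAt_const v)]
  simp

end Taylor

section LocalMin

variable {E : Type*} [NormedAddCommGroup E] [NormedSpace ℝ E]

theorem fderiv_fderiv_self_nonneg_of_isLocalMin {f : E → ℝ} {a : E} (hmin : IsLocalMin f a)
    (hf : ContDiffAt ℝ 2 f a) (v : E) : 0 ≤ fderiv ℝ (fderiv ℝ f) a v v := by
  have hline : Tendsto (fun t : ℝ ↦ a + t • v) (𝓝 0) (𝓝 a) :=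
    (by fun_prop : Continuous fun t : ℝ ↦ a + t • v).tendsto' 0 a (by simp)
  have hmin' : IsLocalMin (fun t : ℝ ↦ f (a + t • v)) 0 := by
    filter_upwards [hline.eventually hmin] with t ht
    simpa using ht
  rw [← deriv_deriv_comp_add_smul hf]
  by_contra! hneg
  have hcont : ContinuousAt (fun t : ℝ ↦ f (a + t • v)) 0 :=
    ContinuousAt.comp (g := f) (by simpa using hf.continuousAt) (by fun_prop)
  have hmax := isLocalMax_of_deriv_deriv_neg hneg hmin'.deriv_eq_zero hcont
  have hconst : (fun t : ℝ ↦ f (a + t • v)) =ᶠ[𝓝 0] fun _ ↦ f (a + (0 : ℝ) • v) := by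
    filter_upwards [hmin', hmax] with t hle hge using le_antisymm hge hle
  rw [hconst.deriv.deriv_eq] at hneg
  simp at hneg

-- The cubic Taylor term is odd while `f - f a ≥ 0`, so it is itself of order four.
theorem isBigO_norm_pow_four_of_isLocalMin {f : E → ℝ} {a : E} (hmin : IsLocalMin f a)
    (hf : ContDiffAt ℝ 4 f a) (hHess : ∀ v, fderiv ℝ (fderiv ℝ f) a v v = 0) :
    (fun v ↦ f (a + v) - f a) =O[𝓝 0] fun v ↦ ‖v‖ ^ 4 := by
  let c : E → ℝ := fun v ↦ (6 : ℝ)⁻¹ * iteratedFDeriv ℝ 3 f a fun _ ↦ v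
  have hodd (v : E) : c (-v) = -c v := by
    have hneg := (iteratedFDeriv ℝ 3 f a).map_smul_univ (fun _ ↦ (-1 : ℝ)) fun _ ↦ v
    simp only [neg_one_smul, Finset.prod_const, Finset.card_fin, smul_eq_mul] at hneg
    simp only [c, hneg]
    ring
  have htaylor : (fun v ↦ f (a + v) - f a - c v) =O[𝓝 0] fun v ↦ ‖v‖ ^ 4 := by
    refine (isBigO_sub_taylor (n := 3) (by norm_num; exact hf)).congr_left fun v ↦ ?_
    simp [Finset.sum_range_succ, hmin.fderiv_eq_zero, iteratedFDeriv_two_apply, hHess, c,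
      Nat.factorial, sub_sub]
  obtain ⟨C, hC⟩ := htaylor.bound
  have hnonneg : ∀ᶠ v in 𝓝 0, 0 ≤ f (a + v) - f a := by
    filter_upwards [(continuous_const_add a).tendsto' 0 a (add_zero a) |>.eventually hmin] with v hv
    exact sub_nonneg.2 hv
  refine IsBigO.of_bound (2 * C) ?_
  filter_upwards [hnonneg, hC, (continuous_neg.tendsto' (0 : E) 0 neg_zero).eventually
    (hnonneg.and hC)] with v hv hCv hneg
  obtain ⟨hv', hCv'⟩ := hneg
  simp only [hodd, norm_neg, norm_pow, Real.norm_eq_abs, abs_of_nonneg hv]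
    at hCv hCv' ⊢
  linarith [(abs_le.1 hCv).2, (abs_le.1 hCv').2]

end LocalMin

section QuadraticRemainder

variable {Y : Type u} [NormedAddCommGroup Y] [InnerProductSpace ℝ Y] [CompleteSpace Y]

theorem contDiff_gradient {n : WithTop ℕ∞} {φ : Y → ℝ} (hφ : ContDiff ℝ (n + 1) φ) :
    ContDiff ℝ n (gradient φ) :=
  (InnerProductSpace.toDual ℝ Y).symm.toContinuousLinearEquiv.contDiff.comp
    (hφ.fderiv_right le_rfl)

theorem contDiff_uncurry_gradient {T : Type*} [NormedAddCommGroup T] [NormedSpace ℝ T]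
    {n : WithTop ℕ∞} {f : T → Y → ℝ} (hf : ContDiff ℝ (n + 1) ↿f) :
    ContDiff ℝ n ↿fun t ↦ gradient (f t) :=
  (InnerProductSpace.toDual ℝ Y).symm.toContinuousLinearEquiv.contDiff.comp
    (ContDiff.fderiv (f := fun p : T × Y ↦ f p.1)
      (hf.comp (contDiff_fst.fst.prodMk contDiff_snd)) contDiff_snd le_rfl)

theorem inner_fderiv_gradient {φ : Y → ℝ} {y : Y} (hφ : ContDiffAt ℝ 2 φ y) (u w : Y) :
    ⟪fderiv ℝ (gradient φ) y u, w⟫ = fderiv ℝ (fderiv ℝ φ) y u w := by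
  have hdiff : DifferentiableAt ℝ (fderiv ℝ φ) y :=
    (hφ.fderiv_right (m := 1) le_rfl).differentiableAt one_ne_zero
  let e : StrongDual ℝ Y ≃L[ℝ] Y := (InnerProductSpace.toDual ℝ Y).symm.toContinuousLinearEquiv
  have hcomp : fderiv ℝ (gradient φ) y =
      (e : StrongDual ℝ Y →L[ℝ] Y).comp (fderiv ℝ (fderiv ℝ φ) y) :=
    (e.hasFDerivAt.comp y hdiff.hasFDerivAt).fderiv
  rw [hcomp]
  exact InnerProductSpace.toDual_symm_apply

/-- The operator `R φ y` in Taylor's formula `φ y = φ 0 + dφ(0) y + ⟪R φ y y, y⟫`, given by the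
integral form of the remainder, with the Hessian regarded as the derivative of the gradient. -/
noncomputable def quadraticRemainder (φ : Y → ℝ) (y : Y) : Y →L[ℝ] Y :=
  ∫ s in (0 : ℝ)..1, (1 - s) • fderiv ℝ (gradient φ) (s • y)

theorem contDiff_quadraticRemainder {T : Type u} [NormedAddCommGroup T] [NormedSpace ℝ T]
    {f : T → Y → ℝ} (hf : ContDiff ℝ ∞ ↿f) :
    ContDiff ℝ ∞ fun p : T × Y ↦ quadraticRemainder (f p.1) p.2 := by
  have hgrad : ContDiff ℝ ∞ ↿fun t ↦ gradient (f t) := contDiff_uncurry_gradient hf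
  have hhess : ContDiff ℝ ∞ fun q : (T × Y) × ℝ ↦
      fderiv ℝ (gradient (f q.1.1)) (q.2 • q.1.2) :=
    ContDiff.fderiv (f := fun q : (T × Y) × ℝ ↦ gradient (f q.1.1)) (n := ∞)
      (hgrad.comp (contDiff_fst.fst.fst.prodMk contDiff_snd)) (by fun_prop) le_rfl
  exact contDiff_infty_intervalIntegral 0 1
    (K := fun q : (T × Y) × ℝ ↦ (1 - q.2) • fderiv ℝ (gradient (f q.1.1)) (q.2 • q.1.2))
    (by fun_prop)

variable {φ : Y → ℝ}

theorem inner_quadraticRemainder (hφ : ContDiff ℝ 2 φ) (y u w : Y) :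
    ⟪quadraticRemainder φ y u, w⟫ =
      ∫ s in (0 : ℝ)..1, (1 - s) * fderiv ℝ (fderiv ℝ φ) (s • y) u w := by
  have hcont : Continuous fun s : ℝ ↦ (1 - s) • fderiv ℝ (gradient φ) (s • y) := by
    have hhess := (contDiff_gradient (n := 1) hφ).continuous_fderiv one_ne_zero
    fun_prop
  let L : (Y →L[ℝ] Y) →L[ℝ] ℝ := (innerSL ℝ w).comp (ContinuousLinearMap.apply ℝ Y u)
  have hL (A : Y →L[ℝ] Y) : L A = ⟪A u, w⟫ := real_inner_comm _ _
  rw [← hL, quadraticRemainder, ← L.intervalIntegral_comp_comm (hcont.intervalIntegrable 0 1)]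
  congr with s
  rw [hL, smul_apply, real_inner_smul_left, inner_fderiv_gradient hφ.contDiffAt]

theorem isSelfAdjoint_quadraticRemainder (hφ : ContDiff ℝ 2 φ) (y : Y) :
    IsSelfAdjoint (quadraticRemainder φ y) := by
  refine ContinuousLinearMap.isSelfAdjoint_iff_isSymmetric.2 fun u w ↦ ?_
  have hsymm (s : ℝ) := (hφ.contDiffAt (x := s • y)).isSymmSndFDerivAt (by simp)
  simp only [ContinuousLinearMap.coe_coe]
  rw [real_inner_comm _ u, inner_quadraticRemainder hφ, inner_quadraticRemainder hφ]
  simp only [(hsymm _).eq u w]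

theorem quadraticRemainder_taylor (hφ : ContDiff ℝ 2 φ) (y : Y) :
    φ y = φ 0 + fderiv ℝ φ 0 y + ⟪quadraticRemainder φ y y, y⟫ := by
  have htaylor := map_add_eq_sum_add_integral_iteratedFDeriv (f := φ) (x := 0) (y := y) (n := 1)
    fun t _ ↦ hφ.contDiffAt
  rw [inner_quadraticRemainder hφ]
  simpa [Finset.sum_range_succ, iteratedFDeriv_two_apply] using htaylor

theorem quadraticRemainder_zero (hφ : ContDiff ℝ 2 φ)
    (hHess : ∀ u w, fderiv ℝ (fderiv ℝ φ) 0 u w = 2 * ⟪u, w⟫) : quadraticRemainder φ 0 = 1 := by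
  refine ContinuousLinearMap.ext fun u ↦ ext_inner_right ℝ fun w ↦ ?_
  have hweight : ∫ s in (0 : ℝ)..1, (1 - s) = 1 / 2 := by
    rw [intervalIntegral.integral_sub (by simp) (by simp)]
    norm_num
  simp only [inner_quadraticRemainder hφ, smul_zero, hHess, intervalIntegral.integral_mul_const,
    hweight]
  simp

end QuadraticRemainder

section ImplicitFunction

variable {T Y Z : Type*} [NormedAddCommGroup T] [NormedSpace ℝ T]
  [NormedAddCommGroup Y] [NormedSpace ℝ Y] [NormedAddCommGroup Z] [NormedSpace ℝ Z]

theorem hasFDerivAt_prodMk_fst_skewProd {F : T × Y → Z} {F' : T × Y →L[ℝ] Z} {p : T × Y}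
    (hF : HasFDerivAt F F' p) (e : Y ≃L[ℝ] Z)
    (he : HasFDerivAt (fun y ↦ F (p.1, y)) (e : Y →L[ℝ] Z) p.2) :
    HasFDerivAt (fun q : T × Y ↦ (q.1, F q)) (((ContinuousLinearEquiv.refl ℝ T).skewProd e
      (F'.comp (ContinuousLinearMap.inl ℝ T Y)) : (T × Y) ≃L[ℝ] T × Z) : T × Y →L[ℝ] T × Z) p := by
  have hpartial : F'.comp (ContinuousLinearMap.inr ℝ T Y) = e :=
    (hF.comp p.2 (hasFDerivAt_prodMk_right p.1 p.2)).unique he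
  refine (hasFDerivAt_fst.prodMk hF).congr_fderiv (ContinuousLinearMap.ext fun q ↦ ?_)
  have hq : F' q = e q.2 + F' (q.1, 0) := by
    rw [← ContinuousLinearEquiv.coe_coe, ← hpartial]
    simp [← map_add]
  exact Prod.ext rfl hq

theorem exists_isLocalDiffeoAtZero_prodMk_fst [CompleteSpace T] [CompleteSpace Y]
    {F : T × Y → Z} {s : Set (T × Y)} (hs : IsOpen s) (h0s : 0 ∈ s) (hF : ContDiffOn ℝ ∞ F s)
    (hF0 : F 0 = 0) (e : Y ≃L[ℝ] Z)
    (he : HasFDerivAt (fun y ↦ F (0, y)) (e : Y →L[ℝ] Z) 0) :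
    ∃ Φ : OpenPartialHomeomorph (T × Y) (T × Z),
      IsLocalDiffeoAtZero Φ ∧ ∀ p, Φ p = (p.1, F p) := by
  have hF' : HasFDerivAt F (fderiv ℝ F 0) 0 :=
    ((hF.contDiffAt (hs.mem_nhds h0s)).differentiableAt (by simp)).hasFDerivAt
  obtain ⟨Φ, hΦ, h0Φ, hΦc, hΦs⟩ := exists_openPartialHomeomorph_of_hasFDerivAt_equiv hs h0s
    (contDiffOn_fst.prodMk hF) _ (hasFDerivAt_prodMk_fst_skewProd hF' e he)
  exact ⟨Φ, ⟨h0Φ, by rw [hΦ, hF0, Prod.fst_zero, Prod.mk_zero_zero], hΦc, hΦs⟩, hΦ⟩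

theorem exists_contDiff_implicit_of_hasFDerivAt_equiv [FiniteDimensional ℝ T] [CompleteSpace Y]
    {F : T × Y → Z} (hF : ContDiff ℝ ∞ F) (hF0 : F 0 = 0) (e : Y ≃L[ℝ] Z)
    (he : HasFDerivAt (fun y ↦ F (0, y)) (e : Y →L[ℝ] Z) 0) :
    ∃ h : T → Y, ContDiff ℝ ∞ h ∧ h 0 = 0 ∧ ∀ᶠ t in 𝓝 0, F (t, h t) = 0 := by
  have := FiniteDimensional.complete ℝ T
  obtain ⟨Φ, hΦ, hΦF⟩ := exists_isLocalDiffeoAtZero_prodMk_fst isOpen_univ (mem_univ 0)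
    hF.contDiffOn hF0 e he
  have hι : ContDiff ℝ ∞ fun t : T ↦ (t, (0 : Z)) := contDiff_id.prodMk contDiff_const
  have hs : IsOpen ((fun t : T ↦ (t, (0 : Z))) ⁻¹' Φ.target) :=
    Φ.open_target.preimage hι.continuous
  have h0s : (0 : T) ∈ (fun t : T ↦ (t, (0 : Z))) ⁻¹' Φ.target := hΦ.zero_mem_target
  obtain ⟨h, hh, heq⟩ := exists_contDiff_eventuallyEq hs h0s (u := fun t ↦ (Φ.symm (t, 0)).2)
    (contDiff_snd.comp_contDiffOn (hΦ.contDiffOn_symm.comp hι.contDiffOn fun _ ht ↦ ht))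
  refine ⟨h, hh, heq.eq_of_nhds.trans (congrArg Prod.snd hΦ.symm_map_zero), ?_⟩
  filter_upwards [heq, hs.mem_nhds h0s] with t ht hts
  have hinv : ((Φ.symm (t, 0)).1, F (Φ.symm (t, 0))) = (t, 0) :=
    (hΦF _).symm.trans (Φ.right_inv hts)
  obtain ⟨hfst, hzero⟩ := Prod.mk.inj hinv
  have hpoint : (t, h t) = Φ.symm (t, 0) := Prod.ext hfst.symm ht
  rw [hpoint, hzero]

end ImplicitFunction

section MorseLemma

variable {T Y : Type u} [NormedAddCommGroup T] [NormedSpace ℝ T] [FiniteDimensional ℝ T]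
  [NormedAddCommGroup Y] [InnerProductSpace ℝ Y] [CompleteSpace Y] {f : T → Y → ℝ}

theorem exists_contDiff_fderiv_eq_zero (hf : ContDiff ℝ ∞ ↿f) (hcrit : fderiv ℝ (f 0) 0 = 0)
    (hHess : ∀ u w, fderiv ℝ (fderiv ℝ (f 0)) 0 u w = 2 * ⟪u, w⟫) :
    ∃ h : T → Y, ContDiff ℝ ∞ h ∧ h 0 = 0 ∧ ∀ᶠ t in 𝓝 0, fderiv ℝ (f t) (h t) = 0 := by
  have hf0 : ContDiff ℝ ∞ (f 0) := hf.comp (contDiff_const.prodMk contDiff_id)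
  have hgrad : DifferentiableAt ℝ (gradient (f 0)) 0 :=
    (contDiff_gradient (n := ∞) hf0).differentiable (by simp) 0
  have hderiv : HasFDerivAt (gradient (f 0)) ((ContinuousLinearEquiv.smulLeft
      (Units.mk0 (2 : ℝ) two_ne_zero) : Y ≃L[ℝ] Y) : Y →L[ℝ] Y) 0 := by
    refine hgrad.hasFDerivAt.congr_fderiv (ContinuousLinearMap.ext fun u ↦ ?_)
    refine ext_inner_right ℝ fun w ↦ ?_
    rw [inner_fderiv_gradient (contDiff_infty.1 hf0 2).contDiffAt, hHess]
    simp [Units.smul_def, real_inner_smul_left]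
  have hgrad0 : gradient (f 0) 0 = 0 := by simp [gradient, hcrit]
  obtain ⟨h, hh, hh0, hzero⟩ := exists_contDiff_implicit_of_hasFDerivAt_equiv
    (F := fun p : T × Y ↦ gradient (f p.1) p.2) (contDiff_uncurry_gradient hf) hgrad0 _ hderiv
  refine ⟨h, hh, hh0, hzero.mono fun t ht ↦ ?_⟩
  simpa [gradient] using ht

theorem exists_isLocalDiffeoAtZero_eq_add_norm_sq (hf : ContDiff ℝ ∞ ↿f)
    (hcrit : ∀ᶠ t in 𝓝 0, fderiv ℝ (f t) 0 = 0)
    (hHess : ∀ u w, fderiv ℝ (fderiv ℝ (f 0)) 0 u w = 2 * ⟪u, w⟫) :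
    ∃ Φ : OpenPartialHomeomorph (T × Y) (T × Y), IsLocalDiffeoAtZero Φ ∧ (∀ p, (Φ p).1 = p.1) ∧
      ∀ᶠ p in 𝓝 0, f p.1 p.2 = f p.1 0 + ‖(Φ p).2‖ ^ 2 := by
  have := FiniteDimensional.complete ℝ T
  have hslice (t : T) : ContDiff ℝ 2 (f t) :=
    contDiff_infty.1 (hf.comp (contDiff_const.prodMk contDiff_id)) 2
  obtain ⟨Q, s, hs, h0s, hQ, hQ0, hQs⟩ := exists_contDiffOn_inner_eq_norm_sq
    (A := fun p : T × Y ↦ quadraticRemainder (f p.1) p.2) (x₀ := 0)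
    (contDiff_quadraticRemainder hf) (fun p ↦ isSelfAdjoint_quadraticRemainder (hslice p.1) p.2)
    (quadraticRemainder_zero (hslice 0) hHess)
  have hderiv : HasFDerivAt (fun y ↦ Q (0, y) y)
      (ContinuousLinearEquiv.refl ℝ Y : Y →L[ℝ] Y) 0 := by
    have hQ' : DifferentiableAt ℝ (fun y ↦ Q (0, y)) 0 :=
      ((hQ.contDiffAt (hs.mem_nhds h0s)).differentiableAt (by simp)).comp 0
        (by fun_prop : DifferentiableAt ℝ (fun y : Y ↦ ((0 : T), y)) 0)
    refine (hQ'.hasFDerivAt.clm_apply (hasFDerivAt_id 0)).congr_fderiv ?_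
    ext y
    simp [← Prod.zero_eq_mk, hQ0]
  obtain ⟨Φ, hΦ, hΦQ⟩ := exists_isLocalDiffeoAtZero_prodMk_fst hs h0s
    (hQ.clm_apply contDiffOn_snd) (by simp) _ hderiv
  refine ⟨Φ, hΦ, fun p ↦ by rw [hΦQ], ?_⟩
  filter_upwards [hs.mem_nhds h0s, continuous_fst.tendsto' (0 : T × Y) 0 rfl |>.eventually hcrit]
    with p hp hcritp
  rw [quadraticRemainder_taylor (hslice p.1) p.2, hcritp, hQs p hp, hΦQ]
  simp

theorem exists_isLocalDiffeoAtZero_eq_critical_add_norm_sq (hf : ContDiff ℝ ∞ ↿f)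
    (hcrit : fderiv ℝ (f 0) 0 = 0)
    (hHess : ∀ u w, fderiv ℝ (fderiv ℝ (f 0)) 0 u w = 2 * ⟪u, w⟫) :
    ∃ (h : T → Y) (Φ : OpenPartialHomeomorph (T × Y) (T × Y)),
      ContDiff ℝ ∞ h ∧ h 0 = 0 ∧ IsLocalDiffeoAtZero Φ ∧ (∀ p, (Φ p).1 = p.1) ∧
      ∀ᶠ p in 𝓝 0, f p.1 p.2 = f p.1 (h p.1) + ‖(Φ p).2‖ ^ 2 := by
  obtain ⟨h, hh, hh0, hcrit_h⟩ := exists_contDiff_fderiv_eq_zero hf hcrit hHess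
  let f' : T → Y → ℝ := fun t y ↦ f t (h t + y)
  have hf'0 : f' 0 = f 0 := by simp [f', hh0]
  have hf' : ContDiff ℝ ∞ ↿f' :=
    hf.comp (contDiff_fst.prodMk ((hh.comp contDiff_fst).add contDiff_snd))
  have hcrit' : ∀ᶠ t in 𝓝 0, fderiv ℝ (f' t) 0 = 0 :=
    hcrit_h.mono fun t ht ↦ by rw [fderiv_comp_add_left, add_zero, ht]
  obtain ⟨Ψ, hΨ, hΨfst, hΨeq⟩ :=
    exists_isLocalDiffeoAtZero_eq_add_norm_sq hf' hcrit' (by rwa [hf'0])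
  have hshear := (isLocalDiffeoAtZero_shearHomeomorph hh hh0).symm
  refine ⟨h, _, hh, hh0, hshear.trans hΨ, fun p ↦ hΨfst _, ?_⟩
  filter_upwards [hshear.tendsto.eventually hΨeq] with p hp
  simpa [f', shearHomeomorph] using hp

theorem exists_isLocalDiffeoAtZero_eq_add_nonneg_of_isLocalMin (hf : ContDiff ℝ ∞ ↿f)
    (hmin : IsLocalMin ↿f 0)
    (hHess : ∀ u w, fderiv ℝ (fderiv ℝ (f 0)) 0 u w = 2 * ⟪u, w⟫) :
    ∃ (Φ : OpenPartialHomeomorph (T × Y) (T × Y)) (g : T → ℝ),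
      IsLocalDiffeoAtZero Φ ∧ ContDiff ℝ ∞ g ∧ (∀ t, 0 ≤ g t) ∧
      (∀ᶠ t in 𝓝 0, g t ≤ f t 0 - f 0 0) ∧
      ∀ᶠ p in 𝓝 0, f p.1 p.2 = f 0 0 + (‖(Φ p).2‖ ^ 2 + g (Φ p).1) := by
  have hcrit : fderiv ℝ (f 0) 0 = 0 :=
    (hmin.comp_continuous (g := fun y : Y ↦ ((0 : T), y))
      (Continuous.prodMk_right 0).continuousAt).fderiv_eq_zero
  obtain ⟨h, Φ, hh, hh0, hΦ, hΦfst, hΦeq⟩ :=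
    exists_isLocalDiffeoAtZero_eq_critical_add_norm_sq hf hcrit hHess
  have hgraph : Tendsto (fun t ↦ (t, h t)) (𝓝 0) (𝓝 (0 : T × Y)) :=
    (continuous_id.prodMk hh.continuous).tendsto' 0 0 (Prod.ext rfl hh0)
  obtain ⟨g, hg, hgnonneg, hgeq⟩ := exists_contDiff_nonneg_eventuallyEq
    (u := fun t ↦ f t (h t) - f 0 0) (x := 0)
    ((hf.comp (contDiff_id.prodMk hh)).sub contDiff_const)
    ((hgraph.eventually hmin).mono fun t ht ↦ sub_nonneg.2 ht)
  have hnormal : ∀ᶠ p in 𝓝 0, f p.1 p.2 = f 0 0 + (‖(Φ p).2‖ ^ 2 + g (Φ p).1) := by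
    filter_upwards [hΦeq, continuous_fst.tendsto' (0 : T × Y) 0 rfl |>.eventually hgeq]
      with p hp hgp
    rw [hp, hΦfst, hgp]
    ring
  refine ⟨Φ, g, hΦ, hg, hgnonneg, ?_, hnormal⟩
  have haxis : Tendsto (fun t : T ↦ (t, (0 : Y))) (𝓝 0) (𝓝 0) :=
    (Continuous.prodMk_left 0).tendsto' 0 0 rfl
  filter_upwards [haxis.eventually hnormal] with t ht
  rw [hΦfst] at ht
  linarith [sq_nonneg ‖(Φ (t, 0)).2‖]

end MorseLemma

section PositiveSemidefinite

variable {E T Y : Type*} [AddCommGroup E] [Module ℝ E]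
  [NormedAddCommGroup Y] [InnerProductSpace ℝ Y] [FiniteDimensional ℝ Y]
  {B : LinearMap.BilinForm ℝ E}

theorem exists_linearEquiv_inner_of_nondegenerate [FiniteDimensional ℝ E] (hB : B.IsPosSemidef)
    (hnd : B.Nondegenerate) (hdim : Module.finrank ℝ Y = Module.finrank ℝ E) :
    ∃ A : Y ≃ₗ[ℝ] E, ∀ y y', B (A y) (A y') = ⟪y, y'⟫ := by
  let core : InnerProductSpace.Core ℝ E :=
    { inner := fun u w ↦ B u w
      conj_inner_symm := fun u w ↦ hB.isSymm.eq w u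
      re_inner_nonneg := hB.nonneg
      add_left := B.add_left
      smul_left := fun u w c ↦ B.smul_left c u w
      definite := fun u ↦ ((B.nondegenerate_iff hB.nonneg
        (LinearMap.BilinForm.isSymm_iff.1 hB.isSymm)).1 hnd u).1 }
  let _ : NormedAddCommGroup E := core.toNormedAddCommGroup
  let _ : InnerProductSpace ℝ E := InnerProductSpace.ofCore core.toCore
  let A : Y ≃ₗᵢ[ℝ] E := (stdOrthonormalBasis ℝ Y).equiv (stdOrthonormalBasis ℝ E) (finCongr hdim)
  exact ⟨A.toLinearEquiv, A.inner_map_map⟩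

theorem exists_linearEquiv_inner_snd_of_isPosSemidef [FiniteDimensional ℝ E] [AddCommGroup T]
    [Module ℝ T] [FiniteDimensional ℝ T] (hB : B.IsPosSemidef)
    (hker : Module.finrank ℝ T = Module.finrank ℝ (LinearMap.ker B))
    (hdim : Module.finrank ℝ (T × Y) = Module.finrank ℝ E) :
    ∃ A : (T × Y) ≃ₗ[ℝ] E, ∀ p q, B (A p) (A q) = ⟪p.2, q.2⟫ := by
  have hsymm := LinearMap.BilinForm.isSymm_iff.1 hB.isSymm
  obtain ⟨W, hW⟩ := (LinearMap.ker B).exists_isCompl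
  have hBW : (B.restrict W).IsPosSemidef :=
    ⟨⟨fun u w ↦ hB.isSymm.eq u w⟩, ⟨fun u ↦ hB.nonneg u⟩⟩
  have hdimW : Module.finrank ℝ Y = Module.finrank ℝ W := by
    have := Submodule.finrank_add_eq_of_isCompl hW
    rw [Module.finrank_prod] at hdim
    lia
  obtain ⟨AW, hAW⟩ := exists_linearEquiv_inner_of_nondegenerate hBW
    ((B.nondegenerate_restrict_iff_disjoint_ker hB.nonneg hsymm).2 hW.disjoint.symm) hdimW
  let AK : T ≃ₗ[ℝ] LinearMap.ker B := LinearEquiv.ofFinrankEq _ _ hker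
  refine ⟨(AK.prodCongr AW).trans (Submodule.prodEquivOfIsCompl _ W hW), fun p q ↦ ?_⟩
  have hright (k : LinearMap.ker B) (u : E) : B u k = 0 := by
    rw [hB.isSymm.eq, LinearMap.mem_ker.1 k.2, LinearMap.zero_apply]
  rw [← hAW]
  simp [hright]

end PositiveSemidefinite

section Hessian

variable {E G : Type*} [NormedAddCommGroup E] [NormedSpace ℝ E] [NormedAddCommGroup G]
  [NormedSpace ℝ G] {f : E → ℝ}

theorem isPosSemidef_fderiv_fderiv_of_isLocalMin {a : E} (hmin : IsLocalMin f a)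
    (hf : ContDiffAt ℝ 2 f a) : (fderiv ℝ (fderiv ℝ f) a).toBilinForm.IsPosSemidef :=
  ⟨⟨fun u w ↦ (hf.isSymmSndFDerivAt (by simp)).eq u w⟩,
    ⟨fderiv_fderiv_self_nonneg_of_isLocalMin hmin hf⟩⟩

theorem fderiv_fderiv_comp_continuousLinearMap (hf : ContDiff ℝ 2 f) (A : G →L[ℝ] E) (x u w : G) :
    fderiv ℝ (fderiv ℝ fun y ↦ f (A y)) x u w = fderiv ℝ (fderiv ℝ f) (A x) (A u) (A w) := by
  have hf' : ContDiff ℝ 1 (fderiv ℝ f) := hf.fderiv_right le_rfl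
  have hfirst : (fderiv ℝ fun y ↦ f (A y)) = fun y ↦ (fderiv ℝ f (A y)).comp A := funext fun y ↦
    ((hf.differentiable two_ne_zero (A y)).hasFDerivAt.comp y A.hasFDerivAt).fderiv
  have hsecond : HasFDerivAt (fun y ↦ fderiv ℝ f (A y))
      ((fderiv ℝ (fderiv ℝ f) (A x)).comp A) x :=
    (hf'.differentiable one_ne_zero (A x)).hasFDerivAt.comp x A.hasFDerivAt
  rw [hfirst, (hsecond.clm_comp (hasFDerivAt_const A x)).fderiv]
  simp

theorem isBigO_norm_pow_four_of_continuousLinearMap (hf : ContDiff ℝ 4 f)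
    (hmin : IsLocalMin f 0) (A : G →L[ℝ] E)
    (hA : ∀ v, fderiv ℝ (fderiv ℝ f) 0 (A v) (A v) = 0) :
    (fun v ↦ f (A v) - f 0) =O[𝓝 0] fun v ↦ ‖v‖ ^ 4 := by
  have hminA : IsLocalMin (f ∘ A) 0 :=
    IsLocalMin.comp_continuous (by rwa [map_zero]) A.continuous.continuousAt
  have hHess (v : G) : fderiv ℝ (fderiv ℝ (f ∘ A)) 0 v v = 0 := by
    have := fderiv_fderiv_comp_continuousLinearMap (hf.of_le (by norm_num)) A 0 v v
    rwa [map_zero, hA] at this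
  simpa using isBigO_norm_pow_four_of_isLocalMin hminA (hf.comp A.contDiff).contDiffAt hHess

end Hessian

section Splitting

variable {E : Type*} [NormedAddCommGroup E] [NormedSpace ℝ E] {T Y : Type u}
  [NormedAddCommGroup T] [NormedSpace ℝ T] [FiniteDimensional ℝ T]
  [NormedAddCommGroup Y] [InnerProductSpace ℝ Y] [FiniteDimensional ℝ Y] {f : E → ℝ}

theorem exists_continuousLinearEquiv_hessian_eq_two_mul_inner_snd (e : E ≃L[ℝ] T × Y)
    (hf : ContDiffAt ℝ 2 f 0) (hmin : IsLocalMin f 0)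
    (hker : Module.finrank ℝ (LinearMap.ker (fderiv ℝ (fderiv ℝ f) 0).toBilinForm) =
      Module.finrank ℝ T) :
    ∃ A : (T × Y) ≃L[ℝ] E, ∀ p q,
      fderiv ℝ (fderiv ℝ f) 0 (A p) (A q) = 2 * ⟪p.2, q.2⟫ := by
  have : FiniteDimensional ℝ E := e.symm.toLinearEquiv.finiteDimensional
  obtain ⟨A, hA⟩ := exists_linearEquiv_inner_snd_of_isPosSemidef (T := T) (Y := Y)
    ((isPosSemidef_fderiv_fderiv_of_isLocalMin hmin hf).smul (c := 2⁻¹) (by norm_num))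
    (by rw [LinearMap.ker_smul _ _ (by norm_num), hker]) e.toLinearEquiv.finrank_eq.symm
  refine ⟨A.toContinuousLinearEquiv, fun p q ↦ ?_⟩
  rw [← hA p q]
  simp

theorem exists_isLocalDiffeoAtZero_comp_eq_norm_sq_add (e : E ≃L[ℝ] T × Y)
    (hf : ContDiff ℝ ∞ f) (hmin : IsLocalMin f 0)
    (hker : Module.finrank ℝ (LinearMap.ker (fderiv ℝ (fderiv ℝ f) 0).toBilinForm) =
      Module.finrank ℝ T) :
    ∃ (Φ : OpenPartialHomeomorph (T × Y) E) (g : T → ℝ),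
      IsLocalDiffeoAtZero Φ ∧ ContDiff ℝ ∞ g ∧ (∀ t, 0 ≤ g t) ∧
      g =O[𝓝 0] (fun t ↦ ‖t‖ ^ 4) ∧
      ∀ᶠ p in 𝓝 0, f (Φ p) = f 0 + (‖p.2‖ ^ 2 + g p.1) := by
  have hf2 : ContDiff ℝ 2 f := contDiff_infty.1 hf 2
  obtain ⟨A, hA⟩ :=
    exists_continuousLinearEquiv_hessian_eq_two_mul_inner_snd e hf2.contDiffAt hmin hker
  have hminA : IsLocalMin (f ∘ A) 0 :=
    IsLocalMin.comp_continuous (by rwa [map_zero]) A.continuous.continuousAt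
  obtain ⟨Ψ, g, hΨ, hg, hgnonneg, hgle, hnormal⟩ :=
    exists_isLocalDiffeoAtZero_eq_add_nonneg_of_isLocalMin (f := fun t y ↦ f (A (t, y)))
      (hf.comp A.contDiff) hminA fun u w ↦ by
        simpa [Prod.mk_zero_zero, hA] using fderiv_fderiv_comp_continuousLinearMap hf2
          ((A : T × Y →L[ℝ] E).comp (.inr ℝ T Y)) 0 u w
  have hquartic : (fun t ↦ f (A (t, 0)) - f 0) =O[𝓝 0] fun t ↦ ‖t‖ ^ 4 := by
    simpa using isBigO_norm_pow_four_of_continuousLinearMap (contDiff_infty.1 hf 4) hmin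
      ((A : T × Y →L[ℝ] E).comp (.inl ℝ T Y)) fun t ↦ by simp [hA]
  refine ⟨Ψ.symm.trans A.toHomeomorph.toOpenPartialHomeomorph, g,
    hΨ.symm.trans (isLocalDiffeoAtZero_continuousLinearEquiv A), hg, hgnonneg,
    .trans (.of_bound' ?_) hquartic, ?_⟩
  · filter_upwards [hgle] with t ht
    rw [Real.norm_of_nonneg (hgnonneg t)]
    simpa [Prod.mk_zero_zero] using ht.trans (le_abs_self _)
  · filter_upwards [hΨ.symm.tendsto.eventually hnormal,
      Ψ.open_target.mem_nhds hΨ.zero_mem_target] with p hp hpt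
    rw [Ψ.right_inv hpt] at hp
    simpa [Prod.mk_zero_zero] using hp

theorem splitting_lemma_corank_one_general (e : E ≃L[ℝ] T × Y) {U : Set E} (hU : IsOpen U)
    (h0U : 0 ∈ U) (hf : ContDiffOn ℝ ∞ f U) (hmin : IsLocalMin f 0)
    (hker : Module.finrank ℝ (LinearMap.ker (fderiv ℝ (fderiv ℝ f) 0).toBilinForm) =
      Module.finrank ℝ T) :
    ∃ (V : Set E) (φ ψ : E → E) (g : T → ℝ),
      IsOpen V ∧ 0 ∈ V ∧ ContDiffOn ℝ ∞ φ V ∧ φ 0 = 0 ∧ InjOn φ V ∧ φ '' V ⊆ U ∧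
      IsOpen (φ '' V) ∧ ContDiffOn ℝ ∞ ψ (φ '' V) ∧ (∀ x ∈ V, ψ (φ x) = x) ∧
      ContDiff ℝ ∞ g ∧ (∀ t, 0 ≤ g t) ∧ g =O[𝓝 0] (fun t ↦ ‖t‖ ^ 4) ∧
      ∀ x ∈ V, f (φ x) = f 0 + (‖(e x).2‖ ^ 2 + g (e x).1) := by
  have : FiniteDimensional ℝ E := e.symm.toLinearEquiv.finiteDimensional
  obtain ⟨f', hf', hff'⟩ := exists_contDiff_eventuallyEq hU h0U hf
  obtain ⟨Ψ, g, hΨ, hg, hgnonneg, hgO, hnormal⟩ :=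
    exists_isLocalDiffeoAtZero_comp_eq_norm_sq_add e hf' (hmin.congr hff'.symm)
      (by rwa [hff'.fderiv.fderiv_eq])
  have he := (isLocalDiffeoAtZero_continuousLinearEquiv e).trans hΨ
  have hgood : ∀ᶠ x in 𝓝 0, Ψ (e x) ∈ U ∧ f (Ψ (e x)) = f 0 + (‖(e x).2‖ ^ 2 + g (e x).1) := by
    filter_upwards [he.tendsto.eventually (hU.mem_nhds h0U), he.tendsto.eventually hff',
      (isLocalDiffeoAtZero_continuousLinearEquiv e).tendsto.eventually hnormal] with x hxU hxf hx
    exact ⟨hxU, by rw [← hff'.eq_of_nhds]; exact hxf.symm.trans hx⟩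
  obtain ⟨Φ, hΦ, hΦeq, hΦsource⟩ := he.exists_restr hgood
  refine ⟨Φ.source, Φ, Φ.symm, g, Φ.open_source, hΦ.zero_mem_source, hΦ.contDiffOn, hΦ.map_zero,
    Φ.injOn, ?_, ?_, ?_, fun x ↦ Φ.left_inv, hg, hgnonneg, hgO, fun x hx ↦ ?_⟩
  · rintro _ ⟨x, hx, rfl⟩
    rw [hΦeq]
    exact (hΦsource x hx).1
  · exact Φ.image_source_eq_target ▸ Φ.open_target
  · exact Φ.image_source_eq_target ▸ hΦ.contDiffOn_symm
  · rw [hΦeq]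
    exact (hΦsource x hx).2

end Splitting

/-- The splitting `(x₁, …, xₙ, xₙ₊₁) ↦ (xₙ₊₁, (x₁, …, xₙ))` of `ℝⁿ⁺¹` as `ℝ × ℝⁿ`, the coordinate
of the Hessian kernel coming first. -/
noncomputable def euclideanSpaceSuccEquiv (n : ℕ) :
    EuclideanSpace ℝ (Fin (n + 1)) ≃L[ℝ] ℝ × EuclideanSpace ℝ (Fin n) :=
  LinearEquiv.toContinuousLinearEquiv
    { toFun := fun x ↦ (x (Fin.last n), WithLp.toLp 2 fun i ↦ x i.castSucc)
      invFun := fun p ↦ WithLp.toLp 2 (Fin.snoc (α := fun _ ↦ ℝ) p.2 p.1)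
      map_add' := fun _ _ ↦ rfl
      map_smul' := fun _ _ ↦ rfl
      left_inv := fun x ↦ by
        ext i
        refine Fin.lastCases ?_ (fun j ↦ ?_) i <;> simp
      right_inv := fun p ↦ by ext <;> simp }

theorem euclideanSpaceSuccEquiv_apply {n : ℕ} (x : EuclideanSpace ℝ (Fin (n + 1))) :
    euclideanSpaceSuccEquiv n x = (x (Fin.last n), WithLp.toLp 2 fun i ↦ x i.castSucc) :=
  rfl

theorem isLocalMin_of_forall_mem_ball_lt {X : Type*} [PseudoMetricSpace X] {f : X → ℝ} {a : X}
    {ε : ℝ} (hε : 0 < ε) (hlt : ∀ x ∈ Metric.ball a ε, x ≠ a → f a < f x) : IsLocalMin f a := by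
  filter_upwards [Metric.ball_mem_nhds a hε] with x hx
  obtain rfl | hxa := eq_or_ne x a
  · exact le_rfl
  · exact (hlt x hx hxa).le

theorem finrank_ker_eq_one_of_forall_iff {E : Type*} [AddCommGroup E] [Module ℝ E]
    {B : LinearMap.BilinForm ℝ E} {v : E} (hv : v ≠ 0)
    (hB : ∀ u, (∀ w, B u w = 0) ↔ ∃ c : ℝ, u = c • v) :
    Module.finrank ℝ (LinearMap.ker B) = 1 := by
  have hspan : LinearMap.ker B = ℝ ∙ v := by
    ext u
    rw [LinearMap.mem_ker, LinearMap.ext_iff, Submodule.mem_span_singleton]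
    exact (hB u).trans (exists_congr fun c ↦ eq_comm)
  rw [hspan, finrank_span_singleton hv]

/-- Splitting Lemma / Refined Morse Lemma in the corank-one case: near an isolated local
minimum `0` with `f 0 = 0`, `df(0) = 0` and one-dimensional Hessian kernel, a smooth
function of `n+1` variables can be brought, by a smooth change of coordinates, to the
normal form `x₁² + ⋯ + xₙ² + g(x_{n+1})` with `g ≥ 0` and `g(z) = O(z⁴)`. -/
theorem splitting_lemma_corank_one {n : ℕ}
    (U : Set (EuclideanSpace ℝ (Fin (n + 1)))) (hU : IsOpen U) (h0U : (0 : _) ∈ U)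
    (f : EuclideanSpace ℝ (Fin (n + 1)) → ℝ) (hf : ContDiffOn ℝ (⊤ : ℕ∞) f U)
    (hmin : ∃ ε > 0, Metric.ball (0 : EuclideanSpace ℝ (Fin (n + 1))) ε ⊆ U ∧
      ∀ x ∈ Metric.ball (0 : EuclideanSpace ℝ (Fin (n + 1))) ε, x ≠ 0 → f 0 < f x)
    (hf0 : f 0 = 0) (hdf0 : fderiv ℝ f 0 = 0)
    (hker : ∃ v : EuclideanSpace ℝ (Fin (n + 1)), v ≠ 0 ∧
      ∀ u : EuclideanSpace ℝ (Fin (n + 1)),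
        ((∀ w, fderiv ℝ (fderiv ℝ f) 0 u w = 0) ↔ ∃ c : ℝ, u = c • v)) :
    ∃ (V : Set (EuclideanSpace ℝ (Fin (n + 1))))
      (φ : EuclideanSpace ℝ (Fin (n + 1)) → EuclideanSpace ℝ (Fin (n + 1)))
      (ψ : EuclideanSpace ℝ (Fin (n + 1)) → EuclideanSpace ℝ (Fin (n + 1)))
      (g : ℝ → ℝ),
      IsOpen V ∧ (0 : _) ∈ V ∧
      ContDiffOn ℝ (⊤ : ℕ∞) φ V ∧ φ 0 = 0 ∧ Set.InjOn φ V ∧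
      φ '' V ⊆ U ∧ IsOpen (φ '' V) ∧
      ContDiffOn ℝ (⊤ : ℕ∞) ψ (φ '' V) ∧ (∀ x ∈ V, ψ (φ x) = x) ∧
      ContDiff ℝ (⊤ : ℕ∞) g ∧ (∀ z : ℝ, 0 ≤ g z) ∧
      (fun z : ℝ => g z) =O[nhds 0] (fun z : ℝ => z ^ 4) ∧
      ∀ x ∈ V, f (φ x) = (∑ i : Fin n, x (Fin.castSucc i) ^ 2) + g (x (Fin.last n)) := by
  obtain ⟨ε, hε, -, hlt⟩ := hmin
  obtain ⟨v, hv, hspan⟩ := hker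
  have hrank := finrank_ker_eq_one_of_forall_iff
    (B := (fderiv ℝ (fderiv ℝ f) 0).toBilinForm) hv hspan
  simpa only [hf0, zero_add, ← norm_pow, isBigO_norm_right, EuclideanSpace.real_norm_sq_eq,
    euclideanSpaceSuccEquiv_apply] using
    splitting_lemma_corank_one_general (euclideanSpaceSuccEquiv n) hU h0U hf
      (isLocalMin_of_forall_mem_ball_lt hε hlt) (hrank.trans (Module.finrank_self ℝ).symm)
end

section
/- Let U ⊂ ℝ² be an open neighborhood of (0,0), let f : U → ℝ be smooth, and let f(x,y) = Σ_{i+j ≤ n−1} a_{ij} x^i y^j + O((x²+y²)^{n/2}) be its Taylor expansion at (0,0). Define F(0) := (π/2) f(0,0) and, for y > 0 small, F(y) := ∫₀^y f(x,y)/√(y²−x²) dx. Then F coincides on [0,ε) with the smooth function G(y) := ∫₀¹ f(ty,y)/√(1−t²) dt (in particular F is smooth on [0,ε)), and F(y) = b₀ + b₁ y + ⋯ + b_{n−1} y^{n−1} + O(yⁿ) as y → 0⁺, where b_k = Σ_{j=0}^{k} a_{j,k−j} ∫₀¹ u^j/√(1−u²) du. -/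
open Set Asymptotics Filter Real intervalIntegral

/-!
The substitution `x = t y` turns `∫₀^y f(x, y)/√(y² - x²) dx` into `∫₀¹ f(ty, y)/√(1 - t²) dt`,
where the integrable singular weight no longer depends on `y`. The latter integral can be
differentiated under the integral sign as often as `f` allows. On a monomial it gives
`x^i y^j ↦ (∫₀¹ u^i/√(1 - u²) du) y^(i+j)`, and it preserves `O(‖(x, y)‖^n)` because
`‖(ty, y)‖ ≤ |y|`, so the Taylor expansion of `f` is transformed term by term.
-/

open MeasureTheory Topology

section ParametricIntegral

variable {X Y E : Type*} [NormedAddCommGroup E]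

theorem exists_eventually_forall_norm_le_of_continuousAt [TopologicalSpace X] [TopologicalSpace Y]
    {K : Set X} (hK : IsCompact K) {g : Y × X → E} {y : Y}
    (hg : ∀ t ∈ K, ContinuousAt g (y, t)) :
    ∃ C, ∀ᶠ z in 𝓝 y, ∀ t ∈ K, ‖g (z, t)‖ ≤ C := by
  have slice_continuousOn : ContinuousOn (fun t => g (y, t)) K := fun t ht =>
    ((hg t ht).comp (f := fun t => (y, t)) (by fun_prop)).continuousWithinAt
  obtain ⟨C, hC⟩ := hK.exists_bound_of_continuousOn slice_continuousOn
  refine ⟨C + 1, hK.eventually_forall_of_forall_eventually fun t ht => ?_⟩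
  exact ((hg t ht).norm.eventually_lt_const ((hC t ht).trans_lt (lt_add_one C))).mono
    fun _ => le_of_lt

variable [NormedSpace ℝ E] [MeasurableSpace X] {μ : Measure X} {K : Set X} {w : X → ℝ}

theorem integrableOn_smul_slice [TopologicalSpace X] [OpensMeasurableSpace X] [T2Space X]
    [SecondCountableTopologyEither X E] [TopologicalSpace Y] (hK : IsCompact K)
    (hw : IntegrableOn w K μ) {g : Y × X → E} {y : Y} (hg : ∀ t ∈ K, ContinuousAt g (y, t)) :
    IntegrableOn (fun t => w t • g (y, t)) K μ :=
  hw.smul_continuousOn (fun t ht =>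
    ((hg t ht).comp (f := fun t => (y, t)) (by fun_prop)).continuousWithinAt) hK

theorem continuousAt_setIntegral_smul [TopologicalSpace X] [OpensMeasurableSpace X] [T2Space X]
    [SecondCountableTopologyEither X E] [TopologicalSpace Y] [FirstCountableTopology Y]
    (hK : IsCompact K) (hw : IntegrableOn w K μ) {g : Y × X → E} {y : Y}
    (hg : ∀ᶠ z in 𝓝 y, ∀ t ∈ K, ContinuousAt g (z, t)) :
    ContinuousAt (fun z => ∫ t in K, w t • g (z, t) ∂μ) y := by
  obtain ⟨C, hC⟩ := exists_eventually_forall_norm_le_of_continuousAt hK hg.self_of_nhds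
  refine continuousAt_of_dominated (bound := fun t => ‖w t‖ * C)
    (hg.mono fun z hz => (integrableOn_smul_slice hK hw hz).aestronglyMeasurable)
    (hC.mono fun z hz => ae_restrict_of_forall_mem hK.measurableSet fun t ht => ?_)
    (hw.norm.mul_const C)
    (ae_restrict_of_forall_mem hK.measurableSet fun t ht => ?_)
  · rw [norm_smul]
    gcongr
    exact hz t ht
  · exact ((hg.self_of_nhds t ht).comp (f := fun z => (z, t)) (by fun_prop)).const_smul (w t)

variable [NormedAddCommGroup X] [NormedSpace ℝ X] [OpensMeasurableSpace X]
  [SecondCountableTopologyEither X E]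

theorem hasDerivAt_setIntegral_smul (hK : IsCompact K) (hw : IntegrableOn w K μ)
    {g : ℝ × X → E} {y : ℝ} (hg : ∀ t ∈ K, ContDiffAt ℝ 1 g (y, t)) :
    HasDerivAt (fun z => ∫ t in K, w t • g (z, t) ∂μ)
      (∫ t in K, w t • fderiv ℝ g (y, t) (1, 0) ∂μ) y := by
  have contDiffAt_near : ∀ᶠ z in 𝓝 y, ∀ t ∈ K, ContDiffAt ℝ 1 g (z, t) :=
    hK.eventually_forall_of_forall_eventually fun t ht => (hg t ht).eventually (by simp)
  have deriv_continuousAt : ∀ t ∈ K, ContinuousAt (fun p => fderiv ℝ g p (1, 0)) (y, t) :=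
    fun t ht => ((hg t ht).continuousAt_fderiv one_ne_zero).clm_apply continuousAt_const
  obtain ⟨C, hC⟩ := exists_eventually_forall_norm_le_of_continuousAt hK deriv_continuousAt
  refine (hasDerivAt_integral_of_dominated_loc_of_deriv_le (bound := fun t => ‖w t‖ * C)
    (F' := fun z t => w t • fderiv ℝ g (z, t) (1, 0)) (contDiffAt_near.and hC)
    (contDiffAt_near.mono fun z hz =>
      (integrableOn_smul_slice hK hw fun t ht => (hz t ht).continuousAt).aestronglyMeasurable)
    (integrableOn_smul_slice hK hw fun t ht => (hg t ht).continuousAt)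
    (integrableOn_smul_slice hK hw deriv_continuousAt).aestronglyMeasurable
    (ae_restrict_of_forall_mem hK.measurableSet fun t ht z hz => ?_)
    (hw.norm.mul_const C)
    (ae_restrict_of_forall_mem hK.measurableSet fun t ht z hz => ?_)).2
  · rw [norm_smul]
    gcongr
    exact hz.2 t ht
  · have slice_hasDerivAt : HasDerivAt (fun z : ℝ => (z, t)) (1, 0) z :=
      (hasDerivAt_id z).prodMk (hasDerivAt_const z t)
    exact (((hz.1 t ht).differentiableAt one_ne_zero).hasFDerivAt.comp_hasDerivAt z
      slice_hasDerivAt).const_smul (w t)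

theorem contDiffOn_natCast_setIntegral_smul (hK : IsCompact K) (hw : IntegrableOn w K μ)
    {s : Set ℝ} (hs : IsOpen s) (m : ℕ) {g : ℝ × X → E}
    (hg : ∀ y ∈ s, ∀ t ∈ K, ContDiffAt ℝ m g (y, t)) :
    ContDiffOn ℝ m (fun y => ∫ t in K, w t • g (y, t) ∂μ) s := by
  induction m generalizing g with
  | zero =>
    refine contDiffOn_zero.2 fun y hy => ContinuousAt.continuousWithinAt ?_
    refine continuousAt_setIntegral_smul hK hw ?_
    filter_upwards [hs.mem_nhds hy] with z hz t ht
    exact (hg z hz t ht).continuousAt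
  | succ m ih =>
    have integral_hasDerivAt : ∀ y ∈ s, HasDerivAt (fun z => ∫ t in K, w t • g (z, t) ∂μ)
        (∫ t in K, w t • fderiv ℝ g (y, t) (1, 0) ∂μ) y := fun y hy =>
      hasDerivAt_setIntegral_smul hK hw fun t ht => (hg y hy t ht).of_le (by norm_cast; lia)
    have deriv_contDiffAt : ∀ y ∈ s, ∀ t ∈ K,
        ContDiffAt ℝ m (fun p => fderiv ℝ g p (1, 0)) (y, t) := fun y hy t ht =>
      ((hg y hy t ht).fderiv_right (m := m) le_rfl).clm_apply contDiffAt_const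
    rw [Nat.cast_succ, contDiffOn_succ_iff_deriv_of_isOpen hs]
    exact ⟨fun y hy => (integral_hasDerivAt y hy).differentiableAt.differentiableWithinAt,
      by simp, (ih deriv_contDiffAt).congr fun y hy => (integral_hasDerivAt y hy).deriv⟩

theorem contDiffOn_setIntegral_smul (hK : IsCompact K) (hw : IntegrableOn w K μ)
    {s : Set ℝ} (hs : IsOpen s) {m : ℕ∞} {g : ℝ × X → E}
    (hg : ∀ y ∈ s, ∀ t ∈ K, ContDiffAt ℝ m g (y, t)) :
    ContDiffOn ℝ m (fun y => ∫ t in K, w t • g (y, t) ∂μ) s :=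
  contDiffOn_iff_forall_nat_le.2 fun k hk =>
    contDiffOn_natCast_setIntegral_smul hK hw hs k fun y hy t ht =>
      (hg y hy t ht).of_le (mod_cast hk)

end ParametricIntegral

section Weight

theorem intervalIntegrable_inv_sqrt_one_sub_sq :
    IntervalIntegrable (fun t : ℝ => (√(1 - t ^ 2))⁻¹) volume 0 1 := by
  simp only [← Real.sqrt_inv]
  refine Polynomial.Chebyshev.intervalIntegrable_sqrt_one_sub_sq_inv.mono_set ?_
  rw [uIcc_of_le zero_le_one, uIcc_of_le (by norm_num)]
  exact Icc_subset_Icc_left (by norm_num)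

theorem integral_inv_sqrt_one_sub_sq : ∫ t in (0 : ℝ)..1, (√(1 - t ^ 2))⁻¹ = π / 2 := by
  have arcsin_hasDerivAt : ∀ t ∈ Ioo (0 : ℝ) 1, HasDerivAt arcsin (√(1 - t ^ 2))⁻¹ t :=
    fun t ht => by simpa using Real.hasDerivAt_arcsin (x := t) (by linarith [ht.1]) ht.2.ne
  rw [integral_eq_sub_of_hasDerivAt_of_le zero_le_one continuous_arcsin.continuousOn
    arcsin_hasDerivAt intervalIntegrable_inv_sqrt_one_sub_sq, arcsin_one, arcsin_zero, sub_zero]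

theorem sqrt_sq_sub_mul_sq {y : ℝ} (hy : 0 ≤ y) (t : ℝ) :
    √(y ^ 2 - (t * y) ^ 2) = y * √(1 - t ^ 2) := by
  rw [show y ^ 2 - (t * y) ^ 2 = y ^ 2 * (1 - t ^ 2) by ring, Real.sqrt_mul (sq_nonneg y),
    Real.sqrt_sq hy]

end Weight

section AbelIntegral

variable {E : Type*} [NormedAddCommGroup E] [NormedSpace ℝ E] {f : ℝ × ℝ → E}

/-- The Abel-type integral `∫₀^y f(x, y)/√(y² - x²) dx`, written in the rescaled variable
`t = x / y` so that it also makes sense for `y ≤ 0`. -/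
noncomputable def abelIntegral (f : ℝ × ℝ → E) (y : ℝ) : E :=
  ∫ t in (0 : ℝ)..1, (√(1 - t ^ 2))⁻¹ • f (t * y, y)

/-- The `j`-th moment on `[0, 1]` of the weight `1/√(1 - u²)`. -/
noncomputable def abelMoment (j : ℕ) : ℝ :=
  ∫ u in (0 : ℝ)..1, u ^ j / √(1 - u ^ 2)

theorem abelIntegral_eq_integral_div (f : ℝ × ℝ → ℝ) :
    abelIntegral f = fun y => ∫ t in (0 : ℝ)..1, f (t * y, y) / √(1 - t ^ 2) := by
  ext y
  simp only [abelIntegral, smul_eq_mul, div_eq_inv_mul]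

theorem abelIntegral_zero [CompleteSpace E] (f : ℝ × ℝ → E) :
    abelIntegral f 0 = (π / 2) • f (0, 0) := by
  simp only [abelIntegral, mul_zero, intervalIntegral.integral_smul_const,
    integral_inv_sqrt_one_sub_sq]

theorem abelIntegral_eq_integral_of_pos (f : ℝ × ℝ → E) {y : ℝ} (hy : 0 < y) :
    abelIntegral f y = ∫ x in (0 : ℝ)..y, (√(y ^ 2 - x ^ 2))⁻¹ • f (x, y) := by
  have substitution := smul_integral_comp_mul_right (a := 0) (b := 1)
    (fun x => (√(y ^ 2 - x ^ 2))⁻¹ • f (x, y)) y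
  rw [zero_mul, one_mul] at substitution
  rw [← substitution, ← intervalIntegral.integral_smul, abelIntegral]
  refine integral_congr fun t _ => ?_
  simp only [sqrt_sq_sub_mul_sq hy.le, mul_inv, smul_smul, mul_inv_cancel_left₀ hy.ne']

theorem intervalIntegrable_abelIntegral {y : ℝ}
    (hf : ∀ t ∈ Icc (0 : ℝ) 1, ContinuousAt f (t * y, y)) :
    IntervalIntegrable (fun t => (√(1 - t ^ 2))⁻¹ • f (t * y, y)) volume 0 1 := by
  refine intervalIntegrable_inv_sqrt_one_sub_sq.smul_continuousOn fun t ht => ?_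
  rw [uIcc_of_le zero_le_one] at ht
  exact ((hf t ht).comp (f := fun t => (t * y, y)) (by fun_prop)).continuousWithinAt

theorem abelIntegral_sub {f g : ℝ × ℝ → E} {y : ℝ}
    (hf : ∀ t ∈ Icc (0 : ℝ) 1, ContinuousAt f (t * y, y))
    (hg : ∀ t ∈ Icc (0 : ℝ) 1, ContinuousAt g (t * y, y)) :
    abelIntegral (fun p => f p - g p) y = abelIntegral f y - abelIntegral g y := by
  simp only [abelIntegral, smul_sub]
  exact intervalIntegral.integral_sub (intervalIntegrable_abelIntegral hf)
    (intervalIntegrable_abelIntegral hg)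

theorem abelIntegral_finset_sum {ι : Type*} (S : Finset ι) {f : ι → ℝ × ℝ → E} {y : ℝ}
    (hf : ∀ i ∈ S, ∀ t ∈ Icc (0 : ℝ) 1, ContinuousAt (f i) (t * y, y)) :
    abelIntegral (fun p => ∑ i ∈ S, f i p) y = ∑ i ∈ S, abelIntegral (f i) y := by
  simp only [abelIntegral, Finset.smul_sum]
  exact intervalIntegral.integral_finsetSum fun i hi => intervalIntegrable_abelIntegral (hf i hi)

theorem abelIntegral_monomial [CompleteSpace E] (i j : ℕ) (c : E) (y : ℝ) :
    abelIntegral (fun p => (p.1 ^ i * p.2 ^ j) • c) y = (y ^ (i + j) * abelMoment i) • c := by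
  have integrand_eq (t : ℝ) : (√(1 - t ^ 2))⁻¹ • ((t * y) ^ i * y ^ j) • c =
      (y ^ (i + j) * (t ^ i / √(1 - t ^ 2))) • c := by
    rw [smul_smul]
    ring_nf
  simp only [abelIntegral, abelMoment, integrand_eq, intervalIntegral.integral_smul_const,
    intervalIntegral.integral_const_mul]

theorem abelIntegral_polynomial [CompleteSpace E] (S : Finset (ℕ × ℕ)) (a : ℕ → ℕ → E) (y : ℝ) :
    abelIntegral (fun p => ∑ ij ∈ S, (p.1 ^ ij.1 * p.2 ^ ij.2) • a ij.1 ij.2) y =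
      ∑ ij ∈ S, (y ^ (ij.1 + ij.2) * abelMoment ij.1) • a ij.1 ij.2 := by
  rw [abelIntegral_finset_sum S fun _ _ _ _ => by fun_prop]
  simp only [abelIntegral_monomial]

theorem contDiffOn_abelIntegral {U : Set (ℝ × ℝ)} (hU : IsOpen U) {m : ℕ∞}
    (hf : ContDiffOn ℝ m f U) {s : Set ℝ} (hs : IsOpen s)
    (hsU : ∀ y ∈ s, ∀ t ∈ Icc (0 : ℝ) 1, (t * y, y) ∈ U) :
    ContDiffOn ℝ m (abelIntegral f) s := by
  have weight_integrableOn : IntegrableOn (fun t : ℝ => (√(1 - t ^ 2))⁻¹) (Icc 0 1) :=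
    (intervalIntegrable_iff_integrableOn_Icc_of_le zero_le_one).1
      intervalIntegrable_inv_sqrt_one_sub_sq
  have rescaled_contDiffAt : ∀ y ∈ s, ∀ t ∈ Icc (0 : ℝ) 1,
      ContDiffAt ℝ m (fun p : ℝ × ℝ => f (p.2 * p.1, p.1)) (y, t) := fun y hy t ht =>
    (hf.contDiffAt (hU.mem_nhds (hsU y hy t ht))).comp (y, t)
      (f := fun p : ℝ × ℝ => (p.2 * p.1, p.1)) (by fun_prop)
  refine (contDiffOn_setIntegral_smul isCompact_Icc weight_integrableOn hs
    rescaled_contDiffAt).congr fun y _ => ?_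
  rw [abelIntegral, integral_of_le zero_le_one, integral_Icc_eq_integral_Ioc]

theorem eventually_forall_mul_prodMk_self {P : ℝ × ℝ → Prop}
    (hP : ∀ᶠ p in 𝓝 (0, 0), P p) : ∀ᶠ y : ℝ in 𝓝 0, ∀ t ∈ Icc (0 : ℝ) 1, P (t * y, y) := by
  refine isCompact_Icc.eventually_forall_of_forall_eventually fun t _ => ?_
  have rescaling_tendsto :
      Tendsto (fun p : ℝ × ℝ => (p.2 * p.1, p.1)) (𝓝 (0, t)) (𝓝 (0, 0)) :=
    Continuous.tendsto' (by fun_prop) _ _ (by simp)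
  exact rescaling_tendsto.eventually hP

theorem norm_mul_prodMk_self_le {t : ℝ} (ht : t ∈ Icc (0 : ℝ) 1) (y : ℝ) : ‖(t * y, y)‖ ≤ ‖y‖ := by
  refine norm_prod_le_iff.2 ⟨?_, le_rfl⟩
  rw [norm_mul, Real.norm_of_nonneg ht.1]
  exact mul_le_of_le_one_left (norm_nonneg y) ht.2

theorem isBigO_abelIntegral {n : ℕ} (hf : f =O[𝓝 (0, 0)] fun p => ‖p‖ ^ n) :
    abelIntegral f =O[𝓝 0] fun y => y ^ n := by
  obtain ⟨C, hC, hfC⟩ := hf.exists_nonneg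
  refine IsBigO.of_bound (C * (π / 2)) ?_
  filter_upwards [eventually_forall_mul_prodMk_self hfC.bound] with y hy
  have integrand_le : ∀ t ∈ Ioc (0 : ℝ) 1,
      ‖(√(1 - t ^ 2))⁻¹ • f (t * y, y)‖ ≤ (√(1 - t ^ 2))⁻¹ * (C * ‖y‖ ^ n) := fun t ht => by
    have htI := Ioc_subset_Icc_self ht
    rw [norm_smul, Real.norm_of_nonneg (by positivity)]
    gcongr
    calc ‖f (t * y, y)‖ ≤ C * ‖(t * y, y)‖ ^ n := (hy t htI).trans_eq (by rw [norm_pow, norm_norm])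
      _ ≤ C * ‖y‖ ^ n := by gcongr; exact norm_mul_prodMk_self_le htI y
  calc ‖abelIntegral f y‖
      ≤ ∫ t in (0 : ℝ)..1, (√(1 - t ^ 2))⁻¹ * (C * ‖y‖ ^ n) :=
        norm_integral_le_of_norm_le zero_le_one (Eventually.of_forall integrand_le)
          (intervalIntegrable_inv_sqrt_one_sub_sq.mul_const _)
    _ = C * (π / 2) * ‖y ^ n‖ := by
        rw [intervalIntegral.integral_mul_const, integral_inv_sqrt_one_sub_sq, norm_pow]
        ring

theorem isBigO_abelIntegral_sub_polynomial [CompleteSpace E] (S : Finset (ℕ × ℕ))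
    (a : ℕ → ℕ → E) {n : ℕ} (hfc : ∀ᶠ p in 𝓝 (0, 0), ContinuousAt f p)
    (hf : (fun p => f p - ∑ ij ∈ S, (p.1 ^ ij.1 * p.2 ^ ij.2) • a ij.1 ij.2)
      =O[𝓝 (0, 0)] fun p => ‖p‖ ^ n) :
    (fun y => abelIntegral f y - ∑ ij ∈ S, (y ^ (ij.1 + ij.2) * abelMoment ij.1) • a ij.1 ij.2)
      =O[𝓝 0] fun y => y ^ n := by
  refine (isBigO_abelIntegral hf).congr' ?_ EventuallyEq.rfl
  filter_upwards [eventually_forall_mul_prodMk_self hfc] with y hy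
  rw [abelIntegral_sub hy fun _ _ => by fun_prop, abelIntegral_polynomial]

end AbelIntegral

section TaylorExpansion

theorem sqrt_sq_add_sq_isBigO_norm (l : Filter (ℝ × ℝ)) :
    (fun p : ℝ × ℝ => √(p.1 ^ 2 + p.2 ^ 2)) =O[l] fun p => ‖p‖ := by
  refine IsBigO.of_bound √2 (Eventually.of_forall fun p => ?_)
  have sq_fst_le : p.1 ^ 2 ≤ ‖p‖ ^ 2 := sq_le_sq.2 (by simpa using norm_fst_le p)
  have sq_snd_le : p.2 ^ 2 ≤ ‖p‖ ^ 2 := sq_le_sq.2 (by simpa using norm_snd_le p)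
  calc ‖√(p.1 ^ 2 + p.2 ^ 2)‖ = √(p.1 ^ 2 + p.2 ^ 2) := Real.norm_of_nonneg (Real.sqrt_nonneg _)
    _ ≤ √(2 * ‖p‖ ^ 2) := Real.sqrt_le_sqrt (by linarith)
    _ = √2 * ‖‖p‖‖ := by
      rw [Real.sqrt_mul zero_le_two, Real.sqrt_sq (norm_nonneg p), norm_norm]

theorem sum_filter_add_lt_eq_sum_range {M : Type*} [AddCommMonoid M] (n : ℕ) (h : ℕ → ℕ → M) :
    ∑ ij ∈ (Finset.range n ×ˢ Finset.range n).filter (fun ij => ij.1 + ij.2 < n), h ij.1 ij.2 =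
      ∑ k ∈ Finset.range n, ∑ j ∈ Finset.range (k + 1), h j (k - j) := by
  rw [← Finset.sum_fiberwise_of_maps_to (g := fun ij : ℕ × ℕ => ij.1 + ij.2) (t := Finset.range n)
    fun ij hij => Finset.mem_range.2 (Finset.mem_filter.1 hij).2]
  refine Finset.sum_congr rfl fun k hk => ?_
  rw [← Finset.Nat.sum_antidiagonal_eq_sum_range_succ h]
  refine Finset.sum_congr ?_ fun _ _ => rfl
  ext ij
  simp only [Finset.mem_filter, Finset.mem_product, Finset.mem_range,
    Finset.HasAntidiagonal.mem_antidiagonal] at hk ⊢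
  lia

variable {E : Type*} [NormedAddCommGroup E] [NormedSpace ℝ E]

theorem sum_filter_add_lt_smul_eq_sum_pow_smul (n : ℕ) (a : ℕ → ℕ → E) (c : ℕ → ℝ) (y : ℝ) :
    ∑ ij ∈ (Finset.range n ×ˢ Finset.range n).filter (fun ij => ij.1 + ij.2 < n),
        (y ^ (ij.1 + ij.2) * c ij.1) • a ij.1 ij.2 =
      ∑ k ∈ Finset.range n, y ^ k • ∑ j ∈ Finset.range (k + 1), c j • a j (k - j) := by
  rw [sum_filter_add_lt_eq_sum_range n fun i j => (y ^ (i + j) * c i) • a i j]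
  refine Finset.sum_congr rfl fun k _ => ?_
  rw [Finset.smul_sum]
  refine Finset.sum_congr rfl fun j hj => ?_
  rw [Nat.add_sub_cancel' (Finset.mem_range_succ_iff.1 hj), mul_smul]

theorem abel_type_integral_expansion_general [CompleteSpace E]
    {U : Set (ℝ × ℝ)} (hU : IsOpen U) (h0U : ((0 : ℝ), (0 : ℝ)) ∈ U)
    {f : ℝ × ℝ → E} {m : ℕ∞} (hf : ContDiffOn ℝ m f U) {n : ℕ} {a : ℕ → ℕ → E}
    (hTaylor : (fun p : ℝ × ℝ =>
        f p - ∑ ij ∈ (Finset.range n ×ˢ Finset.range n).filter (fun ij => ij.1 + ij.2 < n),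
          (p.1 ^ ij.1 * p.2 ^ ij.2) • a ij.1 ij.2)
      =O[𝓝 (0, 0)] fun p => √(p.1 ^ 2 + p.2 ^ 2) ^ n)
    {F : ℝ → E} (hF0 : F 0 = (π / 2) • f (0, 0)) {ε : ℝ} (hε : 0 < ε)
    (hF : ∀ y ∈ Ioo 0 ε, F y = ∫ x in (0 : ℝ)..y, (√(y ^ 2 - x ^ 2))⁻¹ • f (x, y)) :
    ∃ ε' > 0, ε' ≤ ε ∧
      ContDiffOn ℝ m (abelIntegral f) (Ioo (-ε') ε') ∧
      EqOn F (abelIntegral f) (Ico 0 ε') ∧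
      (fun y => F y - ∑ k ∈ Finset.range n,
          y ^ k • ∑ j ∈ Finset.range (k + 1), abelMoment j • a j (k - j))
        =O[𝓝[>] 0] fun y => y ^ n := by
  have F_eq : EqOn F (abelIntegral f) (Ico 0 ε) := fun y hy => by
    rcases hy.1.eq_or_lt with rfl | hy0
    · rw [hF0, abelIntegral_zero]
    · rw [hF y ⟨hy0, hy.2⟩, abelIntegral_eq_integral_of_pos f hy0]
  have f_continuousAt : ∀ᶠ p in 𝓝 (0, 0), ContinuousAt f p :=
    (hU.eventually_mem h0U).mono fun p hp => hf.continuousOn.continuousAt (hU.mem_nhds hp)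
  obtain ⟨r, hr, hrU⟩ := Metric.eventually_nhds_iff_ball.1
    (eventually_forall_mul_prodMk_self (hU.eventually_mem h0U))
  refine ⟨min ε r, lt_min hε hr, min_le_left ε r, ?_,
    F_eq.mono (Ico_subset_Ico_right (min_le_left ε r)), ?_⟩
  · refine contDiffOn_abelIntegral hU hf isOpen_Ioo fun y hy => hrU y ?_
    exact mem_ball_zero_iff.2 ((abs_lt.2 hy).trans_le (min_le_right ε r))
  · have expansion := isBigO_abelIntegral_sub_polynomial _ a f_continuousAt
      (hTaylor.trans ((sqrt_sq_add_sq_isBigO_norm _).pow n))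
    simp only [sum_filter_add_lt_smul_eq_sum_pow_smul] at expansion
    refine (expansion.mono nhdsWithin_le_nhds).congr' ?_ EventuallyEq.rfl
    filter_upwards [Ioo_mem_nhdsGT hε] with y hy
    rw [F_eq ⟨hy.1.le, hy.2⟩]

end TaylorExpansion

/-- If `f` is smooth near `(0,0)` with Taylor expansion
`f(x,y) = Σ_{i+j ≤ n−1} a_{ij} x^i y^j + O((x²+y²)^{n/2})`, then the function
`F(y) = ∫₀^y f(x,y)/√(y²−x²) dx` (with `F(0) = (π/2) f(0,0)`) coincides near `0⁺` with the
smooth function `G(y) = ∫₀¹ f(ty,y)/√(1−t²) dt`, and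
`F(y) = b₀ + b₁ y + ⋯ + b_{n−1} y^{n−1} + O(yⁿ)` as `y → 0⁺`, where
`b_k = Σ_{j=0}^k a_{j,k−j} ∫₀¹ u^j/√(1−u²) du`. -/
theorem abel_type_integral_expansion
    (U : Set (ℝ × ℝ)) (hU : IsOpen U) (h0U : ((0 : ℝ), (0 : ℝ)) ∈ U)
    (f : ℝ × ℝ → ℝ) (hf : ContDiffOn ℝ (⊤ : ℕ∞) f U)
    (n : ℕ) (hn : 1 ≤ n) (a : ℕ → ℕ → ℝ)
    (hTaylor : (fun p : ℝ × ℝ =>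
        f p - ∑ ij ∈ (Finset.range n ×ˢ Finset.range n).filter (fun ij => ij.1 + ij.2 < n),
          a ij.1 ij.2 * p.1 ^ ij.1 * p.2 ^ ij.2)
      =O[nhds (0, 0)] (fun p : ℝ × ℝ => Real.sqrt (p.1 ^ 2 + p.2 ^ 2) ^ n))
    (F : ℝ → ℝ) (hF0 : F 0 = π / 2 * f (0, 0))
    (ε : ℝ) (hε : 0 < ε)
    (hF : ∀ y ∈ Ioo (0 : ℝ) ε, F y = ∫ x in (0:ℝ)..y, f (x, y) / Real.sqrt (y ^ 2 - x ^ 2)) :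
    ∃ ε' > 0, ε' ≤ ε ∧
      ContDiffOn ℝ (⊤ : ℕ∞) (fun y : ℝ => ∫ t in (0:ℝ)..1, f (t * y, y) / Real.sqrt (1 - t ^ 2))
        (Ioo (-ε') ε') ∧
      Set.EqOn F (fun y : ℝ => ∫ t in (0:ℝ)..1, f (t * y, y) / Real.sqrt (1 - t ^ 2))
        (Ico 0 ε') ∧
      (fun y : ℝ =>
          F y - ∑ k ∈ Finset.range n,
            (∑ j ∈ Finset.range (k + 1),
              a j (k - j) * ∫ u in (0:ℝ)..1, u ^ j / Real.sqrt (1 - u ^ 2)) * y ^ k)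
        =O[nhdsWithin 0 (Ioi 0)] (fun y : ℝ => y ^ n) := by
  simpa only [abelIntegral_eq_integral_div, abelMoment, smul_eq_mul, mul_comm] using
    abel_type_integral_expansion_general hU h0U hf
      (by simpa only [smul_eq_mul, mul_comm, mul_assoc] using hTaylor) hF0 hε
      (by simpa only [smul_eq_mul, div_eq_inv_mul] using hF)
end

section
/- Let g : (−ε, ε) → ℝ be a smooth function, and define f : (−ε,ε)² → ℝ by f(x,y) = (g(x)−g(y))/(x−y) for x ≠ y and f(x,x) = g'(x). Then f is smooth on (−ε,ε)², and if g(x) = Σ_{k=0}^{n} a_k x^k + O(|x|^{n+1}) as x → 0, then f(x,y) = Σ_{k=1}^{n} a_k Σ_{i+j=k−1} x^i y^j + O((x²+y²)^{n/2}) as (x,y) → (0,0). -/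
open Set Asymptotics Filter

/-!
By the fundamental theorem of calculus `f(x, y) = ∫₀¹ g'(x + t(y - x)) dt`, which is smooth in
`(x, y)` by differentiation under the integral sign.

For the expansion, write `g = P + h` with `P` the given polynomial. The divided difference is
linear, and on `P` it produces the stated sum. On `h` the mean value theorem bounds it by the size
of `h'` near `0`, so it suffices that `h' = O(xⁿ)`. A bound on a function says nothing about its
derivative in general; here `h = x q` with `q(x) = f_h(0, x)` smooth and `q = O(xⁿ)`, and
`h' = q + x q'` is estimated by induction on `n`.
-/

open Topology MeasureTheory Metric
open scoped ContDiff Convolution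

section ContDiff

variable {X E : Type*} [NormedAddCommGroup X] [NormedSpace ℝ X]
  [NormedAddCommGroup E] [NormedSpace ℝ E]

-- The integral is the value at `0` of the convolution of the indicator of the interval with the
-- integrand, cut off smoothly outside the interval.
theorem contDiff_intervalIntegral_of_contDiff_uncurry {F : X → ℝ → E} {n : ℕ∞}
    (hF : ContDiff ℝ n (Function.uncurry F)) (a b : ℝ) :
    ContDiff ℝ n fun x => ∫ t in a..b, F x t := by
  let ρ : ContDiffBump (0 : ℝ) := ⟨max |min a b| |max a b| + 1, max |min a b| |max a b| + 2,
    by positivity, by linarith⟩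
  let w : ℝ → ℝ := (uIoc a b).indicator 1
  let G : X → ℝ → E := fun x u => ρ u • F x (-u)
  have hw : LocallyIntegrable w volume :=
    ((integrable_indicator_iff measurableSet_uIoc).2
      (integrableOn_const measure_Ioc_lt_top.ne)).locallyIntegrable
  have hG : ContDiff ℝ n (Function.uncurry G) :=
    (ρ.contDiff.comp contDiff_snd).smul (hF.comp (contDiff_fst.prodMk contDiff_snd.neg))
  have hG_supp : ∀ x u, x ∈ univ → u ∉ closedBall (0 : ℝ) ρ.rOut → G x u = 0 := by
    intro x u _ hu
    have : ρ u = 0 := ρ.zero_of_le_dist (not_le.1 hu).le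
    simp only [G, this, zero_smul]
  have hconv : ContDiff ℝ n fun x => (w ⋆[ContinuousLinearMap.lsmul ℝ ℝ, volume] G x) 0 :=
    contDiffOn_univ.1 <| contDiffOn_convolution_right_with_param_comp _ contDiffOn_const
      isOpen_univ (isCompact_closedBall _ _) hG_supp hw hG.contDiffOn
  have hint : ∀ x, ∫ t in uIoc a b, F x t
      = (w ⋆[ContinuousLinearMap.lsmul ℝ ℝ, volume] G x) 0 := by
    intro x
    rw [convolution_def, ← integral_indicator measurableSet_uIoc]
    congr 1 with t
    by_cases ht : t ∈ uIoc a b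
    · have hρ : ρ (-t) = 1 := by
        refine ρ.one_of_mem_closedBall ?_
        have : |t| ≤ max |min a b| |max a b| := abs_le_max_abs_abs ht.1.le ht.2
        simpa only [mem_closedBall_zero_iff, norm_neg, Real.norm_eq_abs] using
          this.trans (by linarith)
      simp [w, G, ht, hρ]
    · simp [w, ht]
  simp only [intervalIntegral.intervalIntegral_eq_integral_uIoc, hint]
  exact hconv.const_smul _

theorem exists_contDiff_eventuallyEq_of_contDiffAt [HasContDiffBump X] {f : X → E} {c : X} {n : ℕ}
    (hf : ContDiffAt ℝ n f c) : ∃ g : X → E, ContDiff ℝ n g ∧ g =ᶠ[𝓝 c] f := by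
  obtain ⟨r, hr, hfr⟩ := eventually_nhds_iff_ball.1 (hf.eventually (by simp))
  let ρ : ContDiffBump c := ⟨r / 3, r / 2, by positivity, by linarith⟩
  refine ⟨fun x => ρ x • f x, contDiff_iff_contDiffAt.2 fun x => ?_, ?_⟩
  · by_cases hx : x ∈ tsupport ρ
    · rw [ρ.tsupport_eq] at hx
      exact ρ.contDiffAt.smul (hfr x (closedBall_subset_ball (half_lt_self hr) hx))
    · refine contDiffAt_const (c := 0) |>.congr_of_eventuallyEq ?_
      filter_upwards [notMem_tsupport_iff_eventuallyEq.1 hx] with y hy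
      simp [hy]
  · filter_upwards [ρ.eventuallyEq_one] with x hx
    simp [hx]

end ContDiff

section DSlope

variable {𝕜 E : Type*} [NontriviallyNormedField 𝕜] [NormedAddCommGroup E] [NormedSpace 𝕜 E]
  {f g : 𝕜 → E} {c : 𝕜}

theorem dslope_eq_of_continuousAt {q : 𝕜 → E} (hq : ContinuousAt q c)
    (h : ∀ x, (x - c) • q x = f x - f c) : dslope f c = q := by
  have hslope : ∀ x ≠ c, slope f c x = q x := fun x hx => by
    rw [slope_def_module, ← h, inv_smul_smul₀ (sub_ne_zero.2 hx)]
  have hderiv : HasDerivAt f (q c) c := by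
    refine hasDerivAt_iff_tendsto_slope.2 (hq.continuousWithinAt.tendsto.congr' ?_)
    filter_upwards [self_mem_nhdsWithin] with x hx using (hslope x hx).symm
  ext x
  rcases eq_or_ne x c with rfl | hx
  · rw [dslope_same, hderiv.deriv]
  · rw [dslope_of_ne f hx, hslope x hx]

theorem dslope_sub_of_differentiableAt (hf : DifferentiableAt 𝕜 f c)
    (hg : DifferentiableAt 𝕜 g c) : dslope (f - g) c = dslope f c - dslope g c := by
  refine dslope_eq_of_continuousAt
    ((continuousAt_dslope_same.2 hf).sub (continuousAt_dslope_same.2 hg)) fun x => ?_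
  simp only [Pi.sub_apply, smul_sub, sub_smul_dslope]
  abel

theorem isBigO_dslope_of_isBigO_pow_succ {n : ℕ} (hn : n ≠ 0)
    (hf : f =O[𝓝 c] fun x => ‖x - c‖ ^ (n + 1)) :
    dslope f c =O[𝓝 c] fun x => ‖x - c‖ ^ n := by
  have hfc : f c = 0 := hf.eq_zero_of_norm_pow n.succ_ne_zero
  have hderiv : HasDerivAt f 0 c := by
    simpa using (hf.hasFDerivAt (𝕜 := 𝕜) (by omega)).hasDerivAt
  obtain ⟨C, hC⟩ := hf.bound
  refine IsBigO.of_bound C ?_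
  filter_upwards [hC] with x hx
  rcases eq_or_ne x c with rfl | hxc
  · simp [hderiv.deriv, hn]
  · have hpos : 0 < ‖x - c‖ := norm_pos_iff.2 (sub_ne_zero.2 hxc)
    rw [← mul_le_mul_iff_right₀ hpos, ← norm_smul, sub_smul_dslope_of_zero hfc]
    calc ‖f x‖ ≤ C * ‖‖x - c‖ ^ (n + 1)‖ := hx
      _ = ‖x - c‖ * (C * ‖‖x - c‖ ^ n‖) := by simp only [norm_pow, norm_norm]; ring

theorem dslope_sum_pow_smul (s : Finset ℕ) (a : ℕ → E) (c x y : 𝕜) :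
    dslope (fun z => ∑ k ∈ s, (z - c) ^ k • a k) x y
      = ∑ k ∈ s, (∑ i ∈ Finset.range k, (x - c) ^ i * (y - c) ^ (k - 1 - i)) • a k := by
  refine congrFun (dslope_eq_of_continuousAt (q := fun y => ∑ k ∈ s,
    (∑ i ∈ Finset.range k, (x - c) ^ i * (y - c) ^ (k - 1 - i)) • a k) ?_ fun y => ?_) y
  · fun_prop
  · simp only [Finset.smul_sum, ← Finset.sum_sub_distrib, smul_smul, ← sub_smul]
    refine Finset.sum_congr rfl fun k _ => congrArg (· • a k) ?_
    linear_combination -(Commute.all (x - c) (y - c)).geom_sum₂_mul k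

theorem dslope_sub_sum_pow_smul {x : 𝕜} (hf : DifferentiableAt 𝕜 f x) (n : ℕ) (a : ℕ → E)
    (c y : 𝕜) :
    dslope (fun z => f z - ∑ k ∈ Finset.range (n + 1), (z - c) ^ k • a k) x y
      = dslope f x y - ∑ k ∈ Finset.Icc 1 n,
          (∑ i ∈ Finset.range k, (x - c) ^ i * (y - c) ^ (k - 1 - i)) • a k := by
  have hsub := congrFun (dslope_sub_of_differentiableAt hf
    (g := fun z => ∑ k ∈ Finset.range (n + 1), (z - c) ^ k • a k) (by fun_prop)) y
  rw [Pi.sub_apply, dslope_sum_pow_smul] at hsub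
  refine hsub.trans ?_
  rw [Finset.range_eq_Ico, Finset.sum_eq_sum_Ico_succ_bot n.succ_pos]
  simp [Finset.Ico_add_one_right_eq_Icc]

theorem eventuallyEq_uncurry_dslope (h : f =ᶠ[𝓝 c] g) :
    Function.uncurry (dslope f) =ᶠ[𝓝 (c, c)] Function.uncurry (dslope g) := by
  rw [nhds_prod_eq]
  filter_upwards [h.eventuallyEq_nhds.prod_mk h] with ⟨x, y⟩ ⟨hx, hy⟩
  rcases eq_or_ne y x with rfl | hxy
  · simpa using hx.deriv_eq
  · simp [dslope_of_ne _ hxy, slope_def_module, hx.eq_of_nhds, hy]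

end DSlope

section NormDSlope

variable {𝕜 E : Type*} [RCLike 𝕜] [NormedAddCommGroup E] [NormedSpace 𝕜 E]
  {f : 𝕜 → E} {s : Set 𝕜} {x y : 𝕜}

theorem norm_dslope_le_of_norm_deriv_le {C : ℝ} (hs : Convex ℝ s)
    (hf : ∀ z ∈ s, DifferentiableAt 𝕜 f z) (hC : ∀ z ∈ s, ‖deriv f z‖ ≤ C)
    (hx : x ∈ s) (hy : y ∈ s) : ‖dslope f x y‖ ≤ C := by
  rcases eq_or_ne y x with rfl | hxy
  · simpa using hC y hy
  · rw [← mul_le_mul_iff_of_pos_right (norm_pos_iff.2 (sub_ne_zero.2 hxy)), mul_comm,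
      ← norm_smul, sub_smul_dslope]
    exact hs.norm_image_sub_le_of_norm_deriv_le hf hC hx hy

theorem isBigO_uncurry_dslope_of_isBigO_deriv {c : 𝕜} {n : ℕ}
    (hf : ∀ᶠ x in 𝓝 c, DifferentiableAt 𝕜 f x)
    (hderiv : deriv f =O[𝓝 c] fun x => ‖x - c‖ ^ n) :
    Function.uncurry (dslope f) =O[𝓝 (c, c)] fun p => ‖p - (c, c)‖ ^ n := by
  obtain ⟨C, hC_pos, hC⟩ := hderiv.exists_pos
  obtain ⟨r, hr, hball⟩ := eventually_nhds_iff_ball.1 (hf.and hC.bound)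
  refine IsBigO.of_bound C ?_
  filter_upwards [ball_mem_nhds _ hr] with ⟨x, y⟩ hp
  set R := ‖(x, y) - (c, c)‖ with hR
  rw [mem_ball, dist_eq_norm] at hp
  have hmem : ∀ z ∈ closedBall c R, z ∈ ball c r := closedBall_subset_ball hp
  have hbound : ∀ z ∈ closedBall c R, ‖deriv f z‖ ≤ C * R ^ n := by
    intro z hz
    have hzR : ‖z - c‖ ≤ R := mem_closedBall_iff_norm.1 hz
    calc ‖deriv f z‖ ≤ C * ‖z - c‖ ^ n := by simpa using (hball z (hmem z hz)).2
      _ ≤ C * R ^ n := by gcongr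
  rw [norm_pow, hR, norm_norm]
  exact norm_dslope_le_of_norm_deriv_le (convex_closedBall c R)
    (fun z hz => (hball z (hmem z hz)).1) hbound
    (mem_closedBall_iff_norm.2 (norm_fst_le ((x, y) - (c, c))))
    (mem_closedBall_iff_norm.2 (norm_snd_le ((x, y) - (c, c))))

end NormDSlope

section Real

variable {E : Type*} [NormedAddCommGroup E] [NormedSpace ℝ E] {g : ℝ → E}

theorem contDiffAt_uncurry_dslope_of_ne {n : ℕ∞ω} {x y : ℝ} (hx : ContDiffAt ℝ n g x)
    (hy : ContDiffAt ℝ n g y) (hxy : x ≠ y) :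
    ContDiffAt ℝ n (Function.uncurry (dslope g)) (x, y) := by
  have hslope : ContDiffAt ℝ n (fun p : ℝ × ℝ => (p.2 - p.1)⁻¹ • (g p.2 - g p.1)) (x, y) :=
    ((contDiffAt_snd.sub contDiffAt_fst).inv (sub_ne_zero.2 hxy.symm)).smul
      ((hy.comp (x, y) contDiffAt_snd).sub (hx.comp (x, y) contDiffAt_fst))
  refine hslope.congr_of_eventuallyEq ?_
  filter_upwards [isOpen_ne_fun continuous_fst continuous_snd |>.mem_nhds hxy] with p hp
  simp [dslope_of_ne g hp.symm, slope_def_module, Function.uncurry]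

variable [CompleteSpace E]

theorem dslope_eq_integral_deriv {x y : ℝ} (hg : ContDiffOn ℝ 1 g (uIcc x y)) :
    dslope g x y = ∫ t in (0 : ℝ)..1, deriv g (x + (y - x) * t) := by
  rcases eq_or_ne y x with rfl | hxy
  · simp
  · have hne : y - x ≠ 0 := sub_ne_zero.2 hxy
    rw [dslope_of_ne g hxy, slope_def_module, intervalIntegral.integral_comp_add_mul _ hne,
      mul_zero, mul_one, add_zero, add_sub_cancel,
      intervalIntegral.integral_deriv_of_contDiffOn_uIcc hg]

theorem contDiff_uncurry_dslope {n : ℕ∞} (hg : ContDiff ℝ (n + 1) g) :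
    ContDiff ℝ n (Function.uncurry (dslope g)) := by
  have hderiv : ContDiff ℝ n (deriv g) := (contDiff_succ_iff_deriv.1 hg).2.2
  have hdslope : Function.uncurry (dslope g)
      = fun p : ℝ × ℝ => ∫ t in (0 : ℝ)..1, deriv g (p.1 + (p.2 - p.1) * t) :=
    funext fun p => dslope_eq_integral_deriv (hg.of_le le_add_self).contDiffOn
  rw [hdslope]
  exact contDiff_intervalIntegral_of_contDiff_uncurry (hderiv.comp (by fun_prop)) 0 1

theorem contDiffAt_uncurry_dslope {n : ℕ∞} {x y : ℝ} (hx : ContDiffAt ℝ (n + 1) g x)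
    (hy : ContDiffAt ℝ (n + 1) g y) : ContDiffAt ℝ n (Function.uncurry (dslope g)) (x, y) := by
  rcases eq_or_ne x y with rfl | hxy
  · refine contDiffWithinAt_iff_forall_nat_le.2 fun m hm => ?_
    obtain ⟨G, hG, hGg⟩ := exists_contDiff_eventuallyEq_of_contDiffAt (n := m + 1)
      (hx.of_le (by exact_mod_cast add_le_add_left hm 1))
    exact (contDiff_uncurry_dslope (by exact_mod_cast hG)).contDiffAt.congr_of_eventuallyEq
      (eventuallyEq_uncurry_dslope hGg.symm)
  · exact contDiffAt_uncurry_dslope_of_ne (hx.of_le le_self_add) (hy.of_le le_self_add) hxy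

theorem contDiffAt_dslope_same {n : ℕ∞} {c : ℝ} (hg : ContDiffAt ℝ (n + 1) g c) :
    ContDiffAt ℝ n (dslope g c) c :=
  (contDiffAt_uncurry_dslope hg hg).comp c (contDiffAt_const.prodMk contDiffAt_id)

theorem isBigO_deriv_of_isBigO_pow_succ {h : ℝ → E} {c : ℝ} {n : ℕ}
    (hh : ContDiffAt ℝ (n + 1) h c) (hO : h =O[𝓝 c] fun x => ‖x - c‖ ^ (n + 1)) :
    deriv h =O[𝓝 c] fun x => ‖x - c‖ ^ n := by
  induction n generalizing h with
  | zero =>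
    have hcont : ContinuousAt (deriv h) c :=
      (hh.derivWithin (m := 0) (by simp)).continuousAt
    simpa using hcont.isBigO_one ℝ
  | succ n ih =>
    set q := dslope h c
    have hq : ContDiffAt ℝ (n + 1) q c := by
      exact_mod_cast contDiffAt_dslope_same (n := (n + 1 : ℕ)) (by exact_mod_cast hh)
    have hqO : q =O[𝓝 c] fun x => ‖x - c‖ ^ (n + 1) :=
      isBigO_dslope_of_isBigO_pow_succ n.succ_ne_zero hO
    have hderiv : deriv h =ᶠ[𝓝 c] fun x => q x + (x - c) • deriv q x := by
      have hfact : h = fun x => (x - c) • q x :=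
        funext fun x => (sub_smul_dslope_of_zero (hO.eq_zero_of_norm_pow (by simp)) x).symm
      filter_upwards [hq.eventually (by exact_mod_cast WithTop.coe_ne_top)] with x hx
      rw [hfact, deriv_fun_smul (by fun_prop) (hx.differentiableAt (by simp))]
      simp [add_comm]
    refine (hqO.add ?_).congr' hderiv.symm EventuallyEq.rfl
    simpa only [pow_succ', smul_eq_mul] using!
      (isBigO_refl (fun x => x - c) (𝓝 c)).norm_right.smul (ih hq hqO)

theorem isBigO_uncurry_dslope_of_isBigO_pow_succ {c : ℝ} {n : ℕ} (hg : ContDiffAt ℝ (n + 1) g c)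
    (hO : g =O[𝓝 c] fun x => ‖x - c‖ ^ (n + 1)) :
    Function.uncurry (dslope g) =O[𝓝 (c, c)] fun p => ‖p - (c, c)‖ ^ n := by
  refine isBigO_uncurry_dslope_of_isBigO_deriv ?_ (isBigO_deriv_of_isBigO_pow_succ hg hO)
  filter_upwards [hg.eventually (by exact_mod_cast WithTop.coe_ne_top)] with x hx
  exact hx.differentiableAt (by simp)

end Real

theorem eq_uncurry_dslope {𝕜 : Type*} [NontriviallyNormedField 𝕜] {g : 𝕜 → 𝕜} {f : 𝕜 × 𝕜 → 𝕜}
    (hf_off : ∀ x y, x ≠ y → f (x, y) = (g x - g y) / (x - y))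
    (hf_diag : ∀ x, f (x, x) = deriv g x) : f = Function.uncurry (dslope g) := by
  ext ⟨x, y⟩
  rcases eq_or_ne x y with rfl | hxy
  · simp [hf_diag]
  · rw [hf_off x y hxy, Function.uncurry_apply_pair, dslope_of_ne g hxy.symm, slope_comm,
      slope_def_field]

theorem norm_prodMk_le_sqrt_add_sq (x y : ℝ) : ‖(x, y)‖ ≤ √(x ^ 2 + y ^ 2) :=
  max_le (Real.abs_le_sqrt (by linarith [sq_nonneg y]))
    (Real.abs_le_sqrt (by linarith [sq_nonneg x]))

theorem divided_difference_smooth_and_expansion_general {E : Type*} [NormedAddCommGroup E]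
    [NormedSpace ℝ E] [CompleteSpace E] {U : Set ℝ} (hU : IsOpen U) {g : ℝ → E} {m : ℕ∞}
    (hg : ContDiffOn ℝ (m + 1) g U) {c : ℝ} (hc : c ∈ U) {n : ℕ} (hn : n ≤ m) (a : ℕ → E)
    (hTaylor : (fun x => g x - ∑ k ∈ Finset.range (n + 1), (x - c) ^ k • a k)
      =O[𝓝 c] fun x => |x - c| ^ (n + 1)) :
    ContDiffOn ℝ m (Function.uncurry (dslope g)) (U ×ˢ U) ∧
      (fun p : ℝ × ℝ => dslope g p.1 p.2 - ∑ k ∈ Finset.Icc 1 n,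
          (∑ i ∈ Finset.range k, (p.1 - c) ^ i * (p.2 - c) ^ (k - 1 - i)) • a k)
        =O[𝓝 (c, c)] fun p => √((p.1 - c) ^ 2 + (p.2 - c) ^ 2) ^ n := by
  have hgU : ∀ x ∈ U, ContDiffAt ℝ (m + 1) g x := fun x hx => hg.contDiffAt (hU.mem_nhds hx)
  refine ⟨fun p hp => (contDiffAt_uncurry_dslope (hgU _ hp.1) (hgU _ hp.2)).contDiffWithinAt, ?_⟩
  have hgc : ContDiffAt ℝ (n + 1) g c := (hgU c hc).of_le (by exact_mod_cast add_le_add_left hn 1)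
  have hremainder := isBigO_uncurry_dslope_of_isBigO_pow_succ (hgc.sub (by fun_prop)) hTaylor
  have hdecomp : ∀ᶠ p : ℝ × ℝ in 𝓝 (c, c), dslope
      (fun x => g x - ∑ k ∈ Finset.range (n + 1), (x - c) ^ k • a k) p.1 p.2
      = dslope g p.1 p.2 - ∑ k ∈ Finset.Icc 1 n,
          (∑ i ∈ Finset.range k, (p.1 - c) ^ i * (p.2 - c) ^ (k - 1 - i)) • a k := by
    filter_upwards [continuousAt_fst.eventually_mem (hU.mem_nhds hc)] with p hp
    exact dslope_sub_sum_pow_smul ((hgU _ hp).differentiableAt (by simp)) n a c p.2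
  refine (hremainder.congr' hdecomp EventuallyEq.rfl).trans (IsBigO.of_norm_le fun p => ?_)
  rw [norm_pow, norm_norm]
  exact pow_le_pow_left₀ (norm_nonneg _) (norm_prodMk_le_sqrt_add_sq _ _) n

/-- The first divided difference `f(x,y) = (g(x)−g(y))/(x−y)` (extended to the diagonal by
`g'`) of a smooth function `g` on `(−ε,ε)` is smooth on `(−ε,ε)²`, and if
`g(x) = Σ_{k=0}^n a_k x^k + O(|x|^{n+1})` then
`f(x,y) = Σ_{k=1}^n a_k Σ_{i+j=k−1} x^i y^j + O((x²+y²)^{n/2})`. -/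
theorem divided_difference_smooth_and_expansion
    (ε : ℝ) (hε : 0 < ε) (g : ℝ → ℝ) (hg : ContDiffOn ℝ (⊤ : ℕ∞) g (Ioo (-ε) ε))
    (f : ℝ × ℝ → ℝ)
    (hf_off : ∀ x y : ℝ, x ≠ y → f (x, y) = (g x - g y) / (x - y))
    (hf_diag : ∀ x : ℝ, f (x, x) = deriv g x)
    (n : ℕ) (a : ℕ → ℝ)
    (hTaylor : (fun x : ℝ => g x - ∑ k ∈ Finset.range (n + 1), a k * x ^ k)
      =O[nhds 0] (fun x : ℝ => |x| ^ (n + 1))) :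
    ContDiffOn ℝ (⊤ : ℕ∞) f (Ioo (-ε) ε ×ˢ Ioo (-ε) ε) ∧
      (fun p : ℝ × ℝ =>
          f p - ∑ k ∈ Finset.Icc 1 n,
            a k * ∑ i ∈ Finset.range k, p.1 ^ i * p.2 ^ (k - 1 - i))
        =O[nhds (0, 0)] (fun p : ℝ × ℝ => Real.sqrt (p.1 ^ 2 + p.2 ^ 2) ^ n) := by
  obtain rfl := eq_uncurry_dslope hf_off hf_diag
  simpa [mul_comm (a _), Function.uncurry] using
    divided_difference_smooth_and_expansion_general isOpen_Ioo (m := ⊤) hg (c := 0)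
      (by simpa using hε) le_top a (by simpa [mul_comm (a _)] using hTaylor)
end

section
/- Let a, b, α > 0 and β ∈ ℝ, let ψ be a smooth real function on a neighborhood of 0 with ψ(0)=b, ψ'(0)=−α, ψ''(0)=2β, and define m(r) := ψ((a−r)²) for r in a neighborhood of a; for each ν < b sufficiently close to b let R(ν) < a be the unique solution near a of m(R)=ν, and define φ(ν) := 2∫_{R(ν)}^{a} ν / (m(r)√(m(r)²−ν²)) dr. Then, as ν → b⁻, φ(ν) = π/√(2αb) + ((6bβ − α²)π / (8√2 · b^{3/2} · α^{5/2}))·(b−ν) + O((b−ν)²). -/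
open Set Asymptotics Filter Real

/-!
With `U = (a - R ν) ^ 2`, so that `ψ U = ν`, the substitution `r = a - √U cos θ` removes the
singularity: `φ ν` becomes `2 ∫ θ in 0..π / 2, K (U cos² θ, U)`, where
`K (u, U) = ψ U / (ψ u * √((ψ u ^ 2 - ψ U ^ 2) / (U - u)))`. The difference quotient of `ψ ^ 2` has
a first-order expansion at `(0, 0)`, uniformly off the diagonal, hence so does
`K (u, U) = c + c₁ u + c₂ U + O(U ^ 2)`. As `cos²` has mean `1 / 2` on `[0, π / 2]`, this gives
`φ ν = π (c + (c₁ / 2 + c₂) U) + O(U ^ 2)`, and `b - ν = α U + O(U ^ 2)` turns powers of `U` into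
powers of `b - ν`.
-/

open MeasureTheory
open scoped Topology Interval
open ContinuousLinearMap (fst snd)

theorem isBigO_sub_of_hasDerivAt_isBigO {F : Type*} [NormedAddCommGroup F] [NormedSpace ℝ F]
    {f f' : ℝ → F} {x₀ : ℝ} {n : ℕ} (hf : ∀ᶠ x in 𝓝 x₀, HasDerivAt f (f' x) x)
    (hf' : f' =O[𝓝 x₀] fun x => (x - x₀) ^ n) :
    (fun p : ℝ × ℝ => f p.2 - f p.1) =O[𝓝 (x₀, x₀)]
      fun p => ‖p - (x₀, x₀)‖ ^ n * (p.2 - p.1) := by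
  obtain ⟨C, hC, hbound⟩ := hf'.exists_nonneg
  obtain ⟨ε, hε, hball⟩ := Metric.eventually_nhds_iff.1 (hf.and hbound.bound)
  refine IsBigO.of_bound C ?_
  filter_upwards [Metric.ball_mem_nhds (x₀, x₀) hε] with p hp
  set ρ := ‖p - (x₀, x₀)‖ with hρ
  have hρε : ρ < ε := by rwa [hρ, ← dist_eq_norm]
  have hderiv_le : ∀ x ∈ Metric.closedBall x₀ ρ, ‖f' x‖ ≤ C * ρ ^ n := fun x hx => by
    refine (hball (lt_of_le_of_lt hx hρε)).2.trans ?_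
    rw [norm_pow, ← dist_eq_norm]
    gcongr
    exact hx
  have hmean := (convex_closedBall x₀ ρ).norm_image_sub_le_of_norm_hasDerivWithin_le
    (fun x hx => (hball (lt_of_le_of_lt hx hρε)).1.hasDerivWithinAt) hderiv_le
    (mem_closedBall_iff_norm.2 (norm_fst_le (p - (x₀, x₀))))
    (mem_closedBall_iff_norm.2 (norm_snd_le (p - (x₀, x₀))))
  simpa only [norm_mul, norm_pow, norm_norm, mul_assoc, hρ] using hmean

theorem isBigO_sub_tangent {f : ℝ → ℝ} {x₀ : ℝ} (hf : ContDiffAt ℝ 2 f x₀) :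
    (fun x => f x - f x₀ - deriv f x₀ * (x - x₀)) =O[𝓝 x₀] fun x => (x - x₀) ^ 2 := by
  have hderiv : ∀ᶠ x in 𝓝 x₀, HasDerivAt (fun x => f x - f x₀ - deriv f x₀ * (x - x₀))
      (deriv f x - deriv f x₀) x := by
    filter_upwards [hf.eventually (by simp)] with x hx
    have hfx := (hx.differentiableAt (by simp)).hasDerivAt
    exact ((hfx.sub_const (f x₀)).sub
      (((hasDerivAt_id x).sub_const x₀).const_mul (deriv f x₀))).congr_deriv (by simp)
  have hderiv_diff : DifferentiableAt ℝ (deriv f) x₀ :=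
    (hf.derivWithin (m := 1) (by norm_num)).differentiableAt (by simp)
  have hincr := isBigO_sub_of_hasDerivAt_isBigO (n := 1) hderiv
    (by simpa using hderiv_diff.isBigO_sub)
  have hpair : Tendsto (fun x => (x₀, x)) (𝓝 x₀) (𝓝 (x₀, x₀)) :=
    (Continuous.prodMk_right x₀).tendsto x₀
  refine ((hincr.comp_tendsto hpair).congr_left fun x => ?_).trans
    (isBigO_of_le _ fun x => ?_)
  · simp
  · simp [sq]

theorem isBigO_sub_affine_image {f g : ℝ → ℝ} {x₀ A B : ℝ} {l : Filter ℝ} (hl : l ≤ 𝓝 x₀)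
    (hf : ContDiffAt ℝ 2 f x₀) (hf' : deriv f x₀ ≠ 0)
    (hg : (fun x => g x - (A + B * (x - x₀))) =O[l] fun x => (x - x₀) ^ 2) :
    (fun x => g x - (A + B / deriv f x₀ * (f x - f x₀))) =O[l] fun x => (f x - f x₀) ^ 2 := by
  have hsub : (fun x => x - x₀) =O[l] fun x => f x - f x₀ :=
    ((hf.differentiableAt (by simp)).hasDerivAt.isTheta_sub hf').isBigO_symm.comp_tendsto
      (k := fun x => (x, x₀)) ((tendsto_id.mono_left hl).prodMk (tendsto_pure.2 (by simp)))
  refine ((hg.sub (((isBigO_sub_tangent hf).mono hl).const_mul_left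
    (B / deriv f x₀))).trans (hsub.pow 2)).congr_left fun x => ?_
  field_simp
  ring

section AffineApprox

variable {E : Type*} [NormedAddCommGroup E] [NormedSpace ℝ E]

/-- On `s` near `x₀`, the function `f` agrees with `x ↦ c + L (x - x₀)` up to `O(‖x - x₀‖ ^ 2)`.
The constant `c` is a parameter rather than `f x₀`, so that `f` may be a difference quotient and
`x₀` a point of the diagonal. -/
def HasAffineApproxWithinAt (f : E → ℝ) (c : ℝ) (L : E →L[ℝ] ℝ) (s : Set E) (x₀ : E) : Prop :=
  (fun x => f x - (c + L (x - x₀))) =O[𝓝[s] x₀] fun x => ‖x - x₀‖ ^ 2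

namespace HasAffineApproxWithinAt

variable {f g : E → ℝ} {c d : ℝ} {L M : E →L[ℝ] ℝ} {s : Set E} {x₀ : E}

theorem of_clm (L : E →L[ℝ] ℝ) (s : Set E) (x₀ : E) :
    HasAffineApproxWithinAt L (L x₀) L s x₀ := by
  simpa [HasAffineApproxWithinAt] using isBigO_zero _ _

theorem isBigO_sub (hf : HasAffineApproxWithinAt f c L s x₀) :
    (fun x => f x - c) =O[𝓝[s] x₀] fun x => ‖x - x₀‖ := by
  have hsq : (fun x => ‖x - x₀‖ ^ 2) =O[𝓝[s] x₀] fun x => ‖x - x₀‖ :=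
    ((isLittleO_pow_sub_sub x₀ one_lt_two).isBigO.mono nhdsWithin_le_nhds).norm_right
  have hlin : (fun x => L (x - x₀)) =O[𝓝[s] x₀] fun x => ‖x - x₀‖ :=
    (L.isBigO_sub _ x₀).norm_right
  exact ((hf.trans hsq).add hlin).congr_left fun x => by ring

theorem tendsto (hf : HasAffineApproxWithinAt f c L s x₀) : Tendsto f (𝓝[s] x₀) (𝓝 c) := by
  refine tendsto_sub_nhds_zero_iff.1 (hf.isBigO_sub.trans_tendsto ?_)
  exact (tendsto_norm_sub_self x₀).mono_left nhdsWithin_le_nhds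

theorem mul (hf : HasAffineApproxWithinAt f c L s x₀) (hg : HasAffineApproxWithinAt g d M s x₀) :
    HasAffineApproxWithinAt (fun x => f x * g x) (c * d) (c • M + d • L) s x₀ := by
  have hprod : (fun x => (f x - c) * (g x - d)) =O[𝓝[s] x₀] fun x => ‖x - x₀‖ ^ 2 :=
    (hf.isBigO_sub.mul hg.isBigO_sub).congr_right fun x => (sq _).symm
  refine (hprod.add ((hg.const_mul_left c).add (hf.const_mul_left d))).congr_left fun x => ?_
  simp only [add_apply, smul_apply, smul_eq_mul]
  ring

theorem comp {h : ℝ → ℝ} (hh : ContDiffAt ℝ 2 h c) (hf : HasAffineApproxWithinAt f c L s x₀) :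
    HasAffineApproxWithinAt (fun x => h (f x)) (h c) (deriv h c • L) s x₀ := by
  have htangent := ((isBigO_sub_tangent hh).comp_tendsto hf.tendsto).trans (hf.isBigO_sub.pow 2)
  refine (htangent.add (hf.const_mul_left (deriv h c))).congr_left fun x => ?_
  simp only [Function.comp_apply, smul_apply, smul_eq_mul]
  ring

end HasAffineApproxWithinAt

end AffineApprox

theorem hasAffineApproxWithinAt_slope {f : ℝ → ℝ} {x₀ : ℝ} (hf : ContDiffAt ℝ 3 f x₀) :
    HasAffineApproxWithinAt (fun p : ℝ × ℝ => slope f p.1 p.2) (deriv f x₀)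
      ((deriv (deriv f) x₀ / 2) • (fst ℝ ℝ ℝ + snd ℝ ℝ ℝ)) {p | p.1 ≠ p.2} (x₀, x₀) := by
  set e : ℝ → ℝ := fun x =>
    f x - deriv f x₀ * (x - x₀) - deriv (deriv f) x₀ / 2 * (x - x₀) ^ 2 with he
  have hderiv : ∀ᶠ x in 𝓝 x₀, HasDerivAt e
      (deriv f x - deriv f x₀ - deriv (deriv f) x₀ * (x - x₀)) x := by
    filter_upwards [hf.eventually (by simp)] with x hx
    have hsub := (hasDerivAt_id x).sub_const x₀
    refine (((hx.differentiableAt (by simp)).hasDerivAt.sub (hsub.const_mul (deriv f x₀))).sub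
      ((hsub.pow 2).const_mul (deriv (deriv f) x₀ / 2))).congr_deriv ?_
    simp only [id_eq]
    ring
  have hincr := isBigO_sub_of_hasDerivAt_isBigO hderiv
    (isBigO_sub_tangent (hf.derivWithin (m := 2) (by norm_num)))
  refine ((hincr.mono nhdsWithin_le_nhds).mul
    (isBigO_refl (fun p : ℝ × ℝ => (p.2 - p.1)⁻¹) _)).congr' ?_ ?_
  all_goals
    filter_upwards [self_mem_nhdsWithin] with p (hp : p.1 ≠ p.2)
    have hp' : p.2 - p.1 ≠ 0 := sub_ne_zero.2 hp.symm
  · simp only [he, slope_def_field, smul_apply, add_apply,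
      ContinuousLinearMap.coe_fst', ContinuousLinearMap.coe_snd', Prod.fst_sub, Prod.snd_sub,
      smul_eq_mul]
    field_simp
    ring
  · field_simp

/-- The integrand of `φ` after the substitution `r = a - ρ cos θ`, in the variables
`u = (a - r) ^ 2` and `U = ρ ^ 2`. -/
noncomputable def angleKernel (ψ : ℝ → ℝ) (u U : ℝ) : ℝ :=
  ψ U / (ψ u * √(slope (fun x => -ψ x ^ 2) u U))

theorem measurable_angleKernel {ψ u : ℝ → ℝ} (hu : Measurable u) (hψu : Measurable (ψ ∘ u))
    (U : ℝ) : Measurable fun θ => angleKernel ψ (u θ) U := by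
  simp only [angleKernel, slope_def_field]
  exact ((hψu.mul (((hψu.pow_const 2).neg.const_sub _).div (hu.const_sub U)).sqrt)).const_div _

theorem integral_eq_integral_angleKernel (ψ : ℝ → ℝ) (a : ℝ) {ρ : ℝ} (hρ : 0 < ρ) :
    ∫ r in (a - ρ)..a, ψ (ρ ^ 2) / (ψ ((a - r) ^ 2) * √(ψ ((a - r) ^ 2) ^ 2 - ψ (ρ ^ 2) ^ 2)) =
      ∫ θ in 0..π / 2, angleKernel ψ (ρ ^ 2 * cos θ ^ 2) (ρ ^ 2) := by
  have hsin : ∀ θ ∈ Ioc 0 (π / 2), 0 < sin θ := fun θ hθ =>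
    sin_pos_of_pos_of_lt_pi hθ.1 (by linarith [hθ.2, pi_pos])
  have hsubst := intervalIntegral.integral_comp_mul_deriv_of_deriv_nonneg (a := 0) (b := π / 2)
    (f := fun θ => a - ρ * cos θ) (f' := fun θ => ρ * sin θ)
    (g := fun r => ψ (ρ ^ 2) / (ψ ((a - r) ^ 2) * √(ψ ((a - r) ^ 2) ^ 2 - ψ (ρ ^ 2) ^ 2)))
    (by fun_prop)
    (fun θ _ => by simpa using ((hasDerivAt_cos θ).const_mul ρ).const_sub a)
    (fun θ hθ => by
      rw [min_eq_left pi_div_two_pos.le, max_eq_right pi_div_two_pos.le] at hθ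
      exact mul_nonneg hρ.le (hsin θ (Ioo_subset_Ioc_self hθ)).le)
  simp only [cos_zero, mul_one, cos_pi_div_two, mul_zero, sub_zero] at hsubst
  rw [← hsubst]
  refine intervalIntegral.integral_congr_uIoo fun θ hθ => ?_
  rw [uIoo_of_le pi_div_two_pos.le] at hθ
  have hρsin : 0 < ρ * sin θ := mul_pos hρ (hsin θ (Ioo_subset_Ioc_self hθ))
  have hgap : ρ ^ 2 - ρ ^ 2 * cos θ ^ 2 = (ρ * sin θ) ^ 2 := by
    rw [mul_pow, sin_sq]
    ring
  simp only [Function.comp_apply, sub_sub_cancel, mul_pow ρ (cos θ), angleKernel, slope_def_field,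
    hgap, neg_sub_neg]
  rw [Real.sqrt_div' _ (sq_nonneg _), Real.sqrt_sq hρsin.le, mul_div_assoc', div_div_eq_mul_div,
    div_mul_eq_mul_div]

theorem norm_integral_sub_integral_le_of_norm_sub_le_const {E : Type*} [NormedAddCommGroup E]
    [NormedSpace ℝ E] {f g : ℝ → E} {a b C : ℝ}
    (hf : AEStronglyMeasurable f (volume.restrict (Ι a b))) (hg : IntervalIntegrable g volume a b)
    (hfg : ∀ x ∈ Ι a b, ‖f x - g x‖ ≤ C) :
    ‖(∫ x in a..b, f x) - ∫ x in a..b, g x‖ ≤ C * |b - a| := by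
  have hsub : IntervalIntegrable (fun x => f x - g x) volume a b :=
    (intervalIntegrable_const (c := C)).mono_fun' (hf.sub hg.def'.aestronglyMeasurable)
      (ae_restrict_of_forall_mem measurableSet_uIoc hfg)
  have hf_int : IntervalIntegrable f volume a b := by simpa using hsub.add hg
  rw [← intervalIntegral.integral_sub hf_int hg]
  exact intervalIntegral.norm_integral_le_of_norm_le_const hfg

theorem integral_affine_mul_cos_sq (c U : ℝ) (L : ℝ × ℝ →L[ℝ] ℝ) :
    ∫ θ in 0..π / 2, (c + L (U * cos θ ^ 2, U)) = π / 2 * (c + U * L (1 / 2, 1)) := by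
  obtain ⟨p, q, hL⟩ : ∃ p q, ∀ x y : ℝ, L (x, y) = x * p + y * q := by
    refine ⟨L (1, 0), L (0, 1), fun x y => ?_⟩
    rw [← smul_eq_mul, ← smul_eq_mul, ← map_smul, ← map_smul, ← map_add]
    simp
  simp only [hL]
  rw [intervalIntegral.integral_add (by simp) (by apply Continuous.intervalIntegrable; fun_prop),
    intervalIntegral.integral_add (by apply Continuous.intervalIntegrable; fun_prop) (by simp)]
  simp only [intervalIntegral.integral_mul_const, intervalIntegral.integral_const_mul,
    intervalIntegral.integral_const, integral_cos_sq, cos_pi_div_two, sin_zero, smul_eq_mul]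
  ring

theorem HasAffineApproxWithinAt.exists_norm_sub_le_mul_cos_sq {K : ℝ × ℝ → ℝ} {c : ℝ}
    {L : ℝ × ℝ →L[ℝ] ℝ} (hK : HasAffineApproxWithinAt K c L {p | p.1 ≠ p.2} (0, 0)) :
    ∃ C, ∀ᶠ U in 𝓝[>] 0, ∀ θ ∈ Ι 0 (π / 2),
      ‖K (U * cos θ ^ 2, U) - (c + L (U * cos θ ^ 2, U))‖ ≤ C * U ^ 2 := by
  obtain ⟨C, hC⟩ := hK.bound
  obtain ⟨ε, hε, hball⟩ := Metric.eventually_nhds_iff.1 (eventually_nhdsWithin_iff.1 hC)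
  refine ⟨C, ?_⟩
  filter_upwards [Ioo_mem_nhdsGT hε] with U hU θ hθ
  rw [uIoc_of_le pi_div_two_pos.le] at hθ
  have hsin : 0 < sin θ := sin_pos_of_pos_of_lt_pi hθ.1 (by linarith [hθ.2, pi_pos])
  have hlt : U * cos θ ^ 2 < U := by nlinarith [sin_sq_add_cos_sq θ, hU.1, pow_pos hsin 2]
  have hnorm : ‖(U * cos θ ^ 2, U)‖ = U := by
    rw [Prod.norm_mk, Real.norm_of_nonneg hU.1.le,
      Real.norm_of_nonneg (mul_nonneg hU.1.le (sq_nonneg _)), max_eq_right hlt.le]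
  have hdist : dist (U * cos θ ^ 2, U) (0, 0) < ε := by
    rw [Prod.mk_zero_zero, dist_zero_right, hnorm]
    exact hU.2
  simpa [Prod.mk_zero_zero, hnorm] using hball hdist hlt.ne

theorem HasAffineApproxWithinAt.integral_mul_cos_sq_isBigO {K : ℝ × ℝ → ℝ} {c : ℝ}
    {L : ℝ × ℝ →L[ℝ] ℝ} (hK : HasAffineApproxWithinAt K c L {p | p.1 ≠ p.2} (0, 0))
    (hmeas : ∀ᶠ U in 𝓝[>] 0, Measurable fun θ => K (U * cos θ ^ 2, U)) :
    (fun U => (∫ θ in 0..π / 2, K (U * cos θ ^ 2, U)) - π / 2 * (c + U * L (1 / 2, 1)))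
      =O[𝓝[>] 0] fun U => U ^ 2 := by
  obtain ⟨C, hC⟩ := hK.exists_norm_sub_le_mul_cos_sq
  refine IsBigO.of_bound (C * (π / 2)) ?_
  filter_upwards [hC, hmeas] with U hU hmeasU
  have hint : IntervalIntegrable (fun θ => c + L (U * cos θ ^ 2, U)) volume 0 (π / 2) := by
    apply Continuous.intervalIntegrable
    fun_prop
  calc ‖(∫ θ in 0..π / 2, K (U * cos θ ^ 2, U)) - π / 2 * (c + U * L (1 / 2, 1))‖
      ≤ C * U ^ 2 * |π / 2 - 0| := by
        rw [← integral_affine_mul_cos_sq]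
        exact norm_integral_sub_integral_le_of_norm_sub_le_const
          hmeasU.aestronglyMeasurable hint hU
    _ = C * (π / 2) * ‖U ^ 2‖ := by
        rw [sub_zero, abs_of_pos pi_div_two_pos, norm_of_nonneg (sq_nonneg U)]
        ring

theorem deriv_inv_sqrt {x : ℝ} (hx : 0 < x) : deriv (fun y => (√y)⁻¹) x = -(2 * x * √x)⁻¹ := by
  have hsqrt : √x ≠ 0 := (sqrt_pos.2 hx).ne'
  rw [((hasDerivAt_sqrt hx.ne').fun_inv hsqrt).deriv, sq_sqrt hx.le]
  field_simp

theorem sqrt_two_mul_rpow_mul_rpow {b α : ℝ} (hb : 0 < b) (hα : 0 < α) :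
    √2 * b ^ ((3 : ℝ) / 2) * α ^ ((5 : ℝ) / 2) = α ^ 2 * b * √(2 * α * b) := by
  have hb32 : b ^ ((3 : ℝ) / 2) = b * √b := by
    rw [show (3 : ℝ) / 2 = 1 + 1 / 2 by norm_num, rpow_add hb, rpow_one, sqrt_eq_rpow]
  have hα52 : α ^ ((5 : ℝ) / 2) = α ^ 2 * √α := by
    rw [show (5 : ℝ) / 2 = (2 : ℕ) + 1 / 2 by norm_num, rpow_add hα, rpow_natCast, sqrt_eq_rpow]
  rw [hb32, hα52, sqrt_mul (by positivity), sqrt_mul (by positivity)]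
  ring

section PsiJet

variable {b α β : ℝ} {ψ : ℝ → ℝ}

theorem hasAffineApproxWithinAt_slope_neg_sq (hψ : ContDiffAt ℝ 3 ψ 0) (hψ0 : ψ 0 = b)
    (hψ1 : deriv ψ 0 = -α) (hψ2 : deriv (deriv ψ) 0 = 2 * β) :
    HasAffineApproxWithinAt (fun p : ℝ × ℝ => slope (fun x => -ψ x ^ 2) p.1 p.2) (2 * α * b)
      (-(α ^ 2 + 2 * b * β) • (fst ℝ ℝ ℝ + snd ℝ ℝ ℝ)) {p | p.1 ≠ p.2} (0, 0) := by
  have hderiv : deriv (fun x => -ψ x ^ 2) =ᶠ[𝓝 0] fun x => -(2 * ψ x * deriv ψ x) := by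
    filter_upwards [hψ.eventually (by simp)] with x hx
    refine ((hx.differentiableAt (by simp)).hasDerivAt.pow 2).fun_neg.deriv.trans ?_
    simp
  have hderiv2 : deriv (deriv fun x => -ψ x ^ 2) 0 = -(2 * (α ^ 2 + 2 * b * β)) := by
    have hψ' : DifferentiableAt ℝ (deriv ψ) 0 :=
      (hψ.derivWithin (m := 2) (by norm_num)).differentiableAt (by simp)
    have hψψ' := (((hψ.differentiableAt (by simp)).hasDerivAt.const_mul 2).mul hψ'.hasDerivAt).neg
    refine hderiv.deriv_eq.trans (hψψ'.deriv.trans ?_)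
    rw [hψ0, hψ1, hψ2]
    ring
  convert hasAffineApproxWithinAt_slope (hψ.pow 2).neg using 1
  · rw [hderiv.eq_of_nhds, hψ0, hψ1]
    ring
  · rw [hderiv2, neg_div, mul_div_cancel_left₀ _ two_ne_zero]

theorem hasAffineApproxWithinAt_angleKernel (hb : 0 < b) (hα : 0 < α) (hψ : ContDiffAt ℝ 3 ψ 0)
    (hψ0 : ψ 0 = b) (hψ1 : deriv ψ 0 = -α) (hψ2 : deriv (deriv ψ) 0 = 2 * β) :
    HasAffineApproxWithinAt (fun p : ℝ × ℝ => angleKernel ψ p.1 p.2) (√(2 * α * b))⁻¹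
      (((5 * α ^ 2 + 2 * b * β) / (4 * α * b * √(2 * α * b))) • fst ℝ ℝ ℝ +
        ((2 * b * β - 3 * α ^ 2) / (4 * α * b * √(2 * α * b))) • snd ℝ ℝ ℝ)
      {p | p.1 ≠ p.2} (0, 0) := by
  have hαb : 0 < 2 * α * b := by positivity
  have hsqrt : 0 < √(2 * α * b) := sqrt_pos.2 hαb
  have hψC2 : ContDiffAt ℝ 2 ψ 0 := hψ.of_le (by norm_num)
  have hψ_ne : ψ 0 ≠ 0 := hψ0.trans_ne hb.ne'
  have hψinv : ContDiffAt ℝ 2 (fun x => (ψ x)⁻¹) 0 := hψC2.inv hψ_ne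
  have hψinv' : deriv (fun x => (ψ x)⁻¹) 0 = α / b ^ 2 := by
    rw [deriv_fun_inv'' (hψC2.differentiableAt (by simp)) hψ_ne, hψ0, hψ1, neg_neg]
  have hsnd := HasAffineApproxWithinAt.comp hψC2
    (HasAffineApproxWithinAt.of_clm (snd ℝ ℝ ℝ) {p | p.1 ≠ p.2} (0, 0))
  have hfst := HasAffineApproxWithinAt.comp hψinv
    (HasAffineApproxWithinAt.of_clm (fst ℝ ℝ ℝ) {p | p.1 ≠ p.2} (0, 0))
  have hslope := HasAffineApproxWithinAt.comp (h := fun x => (√x)⁻¹)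
    ((contDiffAt_sqrt hαb.ne').inv hsqrt.ne')
    (hasAffineApproxWithinAt_slope_neg_sq hψ hψ0 hψ1 hψ2)
  convert hsnd.mul (hfst.mul hslope) using 1
  · ext p
    simp [angleKernel, div_eq_mul_inv, mul_comm]
  · simp [hψ0, hb.ne']
  · refine ContinuousLinearMap.ext fun p => ?_
    simp only [add_apply, smul_apply, smul_eq_mul, ContinuousLinearMap.coe_fst',
      ContinuousLinearMap.coe_snd', hψ0, hψ1, hψinv', deriv_inv_sqrt hαb]
    field_simp
    ring

theorem eventually_measurable_angleKernel (hψ : ∀ᶠ x in 𝓝 0, ContinuousAt ψ x) :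
    ∀ᶠ U in 𝓝[>] 0, Measurable fun θ => angleKernel ψ (U * cos θ ^ 2) U := by
  obtain ⟨ε, hε, hball⟩ := Metric.eventually_nhds_iff.1 hψ
  filter_upwards [Ioo_mem_nhdsGT hε] with U hU
  have hψcos : Continuous (ψ ∘ fun θ => U * cos θ ^ 2) :=
    continuous_iff_continuousAt.2 fun θ => by
      have hcont : ContinuousAt ψ (U * cos θ ^ 2) := hball (by
        rw [dist_zero_right, norm_of_nonneg (mul_nonneg hU.1.le (sq_nonneg _))]
        exact (mul_le_of_le_one_right hU.1.le (cos_sq_le_one θ)).trans_lt hU.2)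
      exact ContinuousAt.comp (f := fun θ => U * cos θ ^ 2) hcont (by fun_prop)
  exact measurable_angleKernel (by fun_prop) hψcos.measurable U

theorem two_mul_integral_angleKernel_isBigO (hb : 0 < b) (hα : 0 < α) (hψ : ContDiffAt ℝ 3 ψ 0)
    (hψ0 : ψ 0 = b) (hψ1 : deriv ψ 0 = -α) (hψ2 : deriv (deriv ψ) 0 = 2 * β) :
    (fun U => 2 * (∫ θ in 0..π / 2, angleKernel ψ (U * cos θ ^ 2) U) -
        (π / √(2 * α * b) + π * (6 * b * β - α ^ 2) / (8 * α * b * √(2 * α * b)) * U))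
      =O[𝓝[>] 0] fun U => U ^ 2 := by
  have hcont : ∀ᶠ x in 𝓝 0, ContinuousAt ψ x :=
    (hψ.eventually (by simp)).mono fun _ hx => hx.continuousAt
  have hmean := (hasAffineApproxWithinAt_angleKernel hb hα hψ hψ0 hψ1 hψ2)
    |>.integral_mul_cos_sq_isBigO (eventually_measurable_angleKernel hcont)
  refine (hmean.const_mul_left 2).congr_left fun U => ?_
  simp only [add_apply, smul_apply, ContinuousLinearMap.coe_fst', ContinuousLinearMap.coe_snd',
    smul_eq_mul]
  field_simp
  ring

theorem two_mul_integral_angleKernel_isBigO_image (hb : 0 < b) (hα : 0 < α)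
    (hψ : ContDiffAt ℝ 3 ψ 0) (hψ0 : ψ 0 = b) (hψ1 : deriv ψ 0 = -α)
    (hψ2 : deriv (deriv ψ) 0 = 2 * β) :
    (fun U => 2 * (∫ θ in 0..π / 2, angleKernel ψ (U * cos θ ^ 2) U) -
        (π / √(2 * α * b) +
          (6 * b * β - α ^ 2) * π / (8 * √2 * b ^ ((3 : ℝ) / 2) * α ^ ((5 : ℝ) / 2)) * (b - ψ U)))
      =O[𝓝[>] 0] fun U => (b - ψ U) ^ 2 := by
  have hcoef : (6 * b * β - α ^ 2) * π / (8 * √2 * b ^ ((3 : ℝ) / 2) * α ^ ((5 : ℝ) / 2)) =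
      π * (6 * b * β - α ^ 2) / (8 * α * b * √(2 * α * b)) / α := by
    rw [mul_assoc 8, mul_assoc 8, sqrt_two_mul_rpow_mul_rpow hb hα]
    field_simp
  have hψU := isBigO_sub_affine_image nhdsWithin_le_nhds (hψ.of_le (by norm_num))
    (by simpa [hψ1] using hα.ne')
    (by simpa only [sub_zero] using two_mul_integral_angleKernel_isBigO hb hα hψ hψ0 hψ1 hψ2)
  refine hψU.congr (fun U => ?_) fun U => ?_
  all_goals
    rw [hψ0]
  · rw [hψ1, hcoef]
    ring
  · ring

end PsiJet

theorem phi_expansion_in_nu_general (a b α : ℝ) (hb : 0 < b) (hα : 0 < α) (β : ℝ)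
    (ψ : ℝ → ℝ) (hψ : ContDiffAt ℝ 3 ψ 0)
    (hψ0 : ψ 0 = b) (hψ1 : deriv ψ 0 = -α) (hψ2 : deriv (deriv ψ) 0 = 2 * β)
    (m : ℝ → ℝ) (hm : ∀ r, m r = ψ ((a - r) ^ 2))
    (R : ℝ → ℝ)
    (hRlt : ∀ᶠ ν in 𝓝[<] b, R ν < a)
    (hRm : ∀ᶠ ν in 𝓝[<] b, m (R ν) = ν)
    (hRtend : Tendsto R (𝓝[<] b) (𝓝 a))
    (φ : ℝ → ℝ)
    (hφ : ∀ ν, φ ν = 2 * ∫ r in R ν..a, ν / (m r * √(m r ^ 2 - ν ^ 2))) :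
    (fun ν => φ ν - (π / √(2 * α * b) +
        (6 * b * β - α ^ 2) * π / (8 * √2 * b ^ ((3 : ℝ) / 2) * α ^ ((5 : ℝ) / 2)) * (b - ν)))
      =O[𝓝[<] b] fun ν => (b - ν) ^ 2 := by
  set U : ℝ → ℝ := fun ν => (a - R ν) ^ 2
  have hU : Tendsto U (𝓝[<] b) (𝓝[>] 0) :=
    tendsto_nhdsWithin_iff.2 ⟨by simpa using (hRtend.const_sub a).pow 2,
      hRlt.mono fun ν hν => pow_pos (sub_pos.2 hν) 2⟩
  have hψU : ∀ᶠ ν in 𝓝[<] b, ψ (U ν) = ν := hRm.mono fun ν hν => (hm (R ν)).symm.trans hν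
  have hφU : ∀ᶠ ν in 𝓝[<] b,
      φ ν = 2 * ∫ θ in 0..π / 2, angleKernel ψ (U ν * cos θ ^ 2) (U ν) := by
    filter_upwards [hRlt, hψU] with ν hlt hν
    rw [hφ, ← integral_eq_integral_angleKernel ψ a (sub_pos.2 hlt), sub_sub_cancel, hν]
    simp only [hm]
  have hexp := two_mul_integral_angleKernel_isBigO_image hb hα hψ hψ0 hψ1 hψ2
  refine (hexp.comp_tendsto hU).congr' ?_ ?_
  · filter_upwards [hψU, hφU] with ν hν hφν
    rw [Function.comp_apply, hν, hφν]
  · filter_upwards [hψU] with ν hν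
    rw [Function.comp_apply, hν]

/-- Expansion of the cut-locus angle function `φ(ν)` in powers of `b − ν`:
`φ(ν) = π/√(2αb) + ((6bβ − α²)π/(8√2 b^{3/2} α^{5/2}))(b−ν) + O((b−ν)²)` as `ν → b⁻`. -/
theorem phi_expansion_in_nu
    (a b α : ℝ) (ha : 0 < a) (hb : 0 < b) (hα : 0 < α) (β : ℝ)
    (ψ : ℝ → ℝ) (δ : ℝ) (hδ : 0 < δ) (hψ : ContDiffOn ℝ (⊤ : ℕ∞) ψ (Ioo (-δ) δ))
    (hψ0 : ψ 0 = b) (hψ1 : deriv ψ 0 = -α) (hψ2 : deriv (deriv ψ) 0 = 2 * β)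
    (m : ℝ → ℝ) (hm : ∀ r, m r = ψ ((a - r) ^ 2))
    (R : ℝ → ℝ)
    (hRlt : ∀ᶠ ν in nhdsWithin b (Iio b), R ν < a)
    (hRm : ∀ᶠ ν in nhdsWithin b (Iio b), m (R ν) = ν)
    (hRtend : Tendsto R (nhdsWithin b (Iio b)) (nhds a))
    (φ : ℝ → ℝ)
    (hφ : ∀ ν, φ ν = 2 * ∫ r in R ν..a, ν / (m r * Real.sqrt (m r ^ 2 - ν ^ 2))) :
    (fun ν => φ ν - (π / Real.sqrt (2 * α * b) +
        (6 * b * β - α ^ 2) * π / (8 * Real.sqrt 2 * b ^ ((3:ℝ)/2) * α ^ ((5:ℝ)/2))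
          * (b - ν)))
      =O[nhdsWithin b (Iio b)] (fun ν => (b - ν) ^ 2) :=
  phi_expansion_in_nu_general a b α hb hα β ψ
    (contDiffAt_infty.1 (hψ.contDiffAt (Ioo_mem_nhds (neg_lt_zero.2 hδ) hδ)) 3)
    hψ0 hψ1 hψ2 m hm R hRlt hRm hRtend φ hφ
end

section
/- Let a, b, α > 0 and β ∈ ℝ, let ψ be a smooth real function on a neighborhood of 0 with ψ(0)=b, ψ'(0)=−α, ψ''(0)=2β, and define m(r) := ψ((a−r)²) for r near a; for ν < b close to b let R(ν) be the unique solution near a of m(R)=ν and φ(ν) := 2∫_{R(ν)}^{a} ν/(m(r)√(m(r)²−ν²)) dr. Then, as ν → b⁻ (equivalently R(ν) → a⁻), φ(ν) = π/√(2bα) + ((6bβ − α²)π / (8√2 · (bα)^{3/2}))·(a−R(ν))² + O((a−R(ν))⁴). -/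
open Set Asymptotics Filter Real
open MeasureTheory Topology

/-!
Write `s = a - R(ν)` and substitute `r = a - s cos θ`. With `h = s²` and `x = (s cos θ)²` one has
`m(r)² - ν² = ψ(x)² - ψ(h)²`, which is `h - x = (s sin θ)²` times minus the divided difference of
`ψ²`. The Jacobian `s sin θ` therefore cancels the square-root singularity, and what remains is a
function of `(h, x)` with a first-order Taylor expansion at the origin. As `max h x = s²`, its
remainder is `O(s⁴)` uniformly in `θ`, so the expansion may be integrated over `[0, π/2]`.
-/

section MeanValue

variable {E : Type*} [NormedAddCommGroup E] [NormedSpace ℝ E] {x₀ : ℝ}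

theorem image_sub_isBigO_of_hasDerivAt_isBigO_pow {g g' : ℝ → E} {n : ℕ}
    (hg : ∀ᶠ x in 𝓝 x₀, HasDerivAt g (g' x) x) (hg' : g' =O[𝓝 x₀] fun x => (x - x₀) ^ n) :
    (fun z : ℝ × ℝ => g z.2 - g z.1) =O[𝓝 (x₀, x₀)]
      fun z => ‖z - (x₀, x₀)‖ ^ n * (z.2 - z.1) := by
  obtain ⟨C, hC₀, hC⟩ := hg'.exists_nonneg
  obtain ⟨ρ, hρ, hball⟩ := Metric.eventually_nhds_iff_ball.1 (hg.and hC.bound)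
  refine IsBigO.of_bound C ?_
  filter_upwards [Metric.ball_mem_nhds (x₀, x₀) hρ] with z hz
  rw [mem_ball_iff_norm] at hz
  have hsub : Metric.closedBall x₀ ‖z - (x₀, x₀)‖ ⊆ Metric.ball x₀ ρ :=
    Metric.closedBall_subset_ball hz
  have hbound : ∀ y ∈ Metric.closedBall x₀ ‖z - (x₀, x₀)‖,
      ‖g' y‖ ≤ C * ‖z - (x₀, x₀)‖ ^ n := fun y hy => by
    refine (hball y (hsub hy)).2.trans ?_
    rw [norm_pow]
    gcongr
    exact mem_closedBall_iff_norm.1 hy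
  have hmv := (convex_closedBall x₀ ‖z - (x₀, x₀)‖).norm_image_sub_le_of_norm_hasDerivWithin_le
    (fun y hy => (hball y (hsub hy)).1.hasDerivWithinAt) hbound
    (mem_closedBall_iff_norm.2 (norm_fst_le (z - (x₀, x₀))))
    (mem_closedBall_iff_norm.2 (norm_snd_le (z - (x₀, x₀))))
  simpa only [norm_mul, norm_pow, norm_norm, mul_assoc] using hmv

theorem sub_taylor_one_isBigO_sq {f : ℝ → E} (hf : ContDiffAt ℝ 2 f x₀) :
    (fun x => f x - f x₀ - (x - x₀) • deriv f x₀) =O[𝓝 x₀] fun x => (x - x₀) ^ 2 := by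
  have hderiv : ∀ᶠ x in 𝓝 x₀, HasDerivAt (fun y => f y - (y - x₀) • deriv f x₀)
      (deriv f x - deriv f x₀) x := by
    filter_upwards [hf.eventually (by simp)] with x hx
    simpa using! (hx.differentiableAt (by simp)).hasDerivAt.sub
      (((hasDerivAt_id x).sub_const x₀).smul_const (deriv f x₀))
  have hf' : ContDiffAt ℝ 1 (deriv f) x₀ := hf.derivWithin (by norm_num)
  have hlip : (fun x => deriv f x - deriv f x₀) =O[𝓝 x₀] fun x => (x - x₀) ^ 1 := by
    simpa using (hf'.differentiableAt (by simp)).isBigO_sub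
  have hpair : Tendsto (fun x => (x₀, x)) (𝓝 x₀) (𝓝 (x₀, x₀)) :=
    tendsto_const_nhds.prodMk_nhds tendsto_id
  refine ((image_sub_isBigO_of_hasDerivAt_isBigO_pow hderiv hlip).comp_tendsto hpair).congr_left
    (fun x => by
      simp only [Function.comp_apply, sub_self, zero_smul, sub_zero]
      abel) |>.trans (.of_bound 1 <| .of_forall fun x => ?_)
  simp [sq]

end MeanValue

/-- `f = c + ℓ + O(ε²)` along the filter `l`, where `ε → 0` is the small parameter and the
first-order term `ℓ` is `O(ε)`. Taking `l` on a product space makes the expansion uniform in the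
second variable. -/
structure HasFirstOrderExpansion {X : Type*} (l : Filter X) (ε f : X → ℝ) (c : ℝ) (ℓ : X → ℝ) :
    Prop where
  tendsto_zero : Tendsto ε l (𝓝 0)
  linear_isBigO : ℓ =O[l] ε
  remainder_isBigO : (fun x => f x - (c + ℓ x)) =O[l] fun x => ε x ^ 2

namespace HasFirstOrderExpansion

variable {X : Type*} {l : Filter X} {ε f g ℓ ℓ' : X → ℝ} {c d : ℝ}

theorem of_isBigO (hε : Tendsto ε l (𝓝 0)) (hf : f =O[l] ε) :
    HasFirstOrderExpansion l ε f 0 f :=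
  ⟨hε, hf, by simpa using isBigO_zero _ l⟩

theorem congr_coeff (hf : HasFirstOrderExpansion l ε f c ℓ) (hc : c = d) (hℓ : ∀ x, ℓ x = ℓ' x) :
    HasFirstOrderExpansion l ε f d ℓ' :=
  hc ▸ funext hℓ ▸ hf

theorem sub_const_isBigO (hf : HasFirstOrderExpansion l ε f c ℓ) :
    (fun x => f x - c) =O[l] ε := by
  have hsq : (fun x => ε x ^ 2) =O[l] ε := by
    simpa [sq] using (isBigO_refl ε l).mul (hf.tendsto_zero.isBigO_one ℝ)
  refine ((hf.remainder_isBigO.trans hsq).add hf.linear_isBigO).congr_left fun x => ?_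
  ring

theorem tendsto (hf : HasFirstOrderExpansion l ε f c ℓ) : Tendsto f l (𝓝 c) := by
  simpa using (hf.sub_const_isBigO.trans_tendsto hf.tendsto_zero).add_const c

theorem mul (hf : HasFirstOrderExpansion l ε f c ℓ) (hg : HasFirstOrderExpansion l ε g d ℓ') :
    HasFirstOrderExpansion l ε (fun x => f x * g x) (c * d) (fun x => d * ℓ x + c * ℓ' x) where
  tendsto_zero := hf.tendsto_zero
  linear_isBigO := (hf.linear_isBigO.const_mul_left d).add (hg.linear_isBigO.const_mul_left c)
  remainder_isBigO := by
    have hfg : (fun x => (f x - c) * (g x - d)) =O[l] fun x => ε x ^ 2 := by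
      simpa only [sq] using hf.sub_const_isBigO.mul hg.sub_const_isBigO
    refine ((hfg.add (hf.remainder_isBigO.const_mul_left d)).add
      (hg.remainder_isBigO.const_mul_left c)).congr_left fun x => ?_
    ring

theorem contDiffAt_comp {F : ℝ → ℝ} {F' : ℝ} (hF : ContDiffAt ℝ 2 F c) (hF' : HasDerivAt F F' c)
    (hf : HasFirstOrderExpansion l ε f c ℓ) :
    HasFirstOrderExpansion l ε (fun x => F (f x)) (F c) (fun x => F' * ℓ x) where
  tendsto_zero := hf.tendsto_zero
  linear_isBigO := hf.linear_isBigO.const_mul_left F'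
  remainder_isBigO := by
    have htaylor : (fun x => F (f x) - F c - (f x - c) * F') =O[l] fun x => ε x ^ 2 := by
      have := ((sub_taylor_one_isBigO_sq hF).comp_tendsto hf.tendsto).trans
        (hf.sub_const_isBigO.pow 2)
      simpa only [hF'.deriv, smul_eq_mul] using! this
    refine (htaylor.add (hf.remainder_isBigO.const_mul_left F')).congr_left fun x => ?_
    ring

end HasFirstOrderExpansion

theorem hasFirstOrderExpansion_slope {F : ℝ → ℝ} {x₀ : ℝ} (hF : ContDiffAt ℝ 3 F x₀) :
    HasFirstOrderExpansion (𝓝[(diagonal ℝ)ᶜ] (x₀, x₀)) (fun z => ‖z - (x₀, x₀)‖)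
      (fun z => slope F z.1 z.2) (deriv F x₀)
      (fun z => deriv (deriv F) x₀ / 2 * ((z.1 - x₀) + (z.2 - x₀))) where
  tendsto_zero := (tendsto_norm_sub_self (x₀, x₀)).mono_left nhdsWithin_le_nhds
  linear_isBigO := by
    have hfst : (fun z : ℝ × ℝ => z.1 - x₀) =O[𝓝[(diagonal ℝ)ᶜ] (x₀, x₀)]
        fun z => ‖z - (x₀, x₀)‖ :=
      (isBigO_fst_prod' (f' := fun z : ℝ × ℝ => z - (x₀, x₀))).norm_right
    have hsnd : (fun z : ℝ × ℝ => z.2 - x₀) =O[𝓝[(diagonal ℝ)ᶜ] (x₀, x₀)]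
        fun z => ‖z - (x₀, x₀)‖ :=
      (isBigO_snd_prod' (f' := fun z : ℝ × ℝ => z - (x₀, x₀))).norm_right
    exact (hfst.add hsnd).const_mul_left _
  remainder_isBigO := by
    set p := deriv F x₀
    set q := deriv (deriv F) x₀
    have hderiv : ∀ᶠ x in 𝓝 x₀, HasDerivAt (fun y => F y - p * (y - x₀) - q / 2 * (y - x₀) ^ 2)
        (deriv F x - p - (x - x₀) • q) x := by
      filter_upwards [hF.eventually (by simp)] with x hx
      have hx' := (hx.differentiableAt (by simp)).hasDerivAt
      have hid := (hasDerivAt_id x).sub_const x₀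
      refine ((hx'.sub (hid.const_mul p)).sub ((hid.pow 2).const_mul (q / 2))).congr_deriv ?_
      simp only [mul_one, Nat.cast_ofNat, id_eq, Nat.add_one_sub_one, pow_one, smul_eq_mul]
      ring
    have hF' : ContDiffAt ℝ 2 (deriv F) x₀ := hF.derivWithin (by norm_num)
    have hincr := image_sub_isBigO_of_hasDerivAt_isBigO_pow hderiv (sub_taylor_one_isBigO_sq hF')
    have hdiv := (hincr.mono (nhdsWithin_le_nhds (s := (diagonal ℝ)ᶜ))).mul
      (isBigO_refl (fun z : ℝ × ℝ => (z.2 - z.1)⁻¹) _)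
    refine hdiv.congr' ?_ ?_
    all_goals
      filter_upwards [self_mem_nhdsWithin] with z hz
      have hne : z.2 - z.1 ≠ 0 := sub_ne_zero.2 (Ne.symm hz)
    · rw [slope_def_field]
      field_simp
      ring
    · exact mul_inv_cancel_right₀ hne _

theorem isBigO_intervalIntegral_sub {X E : Type*} [NormedAddCommGroup E] [NormedSpace ℝ E]
    {l : Filter X} {f g : X → ℝ → E} {ε : X → ℝ} {a b : ℝ} (hab : a ≤ b)
    (hf : ∀ᶠ x in l, AEStronglyMeasurable (f x) (volume.restrict (Ioo a b)))
    (hg : ∀ᶠ x in l, IntervalIntegrable (g x) volume a b)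
    (hfg : (fun z : X × ℝ => f z.1 z.2 - g z.1 z.2) =O[l ×ˢ 𝓟 (Ioo a b)] fun z => ε z.1) :
    (fun x => (∫ t in a..b, f x t) - ∫ t in a..b, g x t) =O[l] ε := by
  obtain ⟨C, hC⟩ := hfg.bound
  rw [eventually_prod_principal_iff] at hC
  refine IsBigO.of_bound (C * |b - a|) ?_
  filter_upwards [hf, hg, hC] with x hfx hgx hCx
  have hbound : ∀ᵐ t ∂volume.restrict (Ioc a b), ‖f x t - g x t‖ ≤ C * ‖ε x‖ := by
    rw [← restrict_Ioo_eq_restrict_Ioc]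
    exact ae_restrict_of_forall_mem measurableSet_Ioo hCx
  have hsub : IntervalIntegrable (fun t => f x t - g x t) volume a b := by
    rw [restrict_Ioo_eq_restrict_Ioc] at hfx
    rw [intervalIntegrable_iff_integrableOn_Ioc_of_le hab] at hgx ⊢
    exact (integrable_const _).mono' (hfx.sub hgx.aestronglyMeasurable) hbound
  have hfx' : IntervalIntegrable (f x) volume a b := by simpa using hsub.add hgx
  rw [← intervalIntegral.integral_sub hfx' hgx]
  have hbound' : ∀ᵐ t, t ∈ uIoc a b → ‖f x t - g x t‖ ≤ C * ‖ε x‖ := by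
    rwa [uIoc_of_le hab, ← ae_restrict_iff' measurableSet_Ioc]
  have hnorm := intervalIntegral.norm_integral_le_of_norm_le_const_ae hbound'
  rwa [mul_right_comm] at hnorm

theorem deriv_deriv_sq {ψ : ℝ → ℝ} {x : ℝ} (hψ : ContDiffAt ℝ 2 ψ x) :
    deriv (deriv fun y => ψ y ^ 2) x = 2 * (deriv ψ x ^ 2 + ψ x * deriv (deriv ψ) x) := by
  have hfirst : deriv (fun y => ψ y ^ 2) =ᶠ[𝓝 x] fun y => 2 * (ψ y * deriv ψ y) := by
    filter_upwards [hψ.eventually (by simp)] with y hy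
    simpa [mul_assoc] using deriv_fun_pow (hy.differentiableAt (by simp)) 2
  have hψ' : ContDiffAt ℝ 1 (deriv ψ) x := hψ.derivWithin (by norm_num)
  have hsecond := ((hψ.differentiableAt (by simp)).hasDerivAt.mul
    (hψ'.differentiableAt (by simp)).hasDerivAt).const_mul 2
  rw [hfirst.deriv_eq, sq]
  exact hsecond.deriv

theorem hasDerivAt_inv_sqrt_neg {y : ℝ} (hy : 0 < y) :
    HasDerivAt (fun u => (√(-u))⁻¹) ((√y)⁻¹ / (2 * y)) (-y) := by
  have hpos : 0 < - -y := by rwa [neg_neg]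
  refine ((hasDerivAt_neg (-y)).sqrt hpos.ne' |>.inv (sqrt_pos.2 hpos).ne').congr_deriv ?_
  have := (sqrt_pos.2 hy).ne'
  rw [neg_neg, sq_sqrt hy.le]
  field_simp

/-- The factor of the integrand that stays regular at the turning point. With `h = s²` and
`x = (s cos θ)²`, the substitution `r = a - s cos θ` turns `ν / (m √(m² - ν²)) dr` into
`regularizedIntegrand ψ (h, x) dθ`. On the diagonal `h = x` the value is `0`, because `slope` is. -/
noncomputable def regularizedIntegrand (ψ : ℝ → ℝ) (z : ℝ × ℝ) : ℝ :=
  ψ z.1 * (ψ z.2)⁻¹ * (√(-slope (fun y => ψ y ^ 2) z.1 z.2))⁻¹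

section Expansion

variable {b α β : ℝ} {ψ : ℝ → ℝ}

theorem hasFirstOrderExpansion_inv_sqrt_neg_slope_sq (hbα : 0 < b * α) (hψ : ContDiffAt ℝ 3 ψ 0)
    (hψ0 : ψ 0 = b) (hψ1 : deriv ψ 0 = -α) (hψ2 : deriv (deriv ψ) 0 = 2 * β) :
    HasFirstOrderExpansion (𝓝[(diagonal ℝ)ᶜ] (0 : ℝ × ℝ)) (fun z => ‖z‖)
      (fun z => (√(-slope (fun y => ψ y ^ 2) z.1 z.2))⁻¹) (√(2 * b * α))⁻¹
      (fun z => (√(2 * b * α))⁻¹ * ((α ^ 2 + 2 * b * β) / (4 * b * α) * (z.1 + z.2))) := by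
  have hD : 0 < 2 * b * α := by linarith
  have hfirst : deriv (fun y => ψ y ^ 2) 0 = -(2 * b * α) := by
    rw [deriv_fun_pow (hψ.differentiableAt (by simp)), hψ0, hψ1]
    ring
  have hsecond : deriv (deriv fun y => ψ y ^ 2) 0 = 2 * (α ^ 2 + 2 * b * β) := by
    rw [deriv_deriv_sq (hψ.of_le (by norm_num)), hψ0, hψ1, hψ2]
    ring
  have hsmooth : ContDiffAt ℝ 2 (fun u => (√(-u))⁻¹) (-(2 * b * α)) :=
    (contDiffAt_id.neg.sqrt (by simpa using hD.ne')).inv (by simpa using (sqrt_pos.2 hD).ne')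
  have hslope := hasFirstOrderExpansion_slope (hψ.pow 2)
  simp only [hfirst, hsecond, Prod.mk_zero_zero, sub_zero] at hslope
  refine (hslope.contDiffAt_comp hsmooth (hasDerivAt_inv_sqrt_neg hD)).congr_coeff
    (by rw [neg_neg]) fun z => ?_
  field_simp
  ring

theorem hasFirstOrderExpansion_regularizedIntegrand (hbα : 0 < b * α) (hψ : ContDiffAt ℝ 3 ψ 0)
    (hψ0 : ψ 0 = b) (hψ1 : deriv ψ 0 = -α) (hψ2 : deriv (deriv ψ) 0 = 2 * β) :
    HasFirstOrderExpansion (𝓝[(diagonal ℝ)ᶜ] (0 : ℝ × ℝ)) (fun z => ‖z‖)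
      (regularizedIntegrand ψ) (√(2 * b * α))⁻¹
      (fun z => (√(2 * b * α))⁻¹ *
        ((α ^ 2 + 2 * b * β) / (4 * b * α) * (z.1 + z.2) - α / b * (z.1 - z.2))) := by
  have hb : b ≠ 0 := left_ne_zero_of_mul hbα.ne'
  have hψC2 : ContDiffAt ℝ 2 ψ 0 := hψ.of_le (by norm_num)
  have hψd : HasDerivAt ψ (-α) 0 := hψ1 ▸ (hψ.differentiableAt (by simp)).hasDerivAt
  have hnorm : Tendsto (fun z : ℝ × ℝ => ‖z‖) (𝓝[(diagonal ℝ)ᶜ] 0) (𝓝 0) :=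
    tendsto_norm_zero.mono_left nhdsWithin_le_nhds
  have hnum := (HasFirstOrderExpansion.of_isBigO hnorm isBigO_fst_prod'.norm_right
    ).contDiffAt_comp hψC2 hψd
  have hden := (HasFirstOrderExpansion.of_isBigO hnorm isBigO_snd_prod'.norm_right
    ).contDiffAt_comp (hψC2.inv (hψ0 ▸ hb)) (hψd.inv (hψ0 ▸ hb))
  refine ((hnum.mul hden).mul
    (hasFirstOrderExpansion_inv_sqrt_neg_slope_sq hbα hψ hψ0 hψ1 hψ2)).congr_coeff ?_ fun z => ?_
  all_goals
    simp only [Pi.inv_apply, hψ0]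
    field_simp
  ring

end Expansion

theorem div_mul_sqrt_sq_sub_sq_mul_sqrt_sub (ψ : ℝ → ℝ) {h x : ℝ} (hxh : x < h) :
    ψ h / (ψ x * √(ψ x ^ 2 - ψ h ^ 2)) * √(h - x) = regularizedIntegrand ψ (h, x) := by
  have hpos : 0 < h - x := sub_pos.2 hxh
  have hfactor : ψ x ^ 2 - ψ h ^ 2 = (h - x) * -slope (fun y => ψ y ^ 2) h x := by
    rw [slope_comm, slope_def_field]
    field_simp
    ring
  have hsqrt : √(h - x) ≠ 0 := (sqrt_pos.2 hpos).ne'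
  rw [regularizedIntegrand, hfactor, sqrt_mul hpos.le]
  field_simp

theorem mul_sin_pos {s θ : ℝ} (hs : 0 < s) (hθ : θ ∈ Ioo 0 (π / 2)) : 0 < s * sin θ :=
  mul_pos hs (sin_pos_of_pos_of_lt_pi hθ.1 (by linarith [hθ.2, pi_pos]))

theorem sq_sub_sq_mul_cos (s θ : ℝ) : s ^ 2 - (s * cos θ) ^ 2 = (s * sin θ) ^ 2 := by
  linear_combination -s ^ 2 * sin_sq_add_cos_sq θ

theorem integral_eq_integral_regularizedIntegrand (ψ : ℝ → ℝ) (a : ℝ) {s : ℝ} (hs : 0 < s) :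
    ∫ r in (a - s)..a, ψ (s ^ 2) / (ψ ((a - r) ^ 2) * √(ψ ((a - r) ^ 2) ^ 2 - ψ (s ^ 2) ^ 2)) =
      ∫ θ in 0..π / 2, regularizedIntegrand ψ (s ^ 2, (s * cos θ) ^ 2) := by
  have hderiv : ∀ θ, HasDerivAt (fun θ => a - s * cos θ) (s * sin θ) θ := fun θ => by
    simpa using ((hasDerivAt_cos θ).const_mul s).const_sub a
  have hsubst := intervalIntegral.integral_comp_mul_deriv_of_deriv_nonneg
    (a := 0) (b := π / 2) (f := fun θ => a - s * cos θ)
    (g := fun r => ψ (s ^ 2) / (ψ ((a - r) ^ 2) * √(ψ ((a - r) ^ 2) ^ 2 - ψ (s ^ 2) ^ 2)))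
    (by fun_prop) (fun θ _ => hderiv θ)
    (by simpa only [min_eq_left pi_div_two_pos.le, max_eq_right pi_div_two_pos.le]
      using fun θ hθ => (mul_sin_pos hs hθ).le)
  simp only [cos_zero, cos_pi_div_two, mul_one, mul_zero, sub_zero] at hsubst
  rw [← hsubst]
  refine intervalIntegral.integral_congr_Ioo_of_le pi_div_two_pos.le fun θ hθ => ?_
  have hsin := mul_sin_pos hs hθ
  have hlt : (s * cos θ) ^ 2 < s ^ 2 := sub_pos.1 (sq_sub_sq_mul_cos s θ ▸ pow_pos hsin 2)
  simpa only [sq_sub_sq_mul_cos, sqrt_sq hsin.le, Function.comp_apply, sub_sub_cancel] using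
    div_mul_sqrt_sq_sub_sq_mul_sqrt_sub ψ hlt

theorem norm_sq_prodMk_sq_mul_cos (s θ : ℝ) : ‖(s ^ 2, (s * cos θ) ^ 2)‖ = s ^ 2 := by
  rw [Prod.norm_mk, norm_of_nonneg (sq_nonneg s), norm_of_nonneg (sq_nonneg (s * cos θ)),
    mul_pow, max_eq_left (mul_le_of_le_one_right (sq_nonneg s) (cos_sq_le_one θ))]

theorem tendsto_sq_prodMk_sq_mul_cos :
    Tendsto (fun z : ℝ × ℝ => (z.1 ^ 2, (z.1 * cos z.2) ^ 2)) (𝓝[>] 0 ×ˢ 𝓟 (Ioo 0 (π / 2)))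
      (𝓝[(diagonal ℝ)ᶜ] 0) := by
  refine tendsto_nhdsWithin_iff.2 ⟨?_, ?_⟩
  · rw [tendsto_zero_iff_norm_tendsto_zero]
    simp only [norm_sq_prodMk_sq_mul_cos]
    have hfst : Tendsto Prod.fst (𝓝[>] (0 : ℝ) ×ˢ 𝓟 (Ioo 0 (π / 2))) (𝓝 0) :=
      tendsto_fst.mono_right nhdsWithin_le_nhds
    simpa using hfst.pow 2
  · rw [eventually_prod_principal_iff]
    filter_upwards [self_mem_nhdsWithin] with s hs θ hθ
    rw [mem_compl_iff, mem_diagonal_iff, ← sub_eq_zero, sq_sub_sq_mul_cos]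
    exact (pow_pos (mul_sin_pos hs hθ) 2).ne'

theorem eventually_aestronglyMeasurable_regularizedIntegrand {ψ : ℝ → ℝ}
    (hψ : ∀ᶠ x in 𝓝 0, ContinuousAt ψ x) :
    ∀ᶠ s in 𝓝[>] (0 : ℝ), AEStronglyMeasurable
      (fun θ => regularizedIntegrand ψ (s ^ 2, (s * cos θ) ^ 2))
      (volume.restrict (Ioo 0 (π / 2))) := by
  have hsnd : Tendsto (fun z : ℝ × ℝ => (z.1 * cos z.2) ^ 2) (𝓝[>] 0 ×ˢ 𝓟 (Ioo 0 (π / 2)))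
      (𝓝 0) :=
    (continuous_snd.tendsto (0 : ℝ × ℝ)).comp
      (tendsto_sq_prodMk_sq_mul_cos.mono_right nhdsWithin_le_nhds)
  filter_upwards [eventually_prod_principal_iff.1 (hsnd.eventually hψ)] with s hs
  have hcont : ContinuousOn (fun θ => ψ ((s * cos θ) ^ 2)) (Ioo 0 (π / 2)) := fun θ hθ =>
    ((hs θ hθ).comp (f := fun θ => (s * cos θ) ^ 2) (by fun_prop)).continuousWithinAt
  have hmeas := hcont.aemeasurable (μ := volume) measurableSet_Ioo
  simp only [regularizedIntegrand, slope_def_field]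
  exact ((hmeas.inv.const_mul _).mul
    (((hmeas.pow_const 2).sub_const _).div (by fun_prop)).neg.sqrt.inv).aestronglyMeasurable

theorem integral_const_add_const_mul_cos_sq (A B : ℝ) :
    ∫ θ in 0..π / 2, (A + B * cos θ ^ 2) = A * (π / 2) + B * (π / 4) := by
  rw [intervalIntegral.integral_add (by simp) (Continuous.intervalIntegrable (by fun_prop) _ _),
    intervalIntegral.integral_const_mul, integral_cos_sq]
  simp only [intervalIntegral.integral_const, sub_zero, smul_eq_mul, cos_pi_div_two, sin_pi_div_two,
    mul_one, cos_zero, sin_zero, mul_zero, sub_self, zero_add]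
  ring

section IntegralExpansion

variable {b α β : ℝ} {ψ : ℝ → ℝ}

theorem regularizedIntegrand_sub_isBigO_pow_four (hbα : 0 < b * α) (hψ : ContDiffAt ℝ 3 ψ 0)
    (hψ0 : ψ 0 = b) (hψ1 : deriv ψ 0 = -α) (hψ2 : deriv (deriv ψ) 0 = 2 * β) :
    (fun z : ℝ × ℝ => regularizedIntegrand ψ (z.1 ^ 2, (z.1 * cos z.2) ^ 2) -
        (√(2 * b * α))⁻¹ * (1 + (2 * b * β - 3 * α ^ 2) / (4 * b * α) * z.1 ^ 2 +
          (2 * b * β + 5 * α ^ 2) / (4 * b * α) * z.1 ^ 2 * cos z.2 ^ 2))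
      =O[𝓝[>] 0 ×ˢ 𝓟 (Ioo 0 (π / 2))] fun z => z.1 ^ 4 := by
  have hb : b ≠ 0 := left_ne_zero_of_mul hbα.ne'
  have hα : α ≠ 0 := right_ne_zero_of_mul hbα.ne'
  have hexpand := (hasFirstOrderExpansion_regularizedIntegrand hbα hψ hψ0 hψ1 hψ2
    ).remainder_isBigO.comp_tendsto tendsto_sq_prodMk_sq_mul_cos
  refine hexpand.congr (fun z => ?_) fun z => ?_
  · simp only [Function.comp_apply]
    field_simp
    ring
  · simp only [Function.comp_apply, norm_sq_prodMk_sq_mul_cos]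
    ring

theorem integral_regularizedIntegrand_sub_isBigO_pow_four (hbα : 0 < b * α)
    (hψ : ContDiffAt ℝ 3 ψ 0) (hψ0 : ψ 0 = b) (hψ1 : deriv ψ 0 = -α)
    (hψ2 : deriv (deriv ψ) 0 = 2 * β) :
    (fun s => (∫ θ in 0..π / 2, regularizedIntegrand ψ (s ^ 2, (s * cos θ) ^ 2)) -
        (√(2 * b * α))⁻¹ * (π / 2) * (1 + (6 * b * β - α ^ 2) / (8 * b * α) * s ^ 2))
      =O[𝓝[>] 0] fun s => s ^ 4 := by
  have hb : b ≠ 0 := left_ne_zero_of_mul hbα.ne'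
  have hα : α ≠ 0 := right_ne_zero_of_mul hbα.ne'
  have hcont : ∀ᶠ x in 𝓝 0, ContinuousAt ψ x :=
    (hψ.eventually (by simp)).mono fun x hx => hx.continuousAt
  let approx (s θ : ℝ) : ℝ :=
    (√(2 * b * α))⁻¹ * (1 + (2 * b * β - 3 * α ^ 2) / (4 * b * α) * s ^ 2 +
      (2 * b * β + 5 * α ^ 2) / (4 * b * α) * s ^ 2 * cos θ ^ 2)
  have happrox : ∀ s, IntervalIntegrable (approx s) volume 0 (π / 2) := fun s =>
    Continuous.intervalIntegrable (by fun_prop) _ _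
  refine (isBigO_intervalIntegral_sub pi_div_two_pos.le
    (eventually_aestronglyMeasurable_regularizedIntegrand hcont) (.of_forall happrox)
    (regularizedIntegrand_sub_isBigO_pow_four hbα hψ hψ0 hψ1 hψ2)).congr_left fun s => ?_
  rw [intervalIntegral.integral_const_mul, integral_const_add_const_mul_cos_sq]
  field_simp
  ring

end IntegralExpansion

theorem inv_sqrt_two_mul_div_self {c : ℝ} (hc : 0 < c) :
    (√(2 * c))⁻¹ / c = (√2 * c ^ ((3 : ℝ) / 2))⁻¹ := by
  rw [show (3 : ℝ) / 2 = 1 / 2 + 1 by norm_num, rpow_add_one hc.ne', ← sqrt_eq_rpow,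
    sqrt_mul zero_le_two, ← mul_assoc, mul_inv _ c, div_eq_mul_inv]

theorem phi_expansion_in_R_general
    {a b α β : ℝ} (hbα : 0 < b * α) {ψ : ℝ → ℝ} (hψ : ContDiffAt ℝ 3 ψ 0)
    (hψ0 : ψ 0 = b) (hψ1 : deriv ψ 0 = -α) (hψ2 : deriv (deriv ψ) 0 = 2 * β)
    {m : ℝ → ℝ} (hm : ∀ r, m r = ψ ((a - r) ^ 2)) {R : ℝ → ℝ} {l : Filter ℝ}
    (hRlt : ∀ᶠ ν in l, R ν < a) (hRm : ∀ᶠ ν in l, m (R ν) = ν) (hRtend : Tendsto R l (𝓝 a))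
    {φ : ℝ → ℝ} (hφ : ∀ ν, φ ν = 2 * ∫ r in R ν..a, ν / (m r * √(m r ^ 2 - ν ^ 2))) :
    (fun ν => φ ν - (π / √(2 * b * α) +
        (6 * b * β - α ^ 2) * π / (8 * √2 * (b * α) ^ ((3 : ℝ) / 2)) * (a - R ν) ^ 2))
      =O[l] fun ν => (a - R ν) ^ 4 := by
  have hs : Tendsto (fun ν => a - R ν) l (𝓝[>] 0) := tendsto_nhdsWithin_iff.2
    ⟨by simpa using hRtend.const_sub a, hRlt.mono fun ν => sub_pos.2⟩
  have hexpand := ((integral_regularizedIntegrand_sub_isBigO_pow_four hbα hψ hψ0 hψ1 hψ2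
    ).comp_tendsto hs).const_mul_left 2
  refine hexpand.congr' ?_ .rfl
  filter_upwards [hRlt, hRm] with ν hlt hν
  have hν' : ψ ((a - R ν) ^ 2) = ν := hm (R ν) ▸ hν
  have hφν := integral_eq_integral_regularizedIntegrand ψ a (sub_pos.2 hlt)
  rw [sub_sub_cancel, hν'] at hφν
  simp only [hφ, hm, hφν, Function.comp_apply]
  have hcoeff := inv_sqrt_two_mul_div_self hbα
  rw [← mul_assoc] at hcoeff
  linear_combination (-(6 * b * β - α ^ 2) * π / 8 * (a - R ν) ^ 2) * hcoeff

/-- Expansion of the cut-locus angle function `φ(ν)` in powers of `a − R(ν)`: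
`φ(ν) = π/√(2bα) + ((6bβ − α²)π/(8√2 (bα)^{3/2}))(a−R(ν))² + O((a−R(ν))⁴)` as `ν → b⁻`. -/
theorem phi_expansion_in_R
    (a b α : ℝ) (ha : 0 < a) (hb : 0 < b) (hα : 0 < α) (β : ℝ)
    (ψ : ℝ → ℝ) (δ : ℝ) (hδ : 0 < δ) (hψ : ContDiffOn ℝ (⊤ : ℕ∞) ψ (Ioo (-δ) δ))
    (hψ0 : ψ 0 = b) (hψ1 : deriv ψ 0 = -α) (hψ2 : deriv (deriv ψ) 0 = 2 * β)
    (m : ℝ → ℝ) (hm : ∀ r, m r = ψ ((a - r) ^ 2))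
    (R : ℝ → ℝ)
    (hRlt : ∀ᶠ ν in nhdsWithin b (Iio b), R ν < a)
    (hRm : ∀ᶠ ν in nhdsWithin b (Iio b), m (R ν) = ν)
    (hRtend : Tendsto R (nhdsWithin b (Iio b)) (nhds a))
    (φ : ℝ → ℝ)
    (hφ : ∀ ν, φ ν = 2 * ∫ r in R ν..a, ν / (m r * Real.sqrt (m r ^ 2 - ν ^ 2))) :
    (fun ν => φ ν - (π / Real.sqrt (2 * b * α) +
        (6 * b * β - α ^ 2) * π / (8 * Real.sqrt 2 * (b * α) ^ ((3:ℝ)/2))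
          * (a - R ν) ^ 2))
      =O[nhdsWithin b (Iio b)] (fun ν => (a - R ν) ^ 4) :=
  phi_expansion_in_R_general (mul_pos hb hα)
    ((hψ.contDiffAt (Ioo_mem_nhds (neg_neg_of_pos hδ) hδ)).of_le (WithTop.coe_le_coe.2 le_top))
    hψ0 hψ1 hψ2 hm hRlt hRm hRtend hφ
end

section
/- Let a, b, α > 0 and β ∈ ℝ, let ψ be a smooth real function on a neighborhood of 0 with ψ(0)=b, ψ'(0)=−α, ψ''(0)=2β, and define m(r) := ψ((a−r)²) for r near a; for ν < b close to b let R(ν) be the unique solution near a of m(R)=ν and φ(ν) := 2∫_{R(ν)}^{a} ν/(m(r)√(m(r)²−ν²)) dr. Then lim_{ν→b⁻} φ(ν) = π/√(2αb). -/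
open Set Asymptotics Filter Real

/-!
Substituting `u = a - r` turns `φ(ν)` into `2ν ∫₀ˢ g(u²) / √(F(u²) - F(s²)) du`, where `F = ψ²`,
`g = 1/ψ` and `s = a - R(ν) → 0⁺`. Let `F[x, y]` denote the difference quotient of `F`. Rescaling
`u = s t` and writing `F(s²t²) - F(s²) = -F[s²t², s²] · s² (1 - t²)`, the integral becomes
`∫₀¹ g(s²t²) / √(-F[s²t², s²]) · 1 / √(1 - t²) dt`. Strict differentiability says exactly that
`F[x, y] → F'(0) = -2αb` as `(x, y) → (0, 0)`, so the first factor converges to `(1/b) / √(2αb)`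
uniformly in `t`, while the second is integrable with integral `arcsin 1 = π / 2`.
-/

section

open MeasureTheory
open scoped Topology

theorem tendsto_slope_of_hasStrictDerivAt {𝕜 E : Type*} [NontriviallyNormedField 𝕜]
    [NormedAddCommGroup E] [NormedSpace 𝕜 E] {f : 𝕜 → E} {f' : E} {x : 𝕜}
    (hf : HasStrictDerivAt f f' x) :
    Tendsto (fun p : 𝕜 × 𝕜 ↦ slope f p.1 p.2) (𝓝[(diagonal 𝕜)ᶜ] (x, x)) (𝓝 f') := by
  have remainder : Tendsto
      (fun p : 𝕜 × 𝕜 ↦ (p.1 - p.2)⁻¹ • (f p.1 - f p.2 - (p.1 - p.2) • f'))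
      (𝓝[(diagonal 𝕜)ᶜ] (x, x)) (𝓝 0) := by
    have := hf.hasStrictFDerivAt.isLittleO.tendsto_inv_smul_nhds_zero
    simp only [ContinuousLinearMap.toSpanSingleton_apply] at this
    exact this.mono_left nhdsWithin_le_nhds
  refine tendsto_sub_nhds_zero_iff.1 (remainder.congr' ?_)
  filter_upwards [self_mem_nhdsWithin] with p hp
  have hne : p.1 - p.2 ≠ 0 := sub_ne_zero.2 hp
  rw [smul_sub, inv_smul_smul₀ hne, slope_comm, slope_def_module]

theorem eventually_continuousAt_of_hasStrictDerivAt {𝕜 E : Type*} [NontriviallyNormedField 𝕜]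
    [NormedAddCommGroup E] [NormedSpace 𝕜 E] {f : 𝕜 → E} {f' : E} {x : 𝕜}
    (hf : HasStrictDerivAt f f' x) : ∀ᶠ y in 𝓝 x, ContinuousAt f y := by
  obtain ⟨K, U, hU, hlip⟩ := hf.hasStrictFDerivAt.exists_lipschitzOnWith
  filter_upwards [eventually_mem_nhds_iff.2 hU] with y hy
  exact hlip.continuousOn.continuousAt hy

theorem tendsto_setIntegral_smul_of_tendstoUniformlyOn {ι X E : Type*} [MeasurableSpace X]
    [NormedAddCommGroup E] [NormedSpace ℝ E] {μ : Measure X} {S : Set X} {l : Filter ι}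
    [l.IsCountablyGenerated] {K : ι → X → ℝ} {c : ℝ} {w : X → E} (hS : MeasurableSet S)
    (hmeas : ∀ᶠ i in l, AEStronglyMeasurable (K i) (μ.restrict S))
    (hK : TendstoUniformlyOn K (fun _ ↦ c) l S) (hw : IntegrableOn w S μ) :
    Tendsto (fun i ↦ ∫ x in S, K i x • w x ∂μ) l (𝓝 (c • ∫ x in S, w x ∂μ)) := by
  have hbound : ∀ᶠ i in l, ∀ x ∈ S, ‖K i x‖ < ‖c‖ + 1 := by
    filter_upwards [Metric.tendstoUniformlyOn_iff.1 hK 1 one_pos] with i hi x hx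
    have := norm_le_norm_add_norm_sub c (K i x)
    have := hi x hx
    rw [dist_eq_norm] at this
    linarith
  rw [← integral_smul]
  refine tendsto_integral_filter_of_dominated_convergence (fun x ↦ (‖c‖ + 1) * ‖w x‖)
    (hmeas.mono fun i hi ↦ hi.smul hw.aestronglyMeasurable) ?_ (hw.norm.const_mul _) ?_
  · filter_upwards [hbound] with i hi
    filter_upwards [ae_restrict_mem hS] with x hx
    rw [norm_smul]
    gcongr
    exact (hi x hx).le
  · filter_upwards [ae_restrict_mem hS] with x hx
    exact (hK.tendsto_at hx).smul_const _

theorem intervalIntegrable_one_div_sqrt_one_sub_sq {x y : ℝ} (hx : x ∈ Icc (-1) 1)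
    (hy : y ∈ Icc (-1) 1) : IntervalIntegrable (fun t : ℝ ↦ 1 / √(1 - t ^ 2)) volume x y := by
  have h := Polynomial.Chebyshev.intervalIntegrable_sqrt_one_sub_sq_inv
  simp only [sqrt_inv, inv_eq_one_div (√_)] at h
  exact h.mono_set (uIcc_subset_uIcc (Icc_subset_uIcc hx) (Icc_subset_uIcc hy))

theorem integral_one_div_sqrt_one_sub_sq {x y : ℝ} (hx : x ∈ Icc (-1) 1)
    (hy : y ∈ Icc (-1) 1) : ∫ t in x..y, 1 / √(1 - t ^ 2) = arcsin y - arcsin x :=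
  intervalIntegral.integral_eq_sub_of_hasDeriv_right continuous_arcsin.continuousOn
    (fun _ ht ↦ (hasDerivAt_arcsin ((le_min hx.1 hy.1).trans_lt ht.1).ne'
      (ht.2.trans_le (max_le hx.2 hy.2)).ne).hasDerivWithinAt)
    (intervalIntegrable_one_div_sqrt_one_sub_sq hx hy)

theorem tendsto_sq_mul_sq_prodMk_sq :
    Tendsto (fun q : ℝ × ℝ ↦ (q.1 ^ 2 * q.2 ^ 2, q.1 ^ 2)) (𝓝[>] 0 ×ˢ 𝓟 (Ioo 0 1))
      (𝓝[(diagonal ℝ)ᶜ] (0, 0)) := by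
  have hmem : ∀ᶠ q : ℝ × ℝ in 𝓝[>] 0 ×ˢ 𝓟 (Ioo 0 1), 0 < q.1 ∧ q.2 ∈ Ioo 0 1 :=
    prod_mem_prod self_mem_nhdsWithin (mem_principal_self _)
  have hsq : Tendsto (fun q : ℝ × ℝ ↦ q.1 ^ 2) (𝓝[>] 0 ×ˢ 𝓟 (Ioo 0 1)) (𝓝 0) := by
    simpa using
      (tendsto_fst.mono_right (nhdsWithin_le_nhds (a := (0 : ℝ)) (s := Ioi 0))).pow 2
  refine tendsto_nhdsWithin_iff.2 ⟨Tendsto.prodMk_nhds (squeeze_zero' ?_ ?_ hsq) hsq, ?_⟩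
  · exact .of_forall fun q ↦ by positivity
  · filter_upwards [hmem] with q ⟨_, ht₀, ht₁⟩
    exact mul_le_of_le_one_right (sq_nonneg _) (pow_le_one₀ ht₀.le ht₁.le)
  · filter_upwards [hmem] with q ⟨hs, ht₀, ht₁⟩
    exact (mul_lt_of_lt_one_right (by positivity) (pow_lt_one₀ ht₀.le ht₁ two_ne_zero)).ne

theorem eventually_continuousOn_comp_sq_mul_sq {Y : Type*} [TopologicalSpace Y] {f : ℝ → Y}
    (hf : ∀ᶠ x in 𝓝 0, ContinuousAt f x) :
    ∀ᶠ s in 𝓝[>] (0 : ℝ), ContinuousOn (fun t ↦ f (s ^ 2 * t ^ 2)) (Ioo 0 1) := by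
  have hfst := (continuous_fst.tendsto _).comp
    (tendsto_sq_mul_sq_prodMk_sq.mono_right nhdsWithin_le_nhds)
  filter_upwards [eventually_prod_principal_iff.1 (hfst.eventually hf)] with s hs t ht
  exact (ContinuousAt.comp (f := fun t ↦ s ^ 2 * t ^ 2) (hs t ht)
    (by fun_prop)).continuousWithinAt

variable {F g : ℝ → ℝ} {c : ℝ}

theorem tendstoUniformlyOn_div_sqrt_neg_slope (hF : HasStrictDerivAt F (-c) 0) (hc : 0 < c)
    (hg : ContinuousAt g 0) :
    TendstoUniformlyOn (fun s t ↦ g (s ^ 2 * t ^ 2) / √(-slope F (s ^ 2 * t ^ 2) (s ^ 2)))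
      (fun _ ↦ g 0 / √c) (𝓝[>] 0) (Ioo 0 1) := by
  have hlim : Tendsto (fun p : ℝ × ℝ ↦ g p.1 / √(-slope F p.1 p.2))
      (𝓝[(diagonal ℝ)ᶜ] (0, 0)) (𝓝 (g 0 / √c)) := by
    have hfst : Tendsto Prod.fst (𝓝[(diagonal ℝ)ᶜ] ((0 : ℝ), (0 : ℝ))) (𝓝 0) :=
      (continuous_fst.tendsto _).mono_left nhdsWithin_le_nhds
    have hslope := (tendsto_slope_of_hasStrictDerivAt hF).neg
    rw [neg_neg] at hslope
    exact (hg.tendsto.comp hfst).div hslope.sqrt (sqrt_pos.2 hc).ne'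
  exact tendsto_prod_principal_iff.1 (hlim.comp tendsto_sq_mul_sq_prodMk_sq)

theorem eventually_aestronglyMeasurable_div_sqrt_neg_slope
    (hF : ∀ᶠ x in 𝓝 0, ContinuousAt F x) (hg : ∀ᶠ x in 𝓝 0, ContinuousAt g x) :
    ∀ᶠ s in 𝓝[>] (0 : ℝ), AEStronglyMeasurable
      (fun t ↦ g (s ^ 2 * t ^ 2) / √(-slope F (s ^ 2 * t ^ 2) (s ^ 2)))
      (volume.restrict (Ioo 0 1)) := by
  filter_upwards [eventually_continuousOn_comp_sq_mul_sq hF,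
    eventually_continuousOn_comp_sq_mul_sq hg] with s hFs hgs
  have hF_meas := hFs.aemeasurable (μ := volume) measurableSet_Ioo
  have hg_meas := hgs.aemeasurable (μ := volume) measurableSet_Ioo
  simp only [slope_def_field]
  exact (hg_meas.div ((hF_meas.const_sub _).div (by fun_prop)).neg.sqrt).aestronglyMeasurable

theorem mul_div_sqrt_sub_comp_sq {s t : ℝ} (hs : 0 < s) (ht : t ∈ Ioo 0 1) :
    s * (g ((s * t) ^ 2) / √(F ((s * t) ^ 2) - F (s ^ 2))) =
      g (s ^ 2 * t ^ 2) / √(-slope F (s ^ 2 * t ^ 2) (s ^ 2)) * (1 / √(1 - t ^ 2)) := by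
  have hpos : 0 < 1 - t ^ 2 := sub_pos.2 (pow_lt_one₀ ht.1.le ht.2 two_ne_zero)
  have hincr : F (s ^ 2 * t ^ 2) - F (s ^ 2) =
      -slope F (s ^ 2 * t ^ 2) (s ^ 2) * (s ^ 2 * (1 - t ^ 2)) := by
    have := sub_smul_slope F (s ^ 2 * t ^ 2) (s ^ 2)
    rw [smul_eq_mul, vsub_eq_sub] at this
    linear_combination this
  rw [mul_pow, hincr, sqrt_mul' _ (by positivity), sqrt_mul (sq_nonneg s), sqrt_sq hs.le]
  field_simp

theorem integral_div_sqrt_sub_comp_sq {s : ℝ} (hs : 0 < s) :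
    ∫ u in 0..s, g (u ^ 2) / √(F (u ^ 2) - F (s ^ 2)) =
      ∫ t in Ioo (0 : ℝ) 1,
        (g (s ^ 2 * t ^ 2) / √(-slope F (s ^ 2 * t ^ 2) (s ^ 2))) • (1 / √(1 - t ^ 2)) := by
  have hscale := intervalIntegral.mul_integral_comp_mul_left (a := 0) (b := 1)
    (f := fun u ↦ g (u ^ 2) / √(F (u ^ 2) - F (s ^ 2))) s
  rw [mul_zero, mul_one] at hscale
  rw [← hscale, ← intervalIntegral.integral_const_mul,
    intervalIntegral.integral_of_le zero_le_one, integral_Ioc_eq_integral_Ioo]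
  exact setIntegral_congr_fun measurableSet_Ioo fun t ht ↦ mul_div_sqrt_sub_comp_sq hs ht

theorem tendsto_integral_div_sqrt_sub_comp_sq (hF : HasStrictDerivAt F (-c) 0) (hc : 0 < c)
    (hg : ∀ᶠ x in 𝓝 0, ContinuousAt g x) :
    Tendsto (fun s ↦ ∫ u in 0..s, g (u ^ 2) / √(F (u ^ 2) - F (s ^ 2))) (𝓝[>] 0)
      (𝓝 (g 0 / √c * (π / 2))) := by
  have hweight : IntegrableOn (fun t : ℝ ↦ 1 / √(1 - t ^ 2)) (Ioo 0 1) :=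
    (intervalIntegrable_iff_integrableOn_Ioo_of_le zero_le_one).1
      (intervalIntegrable_one_div_sqrt_one_sub_sq (by simp) (by simp))
  have hval : ∫ t in Ioo (0 : ℝ) 1, 1 / √(1 - t ^ 2) = π / 2 := by
    rw [← integral_Ioc_eq_integral_Ioo, ← intervalIntegral.integral_of_le zero_le_one,
      integral_one_div_sqrt_one_sub_sq (by simp) (by simp), arcsin_one, arcsin_zero,
      sub_zero]
  have hlim := tendsto_setIntegral_smul_of_tendstoUniformlyOn measurableSet_Ioo
    (eventually_aestronglyMeasurable_div_sqrt_neg_slope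
      (eventually_continuousAt_of_hasStrictDerivAt hF) hg)
    (tendstoUniformlyOn_div_sqrt_neg_slope hF hc hg.self_of_nhds) hweight
  rw [hval, smul_eq_mul] at hlim
  refine hlim.congr' ?_
  filter_upwards [self_mem_nhdsWithin] with s hs
  exact (integral_div_sqrt_sub_comp_sq hs).symm

theorem integral_div_mul_sqrt_sub_sq (ψ : ℝ → ℝ) (a ρ ν : ℝ) :
    ∫ r in ρ..a, ν / (ψ ((a - r) ^ 2) * √(ψ ((a - r) ^ 2) ^ 2 - ν ^ 2)) =
      ν * ∫ u in 0..(a - ρ), (ψ (u ^ 2))⁻¹ / √(ψ (u ^ 2) ^ 2 - ν ^ 2) := by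
  rw [intervalIntegral.integral_comp_sub_left
    (fun u ↦ ν / (ψ (u ^ 2) * √(ψ (u ^ 2) ^ 2 - ν ^ 2))), sub_self,
    ← intervalIntegral.integral_const_mul]
  simp only [div_eq_mul_inv, mul_inv]

theorem phi_limit_general {a b α : ℝ} (hb : 0 < b) (hα : 0 < α) {ψ : ℝ → ℝ} (hψ0 : ψ 0 = b)
    (hψ : HasStrictDerivAt ψ (-α) 0) {R : ℝ → ℝ} (hRlt : ∀ᶠ ν in 𝓝[<] b, R ν < a)
    (hRψ : ∀ᶠ ν in 𝓝[<] b, ψ ((a - R ν) ^ 2) = ν) (hRtend : Tendsto R (𝓝[<] b) (𝓝 a)) :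
    Tendsto
      (fun ν ↦ 2 * ∫ r in R ν..a, ν / (ψ ((a - r) ^ 2) * √(ψ ((a - r) ^ 2) ^ 2 - ν ^ 2)))
      (𝓝[<] b) (𝓝 (π / √(2 * α * b))) := by
  have hsq : HasStrictDerivAt (fun x ↦ ψ x ^ 2) (-(2 * α * b)) 0 := by
    have hderiv : ((2 : ℕ) : ℝ) * ψ 0 ^ (2 - 1) * -α = -(2 * α * b) := by
      rw [hψ0]
      ring
    exact hderiv ▸ hψ.fun_pow 2
  have hinv : ∀ᶠ x in 𝓝 0, ContinuousAt (fun x ↦ (ψ x)⁻¹) x := by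
    filter_upwards [eventually_continuousAt_of_hasStrictDerivAt hψ,
      hψ.hasDerivAt.continuousAt.eventually_ne (hψ0 ▸ hb.ne')] with x hx hne
    exact hx.inv₀ hne
  have hs : Tendsto (fun ν ↦ a - R ν) (𝓝[<] b) (𝓝[>] 0) :=
    tendsto_nhdsWithin_iff.2
      ⟨by simpa using hRtend.const_sub a, hRlt.mono fun ν hν ↦ sub_pos.2 hν⟩
  have hν : Tendsto (fun ν : ℝ ↦ ν) (𝓝[<] b) (𝓝 b) := tendsto_id.mono_left nhdsWithin_le_nhds
  have hlim := (hν.mul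
    ((tendsto_integral_div_sqrt_sub_comp_sq hsq (by positivity) hinv).comp hs)).const_mul 2
  have hval : 2 * (b * ((ψ 0)⁻¹ / √(2 * α * b) * (π / 2))) = π / √(2 * α * b) := by
    rw [hψ0]
    field_simp
  rw [hval] at hlim
  refine hlim.congr' ?_
  filter_upwards [hRψ] with ν hRν
  rw [integral_div_mul_sqrt_sub_sq, Function.comp_apply, hRν]

end

/-- The limit of the cut-locus angle function: `lim_{ν→b⁻} φ(ν) = π/√(2αb)`. -/
theorem phi_limit
    (a b α : ℝ) (ha : 0 < a) (hb : 0 < b) (hα : 0 < α) (β : ℝ)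
    (ψ : ℝ → ℝ) (δ : ℝ) (hδ : 0 < δ) (hψ : ContDiffOn ℝ (⊤ : ℕ∞) ψ (Ioo (-δ) δ))
    (hψ0 : ψ 0 = b) (hψ1 : deriv ψ 0 = -α) (hψ2 : deriv (deriv ψ) 0 = 2 * β)
    (m : ℝ → ℝ) (hm : ∀ r, m r = ψ ((a - r) ^ 2))
    (R : ℝ → ℝ)
    (hRlt : ∀ᶠ ν in nhdsWithin b (Iio b), R ν < a)
    (hRm : ∀ᶠ ν in nhdsWithin b (Iio b), m (R ν) = ν)
    (hRtend : Tendsto R (nhdsWithin b (Iio b)) (nhds a))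
    (φ : ℝ → ℝ)
    (hφ : ∀ ν, φ ν = 2 * ∫ r in R ν..a, ν / (m r * Real.sqrt (m r ^ 2 - ν ^ 2))) :
    Tendsto φ (nhdsWithin b (Iio b)) (nhds (π / Real.sqrt (2 * α * b))) := by
  have hψ' : HasStrictDerivAt ψ (-α) 0 := hψ1 ▸
    (hψ.contDiffAt (Ioo_mem_nhds (neg_lt_zero.2 hδ) hδ)).hasStrictDerivAt (by simp)
  obtain rfl := funext hm
  obtain rfl := funext hφ
  exact phi_limit_general hb hα hψ0 hψ' hRlt hRm hRtend
end
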